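/- arXiv:0712.0731 — 2 statements merged into one kernel-verified Lean document; each statement's English description precedes it below -/
import Mathlib

section
/- Let (g_n) be a sequence of continuous, uniformly bounded functions on Ω̄ and let (u_n) be a sequence of uniformly bounded viscosity solutions of F(x,Du_n,D²u_n) + b(x)·Du_n|Du_n|^α = g_n(x) in Ω with the Neumann condition ⟨Du_n, n(x)⟩ = 0 on ∂Ω. Then the sequence (u_n) is relatively compact in C(Ω̄) (equipped with the uniform norm). -/
/-!
Compactness follows from the Arzelà–Ascoli theorem once the solutions are uniformly equicontinuous,
which is shown by an Ishii–Lions doubling argument up to the boundary.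

Fix `ε > 0` and let `ρ` be a defining function of `Ω`. On `closure Ω × closure Ω`, maximise
`u x - u y - M √‖x - y‖ - (η x + η y)`, where the corrector `η` has size at most `ε` but gradient
`κ ∇ρ` on the boundary. At a maximum point with `x ≠ y`, the gradient of the modulus has the sign
opposite to the Neumann condition up to an error controlled by the `C²` bound of `ρ`, and the term
`κ ∇ρ` makes this sign strict. Hence the equation, not the boundary condition, is active at both
points, even when they lie on the boundary.

The Hessians at the two points come from the theorem on sums: a sup-convolution of `u x - u y` on
the product has a second-order expansion at points arbitrarily close to the maximum. After adding a
square this is a statement about a convex function, proved as by Jensen and Alexandrov. The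
resolvent `(id + G)⁻¹` of a subgradient selection `G` is Lipschitz, hence differentiable almost
everywhere by Rademacher's theorem, and the contact points with paraboloids of varying slopes cannot
all be sent by `id + G` into the null set where it is not differentiable. Differentiability of the
resolvent yields that of `G`, which integrates to a second-order expansion.

Since `√` is concave, the resulting inequality for the Hessians `X` and `Y` makes the trace of
`Y - X` at least of order `L = M / 2 * ‖x - y‖ ^ (-3 / 2)` and bounds `‖Y‖` by this trace. Uniform
ellipticity then contradicts the equation for large `M`: the errors from the variation of `F` in `x`
and in the gradient are a small multiple of the trace, and the other terms are of order
`L ‖x - y‖`.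
-/

open Filter Set Metric
open scoped RealInnerProductSpace Topology NNReal

noncomputable section

/-- Euclidean space `ℝ^N`. -/
abbrev EN (N : ℕ) := EuclideanSpace ℝ (Fin N)

/-- The space of `N × N` real matrices. -/
abbrev Mat (N : ℕ) := Matrix (Fin N) (Fin N) ℝ

/-- Operator (spectral) norm of a matrix, viewed as a linear map on Euclidean space. -/
noncomputable def matNorm {N : ℕ} (X : Mat N) : ℝ :=
  ‖LinearMap.toContinuousLinearMap (Matrix.toEuclideanLin X)‖

/-- The Hessian matrix of `φ : ℝ^N → ℝ` at `x`. -/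
noncomputable def hess {N : ℕ} (φ : EN N → ℝ) (x : EN N) : Mat N :=
  Matrix.of fun i j =>
    iteratedFDeriv ℝ 2 φ x ![EuclideanSpace.single i 1, EuclideanSpace.single j 1]

/-- `ρ` is a `C²` defining function for the domain `Ω` with exterior unit normal `nv`. -/
def IsC2DefiningFun {N : ℕ} (Ω : Set (EN N)) (nv : EN N → EN N) (ρ : EN N → ℝ) : Prop :=
  ContDiff ℝ 2 ρ ∧ Ω = {x | ρ x < 0} ∧ frontier Ω = {x | ρ x = 0} ∧
    ∀ x ∈ frontier Ω, gradient ρ x ≠ 0 ∧ nv x = ‖gradient ρ x‖⁻¹ • gradient ρ x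

/-- `Ω` is a bounded domain of class `C²` with exterior unit normal `nv` on `∂Ω`. -/
def IsC2Domain {N : ℕ} (Ω : Set (EN N)) (nv : EN N → EN N) : Prop :=
  IsOpen Ω ∧ IsConnected Ω ∧ Bornology.IsBounded Ω ∧ ∃ ρ : EN N → ℝ, IsC2DefiningFun Ω nv ρ

/-- `Ω` is a bounded domain of class `C¹` with exterior unit normal `nv` on `∂Ω`. -/
def IsC1Domain {N : ℕ} (Ω : Set (EN N)) (nv : EN N → EN N) : Prop :=
  IsOpen Ω ∧ IsConnected Ω ∧ Bornology.IsBounded Ω ∧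
    ∃ ρ : EN N → ℝ, ContDiff ℝ 1 ρ ∧ Ω = {x | ρ x < 0} ∧ frontier Ω = {x | ρ x = 0} ∧
      ∀ x ∈ frontier Ω, gradient ρ x ≠ 0 ∧ nv x = ‖gradient ρ x‖⁻¹ • gradient ρ x

/-- Interior sphere condition (Ω1). -/
def InteriorSphereCond {N : ℕ} (Ω : Set (EN N)) : Prop :=
  ∀ x ∈ frontier Ω, ∃ R > (0 : ℝ), ∃ y ∈ Ω, ‖x - y‖ = R ∧ Metric.ball y R ⊆ Ω

/-- (F1): homogeneity of `F`. -/
def CondF1 {N : ℕ} (Ω : Set (EN N)) (α : ℝ) (F : EN N → EN N → Mat N → ℝ) : Prop :=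
  ∀ x ∈ closure Ω, ∀ t : ℝ, t ≠ 0 → ∀ μ : ℝ, 0 ≤ μ → ∀ p : EN N, p ≠ 0 → ∀ X : Mat N,
    X.IsSymm → F x (t • p) (μ • X) = |t| ^ α * μ * F x p X

/-- (F2): uniform ellipticity of `F` with ellipticity constants `0 < a ≤ A`. -/
def CondF2 {N : ℕ} (Ω : Set (EN N)) (α a A : ℝ) (F : EN N → EN N → Mat N → ℝ) : Prop :=
  0 < a ∧ a ≤ A ∧ ∀ x ∈ closure Ω, ∀ p : EN N, p ≠ 0 → ∀ M P : Mat N, M.IsSymm →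
    P.PosSemidef →
      a * ‖p‖ ^ α * P.trace ≤ F x p (M + P) - F x p M ∧
      F x p (M + P) - F x p M ≤ A * ‖p‖ ^ α * P.trace

/-- (F3): Hölder continuity of `F` in the `x` variable. -/
def CondF3 {N : ℕ} (Ω : Set (EN N)) (α C₁ θ : ℝ) (F : EN N → EN N → Mat N → ℝ) : Prop :=
  0 < C₁ ∧ θ ∈ Set.Ioc (1/2 : ℝ) 1 ∧ ∀ x ∈ closure Ω, ∀ y ∈ closure Ω, ∀ p : EN N, p ≠ 0 →
    ∀ X : Mat N, X.IsSymm → |F x p X - F y p X| ≤ C₁ * ‖x - y‖ ^ θ * ‖p‖ ^ α * matNorm X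

/-- (F4): Hölder continuity of `F` in the gradient variable. -/
def CondF4 {N : ℕ} (Ω : Set (EN N)) (α C₂ ν : ℝ) (F : EN N → EN N → Mat N → ℝ) : Prop :=
  0 < C₂ ∧ ν ∈ Set.Ioc (1/2 : ℝ) 1 ∧ ∀ x ∈ closure Ω, ∀ p : EN N, p ≠ 0 → ∀ q : EN N,
    ‖q‖ ≤ ‖p‖ / 2 → ∀ X : Mat N, X.IsSymm →
      |F x (p + q) X - F x p X| ≤ C₂ * ‖p‖ ^ (α - ν) * ‖q‖ ^ ν * matNorm X

/-- The Neumann boundary operator `B(x,r,p) = ⟨p, n(x)⟩`. -/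
def BNeu {N : ℕ} (nv : EN N → EN N) : EN N → ℝ → EN N → ℝ := fun x _ p => ⟪p, nv x⟫

/-- Viscosity subsolution of
`F(x,Du,D²u) + b(x)·Du |Du|^α + c₀(x, u) = g(x)` in `Ω`, `B(x,u,Du) = 0` on `∂Ω`. -/
def IsSubSol {N : ℕ} (Ω : Set (EN N)) (F : EN N → EN N → Mat N → ℝ) (b : EN N → EN N)
    (α : ℝ) (c₀ : EN N → ℝ → ℝ) (g : EN N → ℝ) (B : EN N → ℝ → EN N → ℝ)
    (u : EN N → ℝ) : Prop :=
  (∀ x₀ ∈ Ω, ∀ φ : EN N → ℝ, ContDiff ℝ 2 φ →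
      IsLocalMaxOn (fun x => u x - φ x) (closure Ω) x₀ → gradient φ x₀ ≠ 0 →
      g x₀ ≤ F x₀ (gradient φ x₀) (hess φ x₀)
        + ⟪b x₀, gradient φ x₀⟫ * ‖gradient φ x₀‖ ^ α + c₀ x₀ (u x₀)) ∧
  (∀ x₀ ∈ Ω, ∀ k : ℝ, (∀ᶠ x in nhdsWithin x₀ (closure Ω), u x = k) → g x₀ ≤ c₀ x₀ k) ∧
  (∀ x₀ ∈ frontier Ω, ∀ φ : EN N → ℝ, ContDiff ℝ 2 φ →
      IsLocalMaxOn (fun x => u x - φ x) (closure Ω) x₀ → gradient φ x₀ ≠ 0 →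
      min (g x₀ - (F x₀ (gradient φ x₀) (hess φ x₀)
          + ⟪b x₀, gradient φ x₀⟫ * ‖gradient φ x₀‖ ^ α + c₀ x₀ (u x₀)))
        (B x₀ (u x₀) (gradient φ x₀)) ≤ 0) ∧
  (∀ x₀ ∈ frontier Ω, ∀ k : ℝ, (∀ᶠ x in nhdsWithin x₀ (closure Ω), u x = k) →
      min (g x₀ - c₀ x₀ k) (B x₀ k 0) ≤ 0)

/-- Viscosity supersolution of
`F(x,Dv,D²v) + b(x)·Dv |Dv|^α + c₀(x, v) = g(x)` in `Ω`, `B(x,v,Dv) = 0` on `∂Ω`. -/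
def IsSuperSol {N : ℕ} (Ω : Set (EN N)) (F : EN N → EN N → Mat N → ℝ) (b : EN N → EN N)
    (α : ℝ) (c₀ : EN N → ℝ → ℝ) (g : EN N → ℝ) (B : EN N → ℝ → EN N → ℝ)
    (v : EN N → ℝ) : Prop :=
  (∀ x₀ ∈ Ω, ∀ φ : EN N → ℝ, ContDiff ℝ 2 φ →
      IsLocalMinOn (fun x => v x - φ x) (closure Ω) x₀ → gradient φ x₀ ≠ 0 →
      F x₀ (gradient φ x₀) (hess φ x₀)
        + ⟪b x₀, gradient φ x₀⟫ * ‖gradient φ x₀‖ ^ α + c₀ x₀ (v x₀) ≤ g x₀) ∧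
  (∀ x₀ ∈ Ω, ∀ k : ℝ, (∀ᶠ x in nhdsWithin x₀ (closure Ω), v x = k) → c₀ x₀ k ≤ g x₀) ∧
  (∀ x₀ ∈ frontier Ω, ∀ φ : EN N → ℝ, ContDiff ℝ 2 φ →
      IsLocalMinOn (fun x => v x - φ x) (closure Ω) x₀ → gradient φ x₀ ≠ 0 →
      0 ≤ max (g x₀ - (F x₀ (gradient φ x₀) (hess φ x₀)
          + ⟪b x₀, gradient φ x₀⟫ * ‖gradient φ x₀‖ ^ α + c₀ x₀ (v x₀)))
        (B x₀ (v x₀) (gradient φ x₀))) ∧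
  (∀ x₀ ∈ frontier Ω, ∀ k : ℝ, (∀ᶠ x in nhdsWithin x₀ (closure Ω), v x = k) →
      0 ≤ max (g x₀ - c₀ x₀ k) (B x₀ k 0))

/-- The admissible set for the principal eigenvalue `λ̄`:
all `λ` such that there is a bounded positive supersolution of
`G(x,v,Dv,D²v) + λ v^{α+1} ≤ 0` in `Ω`, `⟨Dv, n⟩ ≥ 0` on `∂Ω`. -/
def lamBarSet {N : ℕ} (Ω : Set (EN N)) (nv : EN N → EN N) (F : EN N → EN N → Mat N → ℝ)
    (b : EN N → EN N) (c : EN N → ℝ) (α : ℝ) : Set ℝ :=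
  {lam | ∃ v : EN N → ℝ, LowerSemicontinuousOn v (closure Ω) ∧
    (∀ x ∈ closure Ω, 0 < v x) ∧ (∃ M, ∀ x ∈ closure Ω, v x ≤ M) ∧
    IsSuperSol Ω F b α (fun x r => (c x + lam) * |r| ^ α * r) (fun _ => 0) (BNeu nv) v}

/-- The admissible set for the principal eigenvalue `λ̲`:
all `λ` such that there is a bounded negative subsolution of
`G(x,u,Du,D²u) + λ |u|^α u ≥ 0` in `Ω`, `⟨Du, n⟩ ≤ 0` on `∂Ω`. -/
def lamLowSet {N : ℕ} (Ω : Set (EN N)) (nv : EN N → EN N) (F : EN N → EN N → Mat N → ℝ)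
    (b : EN N → EN N) (c : EN N → ℝ) (α : ℝ) : Set ℝ :=
  {lam | ∃ u : EN N → ℝ, UpperSemicontinuousOn u (closure Ω) ∧
    (∀ x ∈ closure Ω, u x < 0) ∧ (∃ M, ∀ x ∈ closure Ω, M ≤ u x) ∧
    IsSubSol Ω F b α (fun x r => (c x + lam) * |r| ^ α * r) (fun _ => 0) (BNeu nv) u}

/-! ### Quadratic jets -/

section QuadraticJets

variable {V : Type*} [NormedAddCommGroup V] [InnerProductSpace ℝ V]

/-- The quadratic polynomial with slope `p` and Hessian `X` at the origin, and value `0` there.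
Together with a base point it encodes the jets `(p, X)` of viscosity solution theory. -/
def quadJet (p : V) (X : V →L[ℝ] V) (h : V) : ℝ := ⟪p, h⟫ + ⟪X h, h⟫ / 2

/-- `W` has the second-order expansion with slope `p` and Hessian `A` at `x`. -/
def HasQuadExpansionAt (W : V → ℝ) (p : V) (A : V →L[ℝ] V) (x : V) : Prop :=
  (fun h => W (x + h) - W x - quadJet p A h) =o[𝓝 0] fun h => ‖h‖ ^ 2

@[simp]
lemma quadJet_zero (p : V) (X : V →L[ℝ] V) : quadJet p X 0 = 0 := by simp [quadJet]

@[fun_prop]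
lemma continuous_quadJet (p : V) (X : V →L[ℝ] V) : Continuous (quadJet p X) := by
  unfold quadJet
  fun_prop

lemma quadJet_add_left (p q : V) (X : V →L[ℝ] V) (h : V) :
    quadJet (p + q) X h = quadJet p X h + ⟪q, h⟫ := by
  simp only [quadJet, inner_add_left]
  ring

lemma quadJet_add_right {X : V →L[ℝ] V} (hX : (X : V →ₗ[ℝ] V).IsSymmetric) (p y h : V) :
    quadJet p X (y + h) = quadJet p X y + quadJet (p + X y) X h := by
  have hsymm : ⟪X h, y⟫ = ⟪X y, h⟫ := (hX h y).trans (real_inner_comm _ _)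
  simp only [quadJet, map_add, inner_add_left, inner_add_right, hsymm]
  ring

lemma abs_inner_apply_self_le (X : V →L[ℝ] V) (h : V) : |⟪X h, h⟫| ≤ ‖X‖ * ‖h‖ ^ 2 :=
  calc |⟪X h, h⟫| ≤ ‖X h‖ * ‖h‖ := abs_real_inner_le_norm _ _
    _ ≤ ‖X‖ * ‖h‖ * ‖h‖ := by gcongr; exact X.le_opNorm h
    _ = ‖X‖ * ‖h‖ ^ 2 := by ring

lemma inner_apply_self_le (X : V →L[ℝ] V) (h : V) : ⟪X h, h⟫ ≤ ‖X‖ * ‖h‖ ^ 2 :=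
  (le_abs_self _).trans (abs_inner_apply_self_le X h)

lemma hasFDerivAt_quadJet_zero (p : V) (X : V →L[ℝ] V) :
    HasFDerivAt (quadJet p X) (innerSL ℝ p) 0 := by
  rw [hasFDerivAt_iff_isLittleO_nhds_zero]
  have hquad : (fun h : V => ⟪X h, h⟫ / 2) =O[𝓝 0] fun h => ‖h‖ ^ 2 := by
    refine .of_bound ‖X‖ (.of_forall fun h => ?_)
    rw [Real.norm_eq_abs, abs_div, abs_two, norm_pow, norm_norm]
    exact (half_le_self (abs_nonneg _)).trans (abs_inner_apply_self_le X h)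
  refine (hquad.trans_isLittleO ?_).congr_left fun h => by simp [quadJet]
  exact Asymptotics.isLittleO_norm_pow_id one_lt_two

lemma le_zero_of_homogeneous_of_eventually_le {q : V → ℝ}
    (hq : ∀ (t : ℝ) h, q (t • h) = t ^ 2 * q h)
    (hle : ∀ τ > 0, ∀ᶠ h in 𝓝 (0 : V), q h ≤ τ * ‖h‖ ^ 2) (h : V) : q h ≤ 0 := by
  have hsmul : Tendsto (fun t : ℝ => t • h) (𝓝[>] 0) (𝓝 0) :=
    ((continuous_id.smul continuous_const).tendsto' 0 0 (zero_smul ℝ h)).mono_left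
      nhdsWithin_le_nhds
  have hbound : ∀ τ > 0, q h ≤ τ * ‖h‖ ^ 2 := by
    intro τ hτ
    obtain ⟨t, hqt, ht⟩ := ((hsmul.eventually (hle τ hτ)).and self_mem_nhdsWithin).exists
    rw [hq, norm_smul, mul_pow, Real.norm_eq_abs, sq_abs] at hqt
    have ht2 : 0 < t ^ 2 := pow_pos ht 2
    nlinarith
  have hlim : Tendsto (fun τ : ℝ => τ * ‖h‖ ^ 2) (𝓝[>] 0) (𝓝 0) :=
    ((continuous_id.mul continuous_const).tendsto' 0 0 (by simp)).mono_left nhdsWithin_le_nhds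
  exact ge_of_tendsto hlim (eventually_mem_nhdsWithin.mono hbound)

lemma HasQuadExpansionAt.inner_apply_self_le_of_touch {W : V → ℝ} {p x : V} {A S : V →L[ℝ] V}
    (hA : HasQuadExpansionAt W p A x) (hS : ∀ᶠ h in 𝓝 0, W (x + h) ≤ W x + quadJet p S h) (h : V) :
    ⟪A h, h⟫ ≤ ⟪S h, h⟫ := by
  have hdiff : ⟪A h, h⟫ - ⟪S h, h⟫ ≤ 0 := by
    refine le_zero_of_homogeneous_of_eventually_le (q := fun h => ⟪A h, h⟫ - ⟪S h, h⟫)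
      (fun t h => ?_) (fun τ hτ => ?_) h
    · simp only [map_smul, real_inner_smul_left, inner_smul_right]
      ring
    · filter_upwards [hA.bound (half_pos hτ), hS] with k hk hSk
      rw [norm_pow, norm_norm, Real.norm_eq_abs] at hk
      have hlow := (abs_le.mp hk).1
      simp only [quadJet] at hlow hSk
      linarith
  linarith

end QuadraticJets

/-! ### Subgradient selections -/

section Subgradients

variable {V : Type*} [NormedAddCommGroup V] [InnerProductSpace ℝ V]

/-- `G` selects a subgradient of `F` at every point. The existence of such a `G` encodes the
convexity of `F`. -/
def IsSubgradientSelection (F : V → ℝ) (G : V → V) : Prop :=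
  ∀ x y, F x + ⟪G x, y - x⟫ ≤ F y

namespace IsSubgradientSelection

variable {F : V → ℝ} {G : V → V}

lemma inner_sub_nonneg (hG : IsSubgradientSelection F G) (x y : V) :
    0 ≤ ⟪G x - G y, x - y⟫ := by
  have hx := hG x y
  have hy := hG y x
  rw [← neg_sub x y, inner_neg_right] at hx
  rw [inner_sub_left]
  linarith

lemma antilipschitzWith_add (hG : IsSubgradientSelection F G) :
    AntilipschitzWith 1 fun x => x + G x := by
  refine AntilipschitzWith.of_le_mul_dist fun x y => ?_
  rw [NNReal.coe_one, one_mul, dist_eq_norm, dist_eq_norm]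
  have hmul : ‖x - y‖ * ‖x - y‖ ≤ ‖(x + G x) - (y + G y)‖ * ‖x - y‖ :=
    calc ‖x - y‖ * ‖x - y‖ = ⟪x - y, x - y⟫ := (real_inner_self_eq_norm_mul_norm _).symm
      _ ≤ ⟪x - y, x - y⟫ + ⟪G x - G y, x - y⟫ := by linarith [hG.inner_sub_nonneg x y]
      _ = ⟪(x + G x) - (y + G y), x - y⟫ := by rw [← inner_add_left, add_sub_add_comm]
      _ ≤ ‖(x + G x) - (y + G y)‖ * ‖x - y‖ := real_inner_le_norm _ _
  rcases (norm_nonneg (x - y)).eq_or_lt with hxy | hxy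
  · exact hxy ▸ norm_nonneg _
  · exact le_of_mul_le_mul_right hmul hxy

lemma convexOn (hG : IsSubgradientSelection F G) : ConvexOn ℝ univ F := by
  refine ⟨convex_univ, fun x _ y _ a b ha hb hab => ?_⟩
  set z := a • x + b • y
  have hx := mul_le_mul_of_nonneg_left (hG z x) ha
  have hy := mul_le_mul_of_nonneg_left (hG z y) hb
  have hcancel : a * ⟪G z, x - z⟫ + b * ⟪G z, y - z⟫ = 0 := by
    rw [← inner_smul_right, ← inner_smul_right, ← inner_add_right, smul_sub, smul_sub,
      sub_add_sub_comm, ← add_smul, hab, one_smul, sub_self, inner_zero_right]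
  have hz : a * F z + b * F z = F z := by rw [← add_mul, hab, one_mul]
  simp only [smul_eq_mul]
  linarith

lemma continuous [FiniteDimensional ℝ V] (hG : IsSubgradientSelection F G) : Continuous F :=
  continuousOn_univ.mp (hG.convexOn.continuousOn isOpen_univ)

lemma eq_slope_of_touch (hG : IsSubgradientSelection F G) {x l : V} {S : V →L[ℝ] V}
    (hup : ∀ᶠ h in 𝓝 0, F (x + h) ≤ F x + quadJet l S h) : G x = l := by
  have hmin : IsLocalMin (quadJet (l - G x) S) 0 := by
    filter_upwards [hup] with h hh
    have hlow := hG x (x + h)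
    rw [add_sub_cancel_left] at hlow
    rw [quadJet_zero, sub_eq_add_neg, quadJet_add_left, inner_neg_left]
    linarith
  have hzero := hmin.hasFDerivAt_eq_zero (hasFDerivAt_quadJet_zero _ S)
  have hinner : ⟪l - G x, l - G x⟫ = 0 := DFunLike.congr_fun hzero _
  exact (sub_eq_zero.mp (inner_self_eq_zero.mp hinner)).symm

lemma isBigO_sub_of_touch (hG : IsSubgradientSelection F G) {x : V} {S : V →L[ℝ] V}
    (hup : ∀ᶠ h in 𝓝 0, F (x + h) ≤ F x + quadJet (G x) S h) :
    (fun h => G (x + h) - G x) =O[𝓝 0] fun h => h := by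
  obtain ⟨r, hr, hball⟩ := Metric.eventually_nhds_iff.mp hup
  refine .of_bound (2 * ‖S‖) (Metric.eventually_nhds_iff.mpr ⟨r / 2, half_pos hr, fun h hh => ?_⟩)
  rw [dist_zero_right] at hh
  set d := G (x + h) - G x
  rcases eq_or_ne d 0 with hd | hd
  · rw [hd, norm_zero]; positivity
  have hd' : 0 < ‖d‖ := norm_pos_iff.mpr hd
  have hh' : 0 < ‖h‖ := norm_pos_iff.mpr fun h0 => hd (by simp [d, h0])
  -- Test the subgradient at `x + h` in the direction `w` of `d`, with step length `‖h‖`.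
  set w := (‖h‖ / ‖d‖) • d
  have hw : ‖w‖ = ‖h‖ := by
    rw [norm_smul, Real.norm_eq_abs, abs_of_pos (by positivity), div_mul_cancel₀ _ hd'.ne']
  have hhw : ‖h + w‖ ≤ 2 * ‖h‖ := by linarith [norm_add_le h w]
  have htouch := hball (y := h + w) (by rw [dist_zero_right]; linarith)
  have hsub := hG (x + h) (x + (h + w))
  have hsub' := hG x (x + h)
  rw [← add_assoc, add_sub_cancel_left] at hsub
  rw [add_sub_cancel_left] at hsub'
  have hdw : ⟪G (x + h), w⟫ - ⟪G x, w⟫ = ‖h‖ * ‖d‖ := by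
    rw [← inner_sub_left, inner_smul_right, real_inner_self_eq_norm_sq, sq, ← mul_assoc,
      div_mul_cancel₀ _ hd'.ne']
  have hquad : ⟪S (h + w), h + w⟫ ≤ ‖S‖ * (2 * ‖h‖) ^ 2 :=
    (inner_apply_self_le S _).trans (by gcongr)
  rw [quadJet, inner_add_right, ← add_assoc] at htouch
  have hmul : ‖h‖ * ‖d‖ ≤ ‖h‖ * (2 * ‖S‖ * ‖h‖) := by nlinarith
  exact le_of_mul_le_mul_left hmul hh'

lemma sub_le_of_inner_le (hG : IsSubgradientSelection F G) (hF : Continuous F) {x h : V} {a c : ℝ}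
    (hle : ∀ t ∈ Icc (0 : ℝ) 1, ⟪G (x + t • h), h⟫ ≤ a + c * t) : F (x + h) - F x ≤ a + c / 2 := by
  have hderiv (t : ℝ) : HasDerivAt (fun t : ℝ => F x + a * t + c * t ^ 2 / 2) (a + c * t) t := by
    refine (((hasDerivAt_id t).const_mul a).const_add (F x)).add
      ((((hasDerivAt_id t).pow 2).const_mul c).div_const 2) |>.congr_deriv ?_
    simp only [id, Nat.cast_ofNat, Nat.add_one_sub_one, pow_one]
    ring
  have hbound : F (x + (1 : ℝ) • h) ≤ F x + a * 1 + c * 1 ^ 2 / 2 := by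
    refine image_le_of_liminf_slope_right_le_deriv_boundary (a := 0) (b := 1)
      (f := fun t : ℝ => F (x + t • h)) (by fun_prop) (by simp) (by fun_prop)
      (fun t _ => (hderiv t).hasDerivWithinAt) (fun t ht r hr => ?_) (right_mem_Icc.mpr zero_le_one)
    have hcont : ContinuousAt (fun z => a + c * z) t := by fun_prop
    have hnear : ∀ᶠ z in 𝓝[>] t, a + c * z < r :=
      (hcont.eventually_lt continuousAt_const hr).filter_mono nhdsWithin_le_nhds
    refine Eventually.frequently ?_
    filter_upwards [hnear, self_mem_nhdsWithin, Ioo_mem_nhdsGT ht.2] with z hzr htz hz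
    have hzt : 0 < z - t := sub_pos.mpr htz
    have hsub := hG (x + z • h) (x + t • h)
    rw [add_sub_add_left_eq_sub, ← sub_smul, inner_smul_right] at hsub
    have hzh := hle z ⟨ht.1.trans hz.1.le, hz.2.le⟩
    rw [slope_def_field, div_lt_iff₀ hzt]
    nlinarith
  rw [one_smul] at hbound
  linarith

lemma le_sub_of_le_inner (hG : IsSubgradientSelection F G) (hF : Continuous F) {x h : V} {a c : ℝ}
    (hle : ∀ t ∈ Icc (0 : ℝ) 1, a + c * t ≤ ⟪G (x + t • h), h⟫) : a + c / 2 ≤ F (x + h) - F x := by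
  have hrev := hG.sub_le_of_inner_le hF (x := x + h) (h := -h) (a := -(a + c)) (c := c) ?_
  · rw [add_neg_cancel_right] at hrev
    linarith
  intro t ht
  have hle' := hle (1 - t) ⟨by linarith [ht.2], by linarith [ht.1]⟩
  rw [show x + h + t • -h = x + (1 - t) • h by rw [sub_smul, one_smul, smul_neg]; abel,
    inner_neg_right]
  linarith

lemma hasQuadExpansionAt (hG : IsSubgradientSelection F G) (hF : Continuous F) {x : V}
    {A : V →L[ℝ] V} (hA : HasFDerivAt G A x) : HasQuadExpansionAt F (G x) A x := by
  rw [hasFDerivAt_iff_isLittleO_nhds_zero] at hA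
  refine Asymptotics.isLittleO_iff.mpr fun τ hτ => ?_
  obtain ⟨r, hr, hball⟩ := Metric.eventually_nhds_iff.mp (hA.bound hτ)
  refine Metric.eventually_nhds_iff.mpr ⟨r, hr, fun h hh => ?_⟩
  rw [dist_zero_right] at hh
  have hslope : ∀ t ∈ Icc (0 : ℝ) 1,
      |⟪G (x + t • h), h⟫ - ⟪G x, h⟫ - t * ⟪A h, h⟫| ≤ τ * t * ‖h‖ ^ 2 := by
    intro t ht
    have hth : ‖t • h‖ = t * ‖h‖ := by rw [norm_smul, Real.norm_eq_abs, abs_of_nonneg ht.1]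
    have hAt := hball (y := t • h)
      (by rw [dist_zero_right, hth]; nlinarith [norm_nonneg h, ht.2])
    calc |⟪G (x + t • h), h⟫ - ⟪G x, h⟫ - t * ⟪A h, h⟫|
        = |⟪G (x + t • h) - G x - A (t • h), h⟫| := by
          rw [inner_sub_left, inner_sub_left, map_smul, real_inner_smul_left]
      _ ≤ ‖G (x + t • h) - G x - A (t • h)‖ * ‖h‖ := abs_real_inner_le_norm _ _
      _ ≤ τ * (t * ‖h‖) * ‖h‖ := by rw [← hth]; gcongr
      _ = τ * t * ‖h‖ ^ 2 := by ring
  have hup := hG.sub_le_of_inner_le hF (x := x) (h := h) (a := ⟪G x, h⟫)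
    (c := ⟪A h, h⟫ + τ * ‖h‖ ^ 2) fun t ht => by linarith [(abs_le.mp (hslope t ht)).2]
  have hlow := hG.le_sub_of_le_inner hF (x := x) (h := h) (a := ⟪G x, h⟫)
    (c := ⟪A h, h⟫ - τ * ‖h‖ ^ 2) fun t ht => by linarith [(abs_le.mp (hslope t ht)).1]
  have hnonneg : 0 ≤ τ * ‖h‖ ^ 2 := by positivity
  rw [Real.norm_eq_abs, norm_pow, norm_norm, abs_le, quadJet]
  constructor <;> linarith [hnonneg]

lemma exists_resolvent [FiniteDimensional ℝ V] (hG : IsSubgradientSelection F G) :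
    ∃ (K : ℝ≥0) (J : V → V), LipschitzWith K J ∧ ∀ y, J (y + G y) = y := by
  set T : V → V := fun x => x + G x
  have hinv : Function.LeftInverse (Function.invFun T) T :=
    Function.leftInverse_invFun hG.antilipschitzWith_add.injective
  have hright : RightInvOn (Function.invFun T) T (range T) := by
    rintro _ ⟨x, rfl⟩
    rw [hinv x]
  have hlip : LipschitzOnWith 1 (Function.invFun T) (range T) :=
    lipschitzOnWith_iff_restrict.mpr (hG.antilipschitzWith_add.to_rightInvOn hright)
  obtain ⟨J, hJ, hJT⟩ := hlip.extend_finite_dimension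
  exact ⟨_, J, hJ, fun y => (hJT (mem_range_self y)).symm.trans (hinv y)⟩

end IsSubgradientSelection

-- Differentiating `J (x + h + G (x + h)) = x + h` forces `D` to be surjective, hence invertible,
-- and then `G` has derivative `D⁻¹ - 1` at `x`.
lemma exists_hasFDerivAt_of_resolvent [FiniteDimensional ℝ V] {G J : V → V} {x : V}
    {D : V →L[ℝ] V} (hJ : ∀ y, J (y + G y) = y) (hD : HasFDerivAt J D (x + G x))
    (hlip : (fun h => G (x + h) - G x) =O[𝓝 0] fun h => h) :
    ∃ A : V →L[ℝ] V, HasFDerivAt G A x := by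
  set k : V → V := fun h => h + (G (x + h) - G x)
  have hk : k =O[𝓝 0] fun h => h := (Asymptotics.isBigO_refl _ _).add hlip
  have hDk : (fun h => h - D (k h)) =o[𝓝 0] fun h => h := by
    refine (((hasFDerivAt_iff_isLittleO_nhds_zero.mp hD).comp_tendsto
      (hk.trans_tendsto tendsto_id)).congr_left fun h => ?_).trans_isBigO hk
    have hkx : x + G x + k h = (x + h) + G (x + h) := by simp only [k]; abel
    simp only [Function.comp_apply, hkx, hJ, add_sub_cancel_left]
  have hderiv : HasFDerivAt (fun h => D (k h)) (ContinuousLinearMap.id ℝ V) 0 := by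
    rw [hasFDerivAt_iff_isLittleO_nhds_zero]
    exact hDk.neg_left.congr_left fun h => by simp [k]
  have hsurj : LinearMap.range (D : V →ₗ[ℝ] V) = ⊤ := by
    rw [← Submodule.orthogonal_eq_bot_iff, Submodule.eq_bot_iff]
    intro w hw
    have hconst : HasFDerivAt (fun h => ⟪w, D (k h)⟫) (innerSL ℝ w) 0 :=
      (innerSL ℝ w).hasFDerivAt.comp (0 : V) hderiv
    have hzero : (fun h => ⟪w, D (k h)⟫) = fun _ => 0 :=
      funext fun h => Submodule.inner_left_of_mem_orthogonal (LinearMap.mem_range_self _ (k h)) hw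
    rw [hzero] at hconst
    have hinner : ⟪w, w⟫ = 0 :=
      DFunLike.congr_fun (hconst.unique (hasFDerivAt_const (0 : ℝ) (0 : V))) w
    exact inner_self_eq_zero.mp hinner
  let e : V ≃L[ℝ] V :=
    .ofBijective D (LinearMap.ker_eq_bot_iff_range_eq_top.mpr hsurj) hsurj
  refine ⟨(e.symm : V →L[ℝ] V) - ContinuousLinearMap.id ℝ V, ?_⟩
  rw [hasFDerivAt_iff_isLittleO_nhds_zero]
  refine (((e.symm : V →L[ℝ] V).isBigO_comp (fun h => -(h - D (k h))) _).trans_isLittleO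
    hDk.neg_left).congr_left fun h => ?_
  have hek : e.symm (D (k h)) = k h := e.symm_apply_apply (k h)
  simp only [neg_sub, map_sub, ContinuousLinearEquiv.coe_coe, hek, sub_apply,
    ContinuousLinearMap.id_apply, k]
  abel

end Subgradients

/-! ### The Jensen–Alexandrov lemma -/

section JensenAlexandrov

variable {V : Type*} [NormedAddCommGroup V] [InnerProductSpace ℝ V]

/-- `x` is an interior point of the ball of radius `r` around `x₀` at which the paraboloid with
slope `P` and Hessian `S` at `x₀`, suitably lifted, touches `F` from above on the closed ball. -/
def IsContactPoint (F : V → ℝ) (P : V) (S : V →L[ℝ] V) (x₀ : V) (r : ℝ) (x : V) : Prop :=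
  x ∈ ball x₀ r ∧ IsMaxOn (fun y => F y - quadJet P S (y - x₀)) (closedBall x₀ r) x

lemma IsContactPoint.eventually_le {F : V → ℝ} {P x₀ x : V} {S : V →L[ℝ] V} {r : ℝ}
    (hx : IsContactPoint F P S x₀ r x) (hS : (S : V →ₗ[ℝ] V).IsSymmetric) :
    ∀ᶠ h in 𝓝 0, F (x + h) ≤ F x + quadJet (P + S (x - x₀)) S h := by
  have hball : ∀ᶠ h in 𝓝 (0 : V), x + h ∈ ball x₀ r :=
    (continuous_const_add x).tendsto' 0 x (add_zero x) (isOpen_ball.mem_nhds hx.1)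
  filter_upwards [hball] with h hh
  have hmax : F (x + h) - quadJet P S (x + h - x₀) ≤ F x - quadJet P S (x - x₀) :=
    hx.2 (ball_subset_closedBall hh)
  rw [show x + h - x₀ = (x - x₀) + h by abel, quadJet_add_right hS] at hmax
  linarith

variable [FiniteDimensional ℝ V]

lemma exists_isContactPoint {F : V → ℝ} (hF : Continuous F) {P p x₀ : V} {S : V →L[ℝ] V}
    {r m : ℝ} (hr : 0 < r) (hp : ‖p‖ * r < m)
    (hsphere : ∀ y ∈ sphere x₀ r, F y - quadJet P S (y - x₀) ≤ F x₀ - m) :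
    ∃ x, IsContactPoint F (P + p) S x₀ r x := by
  obtain ⟨x, hx, hmax⟩ := (isCompact_closedBall x₀ r).exists_isMaxOn
    (nonempty_closedBall.mpr hr.le) (f := fun y => F y - quadJet (P + p) S (y - x₀))
    (Continuous.continuousOn (by fun_prop))
  refine ⟨x, mem_ball.mpr (lt_of_le_of_ne hx fun hxr => ?_), hmax⟩
  have hcentre : F x₀ - quadJet (P + p) S (x₀ - x₀) ≤ F x - quadJet (P + p) S (x - x₀) :=
    hmax (mem_closedBall_self hr.le)
  rw [sub_self, quadJet_zero, quadJet_add_left] at hcentre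
  have hpx := (abs_le.mp (abs_real_inner_le_norm p (x - x₀))).1
  rw [← dist_eq_norm, hxr] at hpx
  linarith [hsphere x (mem_sphere.mpr hxr)]

-- By Rademacher's theorem the points where `J` is not differentiable form a null set, and a
-- Lipschitz map sends null sets to null sets.
lemma exists_forall_differentiableAt_of_lipschitzWith {J Θ : V → V} {K K' : ℝ≥0}
    (hJ : LipschitzWith K J) (hΘ : LipschitzWith K' Θ) {U : Set V} (hU : IsOpen U)
    (hne : U.Nonempty) : ∃ p ∈ U, ∀ ξ, Θ ξ = p → DifferentiableAt ℝ J ξ := by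
  let _ : MeasurableSpace V := borel V
  have : BorelSpace V := ⟨rfl⟩
  let μ : MeasureTheory.Measure V := MeasureTheory.Measure.hausdorffMeasure (Module.finrank ℝ V)
  have hnull : μ {ξ | ¬ DifferentiableAt ℝ J ξ} = 0 := hJ.ae_differentiableAt (μ := μ)
  have himage : μ (Θ '' {ξ | ¬ DifferentiableAt ℝ J ξ}) = 0 := by
    refine le_antisymm ((hΘ.hausdorffMeasure_image_le (Nat.cast_nonneg _) _).trans ?_) zero_le
    exact (mul_eq_zero_of_right _ hnull).le
  by_contra! hcon
  have hsubset : U ⊆ Θ '' {ξ | ¬ DifferentiableAt ℝ J ξ} := fun p hp => by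
    obtain ⟨ξ, hξ, hdiff⟩ := hcon p hp
    exact ⟨ξ, hdiff, hξ⟩
  exact (hU.measure_pos μ hne).ne' (MeasureTheory.measure_mono_null hsubset himage)

lemma IsSubgradientSelection.exists_isContactPoint_hasFDerivAt {F : V → ℝ} {G : V → V}
    (hG : IsSubgradientSelection F G) {S : V →L[ℝ] V} (hS : (S : V →ₗ[ℝ] V).IsSymmetric)
    {P x₀ : V} {r η : ℝ} (hη : 0 < η)
    (hcontact : ∀ p ∈ ball (0 : V) η, ∃ x, IsContactPoint F (P + p) S x₀ r x) :
    ∃ p ∈ ball (0 : V) η, ∃ x, IsContactPoint F (P + p) S x₀ r x ∧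
      ∃ A : V →L[ℝ] V, HasFDerivAt G A x := by
  obtain ⟨K, J, hJ, hJG⟩ := hG.exists_resolvent
  -- `Θ` recovers the tilt `p` from the image `x + G x` of a contact point `x`.
  let Θ : V → V := fun ξ => ξ - J ξ - (P + S (J ξ - x₀))
  have hΘ : LipschitzWith _ Θ := (LipschitzWith.id.sub hJ).sub
    ((LipschitzWith.const P).add (S.lipschitz.comp (hJ.sub (LipschitzWith.const x₀))))
  obtain ⟨p, hp, hdiff⟩ := exists_forall_differentiableAt_of_lipschitzWith hJ hΘ isOpen_ball
    (nonempty_ball.mpr hη)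
  obtain ⟨x, hx⟩ := hcontact p hp
  have htouch := hx.eventually_le hS
  have hslope := hG.eq_slope_of_touch htouch
  have hΘx : Θ (x + G x) = p := by simp only [Θ, hJG]; rw [hslope]; abel
  rw [← hslope] at htouch
  exact ⟨p, hp, x, hx, exists_hasFDerivAt_of_resolvent hJG (hdiff _ hΘx).hasFDerivAt
    (hG.isBigO_sub_of_touch htouch)⟩

lemma IsSubgradientSelection.exists_hasQuadExpansionAt {F : V → ℝ} {G : V → V}
    (hG : IsSubgradientSelection F G) {S : V →L[ℝ] V} (hS : (S : V →ₗ[ℝ] V).IsSymmetric)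
    {P x₀ : V} {r m η : ℝ} (hr : 0 < r) (hm : 0 < m) (hη : 0 < η)
    (hsphere : ∀ y ∈ sphere x₀ r, F y - quadJet P S (y - x₀) ≤ F x₀ - m) :
    ∃ x ∈ ball x₀ r, ∃ A : V →L[ℝ] V, ‖G x - (P + S (x - x₀))‖ ≤ η ∧
      F x₀ - η * r ≤ F x - quadJet P S (x - x₀) ∧ (∀ h, ⟪A h, h⟫ ≤ ⟪S h, h⟫) ∧
      HasQuadExpansionAt F (G x) A x := by
  obtain ⟨p, hp, x, hx, A, hA⟩ := hG.exists_isContactPoint_hasFDerivAt hS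
    (lt_min hη (div_pos hm hr)) fun p hp =>
      exists_isContactPoint hG.continuous hr
        ((lt_div_iff₀ hr).mp ((mem_ball_zero_iff.mp hp).trans_le (min_le_right _ _))) hsphere
  have hpη : ‖p‖ ≤ η := (mem_ball_zero_iff.mp hp).le.trans (min_le_left _ _)
  have htouch := hx.eventually_le hS
  have hslope := hG.eq_slope_of_touch htouch
  rw [← hslope] at htouch
  have hexp := hG.hasQuadExpansionAt hG.continuous hA
  refine ⟨x, hx.1, A, ?_, ?_, hexp.inner_apply_self_le_of_touch htouch, hexp⟩
  · rwa [hslope, add_right_comm, add_sub_cancel_left]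
  · have hcentre : F x₀ - quadJet (P + p) S (x₀ - x₀) ≤ F x - quadJet (P + p) S (x - x₀) :=
      hx.2 (mem_closedBall_self hr.le)
    rw [sub_self, quadJet_zero, quadJet_add_left] at hcentre
    have hpx : |⟪p, x - x₀⟫| ≤ η * r :=
      (abs_real_inner_le_norm _ _).trans (mul_le_mul hpη
        ((dist_eq_norm x x₀).symm.trans_le (mem_ball.mp hx.1).le) (norm_nonneg _) hη.le)
    linarith [(abs_le.mp hpx).1]

end JensenAlexandrov

/-! ### Semiconvex functions -/

section Semiconvex

variable {V : Type*} [NormedAddCommGroup V] [InnerProductSpace ℝ V]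

lemma quadJet_add_add (p q : V) (X Y : V →L[ℝ] V) (h : V) :
    quadJet (p + q) (X + Y) h = quadJet p X h + quadJet q Y h := by
  simp only [quadJet, inner_add_left, add_apply]
  ring

lemma quadJet_zero_smul_id (c : ℝ) (h : V) :
    quadJet 0 (c • ContinuousLinearMap.id ℝ V) h = c / 2 * ‖h‖ ^ 2 := by
  simp only [quadJet, inner_zero_left, smul_apply, ContinuousLinearMap.id_apply,
    real_inner_smul_left, real_inner_self_eq_norm_sq]
  ring

lemma norm_add_sq_eq_quadJet (c : ℝ) (x h : V) :
    c / 2 * ‖x + h‖ ^ 2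
      = c / 2 * ‖x‖ ^ 2 + quadJet (c • x) (c • ContinuousLinearMap.id ℝ V) h := by
  rw [norm_add_sq_real]
  simp only [quadJet, smul_apply, ContinuousLinearMap.id_apply, real_inner_smul_left,
    real_inner_self_eq_norm_sq]
  ring

lemma isSymmetric_add_smul_id {S : V →L[ℝ] V} (hS : (S : V →ₗ[ℝ] V).IsSymmetric) (c : ℝ) :
    ((S + c • ContinuousLinearMap.id ℝ V : V →L[ℝ] V) : V →ₗ[ℝ] V).IsSymmetric :=
  hS.add (LinearMap.IsSymmetric.id.smul (conj_trivial c))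

lemma HasQuadExpansionAt.of_add_norm_sq {W : V → ℝ} {c : ℝ} {p x : V} {A : V →L[ℝ] V}
    (h : HasQuadExpansionAt (fun y => W y + c / 2 * ‖y‖ ^ 2) p A x) :
    HasQuadExpansionAt W (p - c • x) (A - c • ContinuousLinearMap.id ℝ V) x := by
  refine h.congr_left fun k => ?_
  have hsplit := quadJet_add_add (p - c • x) (c • x) (A - c • ContinuousLinearMap.id ℝ V)
    (c • ContinuousLinearMap.id ℝ V) k
  rw [sub_add_cancel, sub_add_cancel] at hsplit
  simp only [norm_add_sq_eq_quadJet, hsplit]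
  ring

lemma exists_hasQuadExpansionAt_of_semiconvex [FiniteDimensional ℝ V] {W : V → ℝ} {G : V → V}
    {c : ℝ} (hG : IsSubgradientSelection (fun y => W y + c / 2 * ‖y‖ ^ 2) G) {S : V →L[ℝ] V}
    (hS : (S : V →ₗ[ℝ] V).IsSymmetric) {P x₀ : V} {r m η : ℝ} (hr : 0 < r) (hm : 0 < m)
    (hη : 0 < η) (hsphere : ∀ y ∈ sphere x₀ r, W y - quadJet P S (y - x₀) ≤ W x₀ - m) :
    ∃ x ∈ ball x₀ r, ∃ A : V →L[ℝ] V, ‖G x - c • x - (P + S (x - x₀))‖ ≤ η ∧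
      W x₀ - η * r ≤ W x - quadJet P S (x - x₀) ∧ (∀ h, ⟪A h, h⟫ ≤ ⟪S h, h⟫) ∧
      HasQuadExpansionAt W (G x - c • x) A x := by
  have hconvex (y : V) : W y + c / 2 * ‖y‖ ^ 2
      - quadJet (P + c • x₀) (S + c • ContinuousLinearMap.id ℝ V) (y - x₀)
        = W y - quadJet P S (y - x₀) + c / 2 * ‖x₀‖ ^ 2 := by
    have hnorm := norm_add_sq_eq_quadJet c x₀ (y - x₀)
    rw [add_sub_cancel] at hnorm
    rw [quadJet_add_add, hnorm]
    ring
  obtain ⟨x, hx, A, hslope, hval, hAS, hexp⟩ := hG.exists_hasQuadExpansionAt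
    (isSymmetric_add_smul_id hS c) (P := P + c • x₀) hr hm hη fun y hy => by
      rw [hconvex]
      linarith [hsphere y hy]
  refine ⟨x, hx, A - c • ContinuousLinearMap.id ℝ V, ?_, ?_, fun h => ?_, hexp.of_add_norm_sq⟩
  · convert hslope using 2
    simp only [add_apply, smul_apply, ContinuousLinearMap.id_apply, smul_sub]
    abel
  · rw [hconvex] at hval
    linarith
  · have hAh := hAS h
    simp only [add_apply, sub_apply, inner_add_left, inner_sub_left] at hAh ⊢
    linarith

end Semiconvex

/-! ### Sup-convolutions -/

section SupConvolution

variable {V : Type*} [NormedAddCommGroup V]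

/-- The sup-convolution of `U` over `K`, with penalisation `c / 2 * ‖y - z‖ ^ 2`. -/
def supConv (U : V → ℝ) (K : Set V) (c : ℝ) (y : V) : ℝ :=
  sSup ((fun z => U z - c / 2 * ‖y - z‖ ^ 2) '' K)

/-- `z` is a point of `K` at which the supremum defining `supConv U K c y` is attained. -/
def IsSupConvPoint (U : V → ℝ) (K : Set V) (c : ℝ) (y z : V) : Prop :=
  z ∈ K ∧ IsMaxOn (fun z => U z - c / 2 * ‖y - z‖ ^ 2) K z

variable {U : V → ℝ} {K : Set V} {c : ℝ}

lemma exists_isSupConvPoint (hK : IsCompact K) (hne : K.Nonempty) (hU : ContinuousOn U K) (y : V) :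
    ∃ z, IsSupConvPoint U K c y z :=
  hK.exists_isMaxOn hne (hU.sub (by fun_prop))

namespace IsSupConvPoint

variable {x y z : V}

lemma supConv_eq (hz : IsSupConvPoint U K c y z) : supConv U K c y = U z - c / 2 * ‖y - z‖ ^ 2 :=
  IsGreatest.csSup_eq ⟨mem_image_of_mem _ hz.1, forall_mem_image.mpr fun _ hz' => hz.2 hz'⟩

lemma le_supConv (hz : IsSupConvPoint U K c y z) {z' : V} (hz' : z' ∈ K) :
    U z' - c / 2 * ‖y - z'‖ ^ 2 ≤ supConv U K c y :=
  (hz.2 hz').trans hz.supConv_eq.ge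

lemma sub_le_supConv_sub {h z' : V} (hz : IsSupConvPoint U K c x z)
    (hz' : IsSupConvPoint U K c (x + h) z') (hh : z + h ∈ K) :
    U (z + h) - U z ≤ supConv U K c (x + h) - supConv U K c x := by
  have hle := hz'.le_supConv hh
  rw [add_sub_add_right_eq_sub] at hle
  rw [hz.supConv_eq]
  linarith

end IsSupConvPoint

lemma isSubgradientSelection_supConv [InnerProductSpace ℝ V] {ζ : V → V}
    (hζ : ∀ y, IsSupConvPoint U K c y (ζ y)) :
    IsSubgradientSelection (fun y => supConv U K c y + c / 2 * ‖y‖ ^ 2) fun y => c • ζ y := by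
  intro x y
  have hle := (hζ y).le_supConv (hζ x).1
  simp only [(hζ x).supConv_eq, real_inner_smul_left, inner_sub_right, norm_sub_sq_real,
    real_inner_comm (ζ x)] at hle ⊢
  linarith

lemma eventually_norm_sub_lt_of_isSupConvPoint {M : ℝ} (hM : ∀ z ∈ K, U z ≤ M) (C : ℝ) {s : ℝ}
    (hs : 0 < s) : ∀ᶠ c in atTop, ∀ y z, IsSupConvPoint U K c y z → -C ≤ supConv U K c y →
      ‖y - z‖ < s := by
  have hlim : Tendsto (fun c : ℝ => c / 2 * s ^ 2) atTop atTop :=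
    (tendsto_id.atTop_div_const two_pos).atTop_mul_const (by positivity)
  filter_upwards [eventually_gt_atTop 0, hlim.eventually_gt_atTop (M + C)] with c hc hcs y z hz hC
  rw [hz.supConv_eq] at hC
  have hmul : c / 2 * ‖y - z‖ ^ 2 < c / 2 * s ^ 2 := by linarith [hM z hz.1]
  exact lt_of_pow_lt_pow_left₀ 2 hs.le (lt_of_mul_lt_mul_left hmul (by positivity))

lemma eventually_supConv_le [ProperSpace V] (hK : IsCompact K) (hne : K.Nonempty)
    (hU : ContinuousOn U K) {q : V → ℝ} (hq : Continuous q) {x₀ : V} {r m : ℝ} (hr : 0 < r)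
    (hm : 0 < m) (hle : ∀ z ∈ K, z ∈ closedBall x₀ (2 * r) → U z ≤ q z) :
    ∀ᶠ c in atTop, ∀ y ∈ closedBall x₀ r, supConv U K c y ≤ q y + m := by
  obtain ⟨M, hM⟩ := hK.bddAbove_image hU
  obtain ⟨q₀, hq₀⟩ := (isCompact_closedBall x₀ r).exists_bound_of_continuousOn hq.continuousOn
  obtain ⟨s, hs, hqs⟩ := Metric.uniformContinuousOn_iff.mp
    ((isCompact_closedBall x₀ (2 * r)).uniformContinuousOn_of_continuous hq.continuousOn) m hm
  filter_upwards [eventually_ge_atTop 0, eventually_norm_sub_lt_of_isSupConvPoint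
    (fun z hz => hM (mem_image_of_mem U hz)) q₀ (lt_min hs hr)] with c hc hnear y hy
  obtain ⟨z, hz⟩ := exists_isSupConvPoint (c := c) hK hne hU y
  by_contra! hlt
  have hqy := neg_le_of_abs_le (hq₀ y hy)
  have hyz : dist z y < min s r := by
    rw [dist_comm, dist_eq_norm]
    exact hnear y z hz (by linarith)
  have hy2 : y ∈ closedBall x₀ (2 * r) := closedBall_subset_closedBall (by linarith) hy
  have hz2 : z ∈ closedBall x₀ (2 * r) := by
    rw [mem_closedBall] at hy ⊢
    linarith [dist_triangle z y x₀, hyz.trans_le (min_le_right s r)]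
  have hqz := (abs_lt.mp (hqs z hz2 y hy2 (hyz.trans_le (min_le_left s r)))).2
  have hUz := hle z hz.1 hz2
  have hpen : 0 ≤ c / 2 * ‖y - z‖ ^ 2 := by positivity
  rw [hz.supConv_eq] at hlt
  linarith

end SupConvolution

section Touching

variable {V : Type*} [NormedAddCommGroup V] [InnerProductSpace ℝ V]

/-- Near `z`, the polynomial with value `u z` and jet `(p, X)` at `z` lies above `u` on `K`: this
realises `(p, X)` as a superjet of `u` relative to `K`. -/
def TouchedAboveOn (u : V → ℝ) (K : Set V) (z p : V) (X : V →L[ℝ] V) : Prop :=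
  ∀ᶠ z' in 𝓝[K] z, u z' ≤ u z + quadJet p X (z' - z)

variable [FiniteDimensional ℝ V] {U : V → ℝ} {K : Set V}

lemma eventually_supConv_le_sub_on_sphere (hK : IsCompact K) (hU : ContinuousOn U K)
    {S : V →L[ℝ] V} {P x₀ : V} (hx₀ : x₀ ∈ K) {r τ : ℝ} (hr : 0 < r) (hτ : 0 < τ)
    (hle : ∀ z ∈ K, z ∈ closedBall x₀ (2 * r) → U z ≤ U x₀ + quadJet P S (z - x₀)) :
    ∀ᶠ c in atTop, ∀ y ∈ sphere x₀ r, supConv U K c y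
      - quadJet P (S + τ • ContinuousLinearMap.id ℝ V) (y - x₀)
        ≤ supConv U K c x₀ - τ * r ^ 2 / 4 := by
  filter_upwards [eventually_supConv_le hK ⟨x₀, hx₀⟩ hU
    (q := fun z => U x₀ + quadJet P S (z - x₀)) (by fun_prop) hr
    (m := τ * r ^ 2 / 4) (by positivity) hle] with c hc y hy
  obtain ⟨z, hz⟩ := exists_isSupConvPoint (c := c) hK ⟨x₀, hx₀⟩ hU x₀
  have hcentre := hz.le_supConv hx₀
  rw [sub_self, norm_zero] at hcentre
  have hsplit := quadJet_add_add P 0 S (τ • ContinuousLinearMap.id ℝ V) (y - x₀)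
  rw [add_zero, quadJet_zero_smul_id, ← dist_eq_norm, mem_sphere.mp hy] at hsplit
  linarith [hc y (sphere_subset_closedBall hy)]

lemma exists_supConv_hasQuadExpansionAt (hK : IsCompact K) (hU : ContinuousOn U K) {S : V →L[ℝ] V}
    (hS : (S : V →ₗ[ℝ] V).IsSymmetric) {P x₀ : V} (hx₀ : x₀ ∈ K)
    (htouch : TouchedAboveOn U K x₀ P S) {τ : ℝ} (hτ : 0 < τ) :
    ∃ (c : ℝ) (x z p : V) (A : V →L[ℝ] V), IsSupConvPoint U K c x z ∧ ‖z - x₀‖ < τ ∧ ‖p - P‖ < τ ∧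
      (∀ h, ⟪A h, h⟫ ≤ ⟪S h, h⟫ + τ * ‖h‖ ^ 2) ∧ HasQuadExpansionAt (supConv U K c) p A x := by
  set S' := S + τ • ContinuousLinearMap.id ℝ V
  obtain ⟨r₁, hr₁, hball⟩ := Metric.eventually_nhds_iff.mp (eventually_nhdsWithin_iff.mp htouch)
  obtain ⟨M, hM⟩ := hK.bddAbove_image hU
  set r := min (r₁ / 3) (τ / (4 * (‖S'‖ + 1)))
  have hr : 0 < r := by positivity
  have hr₁' : 2 * r < r₁ := by linarith [min_le_left (r₁ / 3) (τ / (4 * (‖S'‖ + 1)))]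
  have hrτ : r * (4 * (‖S'‖ + 1)) ≤ τ := (le_div_iff₀ (by positivity)).mp (min_le_right _ _)
  have hSr : 0 ≤ ‖S'‖ * r := by positivity
  obtain ⟨q₀, hq₀⟩ := (isCompact_closedBall x₀ r).exists_bound_of_continuousOn
    (f := fun y => quadJet P S' (y - x₀)) (Continuous.continuousOn (by fun_prop))
  obtain ⟨c, hsphere, hnear⟩ := ((eventually_supConv_le_sub_on_sphere hK hU hx₀ hr hτ
    fun z hz hzr => hball (lt_of_le_of_lt hzr hr₁') hz).and
    (eventually_norm_sub_lt_of_isSupConvPoint (fun z hz => hM (mem_image_of_mem U hz))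
      (τ / 4 * r + q₀ - U x₀) hr)).exists
  choose ζ hζ using exists_isSupConvPoint (c := c) hK ⟨x₀, hx₀⟩ hU
  obtain ⟨x, hx, A, hslope, hval, hA, hexp⟩ := exists_hasQuadExpansionAt_of_semiconvex
    (isSubgradientSelection_supConv hζ) (isSymmetric_add_smul_id hS τ) hr
    (m := τ * r ^ 2 / 4) (by positivity) (η := τ / 4) (by positivity) hsphere
  have hxr : ‖x - x₀‖ ≤ r := (dist_eq_norm x x₀).symm.trans_le (mem_ball.mp hx).le
  refine ⟨c, x, ζ x, _, A, hζ x, ?_, ?_, fun h => ?_, hexp⟩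
  · have hcentre := (hζ x₀).le_supConv hx₀
    rw [sub_self, norm_zero] at hcentre
    have hxζ := hnear x (ζ x) (hζ x)
      (by linarith [neg_le_of_abs_le (hq₀ x (ball_subset_closedBall hx))])
    linarith [norm_sub_le_norm_sub_add_norm_sub (ζ x) x x₀, norm_sub_rev x (ζ x)]
  · have hS'x : ‖S' (x - x₀)‖ ≤ ‖S'‖ * r := (S'.le_opNorm _).trans (by gcongr)
    have hsplit : c • ζ x - c • x - P = (c • ζ x - c • x - (P + S' (x - x₀))) + S' (x - x₀) := by
      abel
    rw [hsplit]
    linarith [norm_add_le (c • ζ x - c • x - (P + S' (x - x₀))) (S' (x - x₀))]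
  · refine (hA h).trans_eq ?_
    simp only [add_apply, smul_apply, ContinuousLinearMap.id_apply, inner_add_left,
      real_inner_smul_left, real_inner_self_eq_norm_sq]

end Touching

/-! ### The theorem on sums -/

section SeparatedSums

variable {E F : Type*} [NormedAddCommGroup E] [NormedAddCommGroup F] {u : E → ℝ} {w : F → ℝ}
  {K : Set E} {L : Set F} {c : ℝ}

/-- The function `(x, y) ↦ u x + w y` on the Euclidean product. -/
def separatedSum (u : E → ℝ) (w : F → ℝ) (x : WithLp 2 (E × F)) : ℝ := u x.fst + w x.snd

lemma IsSupConvPoint.fst {x z : WithLp 2 (E × F)}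
    (hz : IsSupConvPoint (separatedSum u w) (WithLp.ofLp ⁻¹' K ×ˢ L) c x z) :
    IsSupConvPoint u K c x.fst z.fst := by
  refine ⟨hz.1.1, isMaxOn_iff.mpr fun a ha => ?_⟩
  have hle := isMaxOn_iff.mp hz.2 (WithLp.toLp 2 (a, z.snd)) ⟨ha, hz.1.2⟩
  simp only [separatedSum, WithLp.prod_norm_sq_eq_of_L2, WithLp.sub_fst, WithLp.sub_snd,
    WithLp.toLp_fst, WithLp.toLp_snd] at hle
  linarith

lemma IsSupConvPoint.snd {x z : WithLp 2 (E × F)}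
    (hz : IsSupConvPoint (separatedSum u w) (WithLp.ofLp ⁻¹' K ×ˢ L) c x z) :
    IsSupConvPoint w L c x.snd z.snd := by
  refine ⟨hz.1.2, isMaxOn_iff.mpr fun a ha => ?_⟩
  have hle := isMaxOn_iff.mp hz.2 (WithLp.toLp 2 (z.fst, a)) ⟨hz.1.1, ha⟩
  simp only [separatedSum, WithLp.prod_norm_sq_eq_of_L2, WithLp.sub_fst, WithLp.sub_snd,
    WithLp.toLp_fst, WithLp.toLp_snd] at hle
  linarith

lemma isCompact_ofLp_preimage_prod (hK : IsCompact K) (hL : IsCompact L) :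
    IsCompact (WithLp.ofLp ⁻¹' K ×ˢ L : Set (WithLp 2 (E × F))) :=
  (WithLp.homeomorphProd 2 E F).isCompact_preimage.mpr (hK.prod hL)

lemma continuousOn_separatedSum (hu : ContinuousOn u K) (hw : ContinuousOn w L) :
    ContinuousOn (separatedSum u w) (WithLp.ofLp ⁻¹' K ×ˢ L) :=
  (hu.comp (WithLp.continuous_fst 2 E F).continuousOn fun _ hx => hx.1).add
    (hw.comp (WithLp.continuous_snd 2 E F).continuousOn fun _ hx => hx.2)

lemma supConv_separatedSum (hK : IsCompact K) (hKne : K.Nonempty) (hL : IsCompact L)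
    (hLne : L.Nonempty) (hu : ContinuousOn u K) (hw : ContinuousOn w L) (x : WithLp 2 (E × F)) :
    supConv (separatedSum u w) (WithLp.ofLp ⁻¹' K ×ˢ L) c x
      = supConv u K c x.fst + supConv w L c x.snd := by
  obtain ⟨a, ha⟩ := hKne
  obtain ⟨b, hb⟩ := hLne
  obtain ⟨z, hz⟩ := exists_isSupConvPoint (c := c) (isCompact_ofLp_preimage_prod hK hL)
    ⟨WithLp.toLp 2 (a, b), ha, hb⟩ (continuousOn_separatedSum hu hw) x
  rw [hz.supConv_eq, hz.fst.supConv_eq, hz.snd.supConv_eq, WithLp.prod_norm_sq_eq_of_L2,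
    separatedSum, WithLp.sub_fst, WithLp.sub_snd]
  ring

end SeparatedSums

section TheoremOnSums

variable {E : Type*} [NormedAddCommGroup E] [InnerProductSpace ℝ E]

lemma exists_isSymmetric_inner_eq {V : Type*} [NormedAddCommGroup V] [InnerProductSpace ℝ V]
    [CompleteSpace E] [CompleteSpace V] (A : V →L[ℝ] V) (ι : E →L[ℝ] V) :
    ∃ X : E →L[ℝ] E, (X : E →ₗ[ℝ] E).IsSymmetric ∧ ∀ h, ⟪X h, h⟫ = ⟪A (ι h), ι h⟫ := by
  refine ⟨(1 / 2 : ℝ) • (ι.adjoint ∘L (A + A.adjoint) ∘L ι), fun x y => ?_, fun h => ?_⟩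
  · simp only [ContinuousLinearMap.coe_coe, smul_apply, ContinuousLinearMap.comp_apply, add_apply,
      real_inner_smul_left, real_inner_smul_right, ContinuousLinearMap.adjoint_inner_left,
      ContinuousLinearMap.adjoint_inner_right, inner_add_left, inner_add_right]
    ring
  · simp only [smul_apply, ContinuousLinearMap.comp_apply, add_apply, real_inner_smul_left,
      ContinuousLinearMap.adjoint_inner_left, inner_add_left, real_inner_comm (A (ι h)) (ι h)]
    ring

lemma HasQuadExpansionAt.comp_continuousLinearMap {V : Type*} [NormedAddCommGroup V]
    [InnerProductSpace ℝ V] {W : V → ℝ} {p x : V} {A : V →L[ℝ] V}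
    (hW : HasQuadExpansionAt W p A x) (ι : E →L[ℝ] V) {w : E → ℝ} {q y : E} {B : E →L[ℝ] E}
    (hw : ∀ h, w (y + h) - w y = W (x + ι h) - W x) (hq : ∀ h, ⟪q, h⟫ = ⟪p, ι h⟫)
    (hB : ∀ h, ⟪B h, h⟫ = ⟪A (ι h), ι h⟫) : HasQuadExpansionAt w q B y := by
  have hι : Tendsto ι (𝓝 0) (𝓝 0) := ι.continuous.tendsto' 0 0 (map_zero ι)
  have hO : (fun h => ‖ι h‖ ^ 2) =O[𝓝 0] fun h => ‖h‖ ^ 2 :=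
    (ι.isBigO_id (𝓝 0)).norm_norm.pow 2
  refine ((hW.comp_tendsto hι).trans_isBigO hO).congr_left fun h => ?_
  simp only [Function.comp_apply, quadJet, hw, hq, hB]

lemma HasQuadExpansionAt.touchedAboveOn {u : E → ℝ} {K : Set E} (hK : IsCompact K)
    (hu : ContinuousOn u K) {c : ℝ} {x z p : E} {A : E →L[ℝ] E} (hz : IsSupConvPoint u K c x z)
    (hA : HasQuadExpansionAt (supConv u K c) p A x) {τ : ℝ} (hτ : 0 < τ) :
    TouchedAboveOn u K z p (A + τ • ContinuousLinearMap.id ℝ E) := by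
  have hshift : Tendsto (fun z' => z' - z) (𝓝 z) (𝓝 0) :=
    (continuous_sub_right z).tendsto' z 0 (sub_self z)
  filter_upwards [nhdsWithin_le_nhds (hshift.eventually (hA.bound (half_pos hτ))),
    self_mem_nhdsWithin] with z' hbound hz'
  obtain ⟨z'', hz''⟩ := exists_isSupConvPoint (c := c) hK ⟨z, hz.1⟩ hu (x + (z' - z))
  have hle := hz.sub_le_supConv_sub hz'' (by rwa [add_sub_cancel])
  rw [add_sub_cancel] at hle
  rw [norm_pow, norm_norm, Real.norm_eq_abs] at hbound
  have hsplit := quadJet_add_add p 0 A (τ • ContinuousLinearMap.id ℝ E) (z' - z)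
  rw [add_zero, quadJet_zero_smul_id] at hsplit
  linarith [(abs_le.mp hbound).2]

variable {F : Type*} [NormedAddCommGroup F] [InnerProductSpace ℝ F] {u : E → ℝ} {w : F → ℝ}

lemma HasQuadExpansionAt.add_inner_le_of_separatedSum {x p : WithLp 2 (E × F)}
    {A : WithLp 2 (E × F) →L[ℝ] WithLp 2 (E × F)} {X : E →L[ℝ] E} {Y : F →L[ℝ] F}
    (hA : HasQuadExpansionAt (separatedSum u w) p A x) (hX : HasQuadExpansionAt u p.fst X x.fst)
    (hY : HasQuadExpansionAt w p.snd Y x.snd) (h : E) (k : F) :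
    ⟪X h, h⟫ + ⟪Y k, k⟫ ≤ ⟪A (WithLp.toLp 2 (h, k)), WithLp.toLp 2 (h, k)⟫ := by
  have hfst : Tendsto (fun v : WithLp 2 (E × F) => v.fst) (𝓝 0) (𝓝 0) :=
    (WithLp.continuous_fst 2 E F).tendsto 0
  have hsnd : Tendsto (fun v : WithLp 2 (E × F) => v.snd) (𝓝 0) (𝓝 0) :=
    (WithLp.continuous_snd 2 E F).tendsto 0
  have hdiff := le_zero_of_homogeneous_of_eventually_le
    (q := fun v : WithLp 2 (E × F) => ⟪X v.fst, v.fst⟫ + ⟪Y v.snd, v.snd⟫ - ⟪A v, v⟫)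
    (fun t v => ?_) (fun τ hτ => ?_) (WithLp.toLp 2 (h, k))
  · simp only [WithLp.toLp_fst, WithLp.toLp_snd] at hdiff
    linarith
  · simp only [WithLp.smul_fst, WithLp.smul_snd, map_smul, real_inner_smul_left, inner_smul_right]
    ring
  · filter_upwards [hA.bound (c := τ / 4) (by positivity),
      hfst.eventually (hX.bound (c := τ / 4) (by positivity)),
      hsnd.eventually (hY.bound (c := τ / 4) (by positivity))] with v hAv hXv hYv
    simp only [norm_pow, Real.norm_eq_abs, abs_norm, quadJet, separatedSum, WithLp.add_fst,
      WithLp.add_snd, WithLp.prod_inner_apply (𝕜 := ℝ) p v, WithLp.ofLp_fst,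
      WithLp.ofLp_snd] at hAv hXv hYv
    rw [WithLp.prod_norm_sq_eq_of_L2] at hAv ⊢
    linarith [(abs_le.mp hAv).2, (abs_le.mp hXv).1, (abs_le.mp hYv).1]

/-- The inclusion `h ↦ (h, 0)` into the Euclidean product. -/
def toLpInl (E F : Type*) [NormedAddCommGroup E] [InnerProductSpace ℝ E] [NormedAddCommGroup F]
    [InnerProductSpace ℝ F] : E →L[ℝ] WithLp 2 (E × F) :=
  (WithLp.prodContinuousLinearEquiv 2 ℝ E F).symm.toContinuousLinearMap ∘L
    ContinuousLinearMap.inl ℝ E F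

/-- The inclusion `k ↦ (0, k)` into the Euclidean product. -/
def toLpInr (E F : Type*) [NormedAddCommGroup E] [InnerProductSpace ℝ E] [NormedAddCommGroup F]
    [InnerProductSpace ℝ F] : F →L[ℝ] WithLp 2 (E × F) :=
  (WithLp.prodContinuousLinearEquiv 2 ℝ E F).symm.toContinuousLinearMap ∘L
    ContinuousLinearMap.inr ℝ E F

lemma HasQuadExpansionAt.exists_separatedSum [CompleteSpace E] [CompleteSpace F]
    {x p : WithLp 2 (E × F)} {A : WithLp 2 (E × F) →L[ℝ] WithLp 2 (E × F)}
    (hA : HasQuadExpansionAt (separatedSum u w) p A x) :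
    ∃ (X : E →L[ℝ] E) (Y : F →L[ℝ] F), (X : E →ₗ[ℝ] E).IsSymmetric ∧ (Y : F →ₗ[ℝ] F).IsSymmetric ∧
      HasQuadExpansionAt u p.fst X x.fst ∧ HasQuadExpansionAt w p.snd Y x.snd := by
  have : CompleteSpace (WithLp 2 (E × F)) := inferInstance
  obtain ⟨X, hXsymm, hX⟩ := exists_isSymmetric_inner_eq A (toLpInl E F)
  obtain ⟨Y, hYsymm, hY⟩ := exists_isSymmetric_inner_eq A (toLpInr E F)
  refine ⟨X, Y, hXsymm, hYsymm,
    hA.comp_continuousLinearMap (toLpInl E F) (fun h => ?_) (fun h => ?_) hX,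
    hA.comp_continuousLinearMap (toLpInr E F) (fun k => ?_) (fun k => ?_) hY⟩
  all_goals simp [separatedSum, toLpInl, toLpInr, WithLp.prod_inner_apply]

variable [FiniteDimensional ℝ E] [FiniteDimensional ℝ F] {K : Set E} {L : Set F}

lemma exists_touchedAboveOn_of_separatedSum (hK : IsCompact K) (hL : IsCompact L)
    (hu : ContinuousOn u K) (hw : ContinuousOn w L) {x₀ P : WithLp 2 (E × F)}
    {S : WithLp 2 (E × F) →L[ℝ] WithLp 2 (E × F)}
    (hS : (S : WithLp 2 (E × F) →ₗ[ℝ] WithLp 2 (E × F)).IsSymmetric)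
    (hx₀ : x₀ ∈ WithLp.ofLp ⁻¹' K ×ˢ L)
    (htouch : TouchedAboveOn (separatedSum u w) (WithLp.ofLp ⁻¹' K ×ˢ L) x₀ P S) {τ : ℝ}
    (hτ : 0 < τ) :
    ∃ z ∈ WithLp.ofLp ⁻¹' K ×ˢ L, ∃ (p : WithLp 2 (E × F)) (X : E →L[ℝ] E) (Y : F →L[ℝ] F),
      ‖z - x₀‖ < τ ∧ ‖p - P‖ < τ ∧
      (X : E →ₗ[ℝ] E).IsSymmetric ∧ (Y : F →ₗ[ℝ] F).IsSymmetric ∧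
      TouchedAboveOn u K z.fst p.fst X ∧ TouchedAboveOn w L z.snd p.snd Y ∧
      ∀ h k, ⟪X h, h⟫ + ⟪Y k, k⟫ ≤ ⟪S (WithLp.toLp 2 (h, k)), WithLp.toLp 2 (h, k)⟫
        + τ * (‖h‖ ^ 2 + ‖k‖ ^ 2) := by
  have : FiniteDimensional ℝ (WithLp 2 (E × F)) :=
    (WithLp.linearEquiv 2 ℝ (E × F)).symm.finiteDimensional
  have := FiniteDimensional.complete ℝ E
  have := FiniteDimensional.complete ℝ F
  obtain ⟨c, x, z, p, A, hz, hzx, hpP, hAS, hexp⟩ := exists_supConv_hasQuadExpansionAt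
    (isCompact_ofLp_preimage_prod hK hL) (continuousOn_separatedSum hu hw) hS hx₀ htouch
    (half_pos hτ)
  rw [show supConv (separatedSum u w) (WithLp.ofLp ⁻¹' K ×ˢ L) c
      = separatedSum (supConv u K c) (supConv w L c) from
    funext (supConv_separatedSum hK ⟨_, hx₀.1⟩ hL ⟨_, hx₀.2⟩ hu hw)] at hexp
  obtain ⟨X, Y, hXsymm, hYsymm, hX, hY⟩ := hexp.exists_separatedSum
  refine ⟨z, hz.1, p, X + (τ / 2) • ContinuousLinearMap.id ℝ E,
    Y + (τ / 2) • ContinuousLinearMap.id ℝ F, by linarith, by linarith,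
    isSymmetric_add_smul_id hXsymm _, isSymmetric_add_smul_id hYsymm _,
    hX.touchedAboveOn hK hu hz.fst (half_pos hτ), hY.touchedAboveOn hL hw hz.snd (half_pos hτ),
    fun h k => ?_⟩
  have hle := (hexp.add_inner_le_of_separatedSum hX hY h k).trans (hAS _)
  rw [WithLp.prod_norm_sq_eq_of_L2, WithLp.toLp_fst, WithLp.toLp_snd] at hle
  simp only [add_apply, smul_apply, ContinuousLinearMap.id_apply, inner_add_left,
    real_inner_smul_left, real_inner_self_eq_norm_sq]
  linarith [mul_nonneg hτ.le (add_nonneg (sq_nonneg ‖h‖) (sq_nonneg ‖k‖))]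

end TheoremOnSums

/-! ### Operators and their matrices -/

section OperatorBounds

variable {V : Type*} [NormedAddCommGroup V] [InnerProductSpace ℝ V]

lemma opNorm_le_of_abs_inner_le {X : V →L[ℝ] V} (hX : (X : V →ₗ[ℝ] V).IsSymmetric) {c : ℝ}
    (hc : 0 ≤ c) (h : ∀ x, |⟪X x, x⟫| ≤ c * ‖x‖ ^ 2) : ‖X‖ ≤ c := by
  rw [ContinuousLinearMap.norm_eq_iSup_rayleighQuotient (T := X) hX]
  refine ciSup_le fun x => ?_
  rw [ContinuousLinearMap.rayleighQuotient, ContinuousLinearMap.reApplyInnerSelf_apply, abs_div,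
    abs_of_nonneg (sq_nonneg ‖x‖)]
  exact div_le_of_le_mul₀ (sq_nonneg _) hc (h x)

lemma inner_apply_self_le_trace_mul [FiniteDimensional ℝ V] {X : V →L[ℝ] V}
    (h0 : ∀ x, 0 ≤ ⟪X x, x⟫) (x : V) :
    ⟪X x, x⟫ ≤ LinearMap.trace ℝ V (X : V →ₗ[ℝ] V) * ‖x‖ ^ 2 := by
  rcases eq_or_ne x 0 with rfl | hx
  · simp
  set e := ‖x‖⁻¹ • x with he
  have hxe : x = ‖x‖ • e := by rw [he, smul_inv_smul₀ (norm_ne_zero_iff.mpr hx)]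
  have ho : Orthonormal ℝ ((↑) : ({e} : Set V) → V) := by
    classical
    rw [orthonormal_subtype_iff_ite]
    rintro v rfl w rfl
    rw [if_pos rfl, real_inner_self_eq_norm_sq, norm_smul, norm_inv, norm_norm,
      inv_mul_cancel₀ (norm_ne_zero_iff.mpr hx), one_pow]
  obtain ⟨s, b, hs, hb⟩ := ho.exists_orthonormalBasis_extension
  have htrace : ⟪X e, e⟫ ≤ LinearMap.trace ℝ V (X : V →ₗ[ℝ] V) :=
    calc ⟪X e, e⟫ = ⟪b ⟨e, hs rfl⟩, X (b ⟨e, hs rfl⟩)⟫ := by rw [hb, real_inner_comm]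
      _ ≤ ∑ i, ⟪b i, X (b i)⟫ :=
        Finset.single_le_sum (f := fun i => ⟪b i, X (b i)⟫)
          (fun i _ => by rw [real_inner_comm]; exact h0 _) (Finset.mem_univ _)
      _ = LinearMap.trace ℝ V (X : V →ₗ[ℝ] V) := (LinearMap.trace_eq_sum_inner _ b).symm
  calc ⟪X x, x⟫ = ⟪X e, e⟫ * ‖x‖ ^ 2 := by
        conv_lhs => rw [hxe, map_smul, real_inner_smul_left, real_inner_smul_right]
        ring
    _ ≤ _ := by gcongr

end OperatorBounds

section Matrices

variable {N : ℕ} {X : EN N →L[ℝ] EN N}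

/-- The matrix of a linear operator on `ℝ^N` in the standard basis. -/
def matOf (X : EN N →L[ℝ] EN N) : Mat N := Matrix.toEuclideanLin.symm (X : EN N →ₗ[ℝ] EN N)

lemma toEuclideanLin_matOf (X : EN N →L[ℝ] EN N) :
    Matrix.toEuclideanLin (matOf X) = (X : EN N →ₗ[ℝ] EN N) :=
  Matrix.toEuclideanLin.apply_symm_apply _

lemma matNorm_matOf (X : EN N →L[ℝ] EN N) : matNorm (matOf X) = ‖X‖ := by
  rw [matNorm, toEuclideanLin_matOf]
  rfl

lemma matOf_add (X Y : EN N →L[ℝ] EN N) : matOf (X + Y) = matOf X + matOf Y := by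
  simp [matOf]

lemma matOf_apply (X : EN N →L[ℝ] EN N) (i j : Fin N) :
    matOf X i j = X (EuclideanSpace.single j 1) i := by
  have h := LinearMap.congr_fun (toEuclideanLin_matOf X) (EuclideanSpace.single j 1)
  rw [ContinuousLinearMap.coe_coe] at h
  simp [← h, Matrix.toLpLin_apply]

lemma matOf_isSymm (hX : (X : EN N →ₗ[ℝ] EN N).IsSymmetric) : (matOf X).IsSymm := by
  ext i j
  have h := hX (EuclideanSpace.single i 1) (EuclideanSpace.single j 1)
  rw [EuclideanSpace.inner_single_left, EuclideanSpace.inner_single_right] at h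
  simpa [matOf_apply] using h

lemma matOf_posSemidef (hX : (X : EN N →ₗ[ℝ] EN N).IsSymmetric) (h0 : ∀ x, 0 ≤ ⟪X x, x⟫) :
    (matOf X).PosSemidef := by
  rw [← Matrix.isPositive_toEuclideanLin_iff, toEuclideanLin_matOf]
  exact ⟨hX, fun x => by simpa using h0 x⟩

lemma trace_matOf (X : EN N →L[ℝ] EN N) :
    (matOf X).trace = LinearMap.trace ℝ (EN N) (X : EN N →ₗ[ℝ] EN N) := by
  rw [LinearMap.trace_eq_sum_inner _ (EuclideanSpace.basisFun (Fin N) ℝ), Matrix.trace]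
  refine Finset.sum_congr rfl fun i _ => ?_
  rw [Matrix.diag_apply, matOf_apply, EuclideanSpace.basisFun_apply,
    EuclideanSpace.inner_single_left]
  simp

lemma trace_matOf_smul_id (c : ℝ) :
    (matOf (c • ContinuousLinearMap.id ℝ (EN N))).trace = c * N := by
  rw [trace_matOf, ContinuousLinearMap.toLinearMap_smul, ContinuousLinearMap.coe_id,
    map_smul, LinearMap.trace_id]
  simp

end Matrices

/-! ### Quadratic test functions -/

section QuadraticTestFunctions

section Derivatives

variable {V : Type*} [NormedAddCommGroup V] [InnerProductSpace ℝ V] {X : V →L[ℝ] V}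

lemma contDiff_quadJet (p : V) (X : V →L[ℝ] V) : ContDiff ℝ 2 (quadJet p X) := by
  unfold quadJet
  exact (contDiff_const.inner ℝ contDiff_id).add ((X.contDiff.inner ℝ contDiff_id).div_const 2)

lemma quadJet_neg_neg (p : V) (X : V →L[ℝ] V) (h : V) :
    quadJet (-p) (-X) h = -quadJet p X h := by
  simp only [quadJet, neg_apply, inner_neg_left]
  ring

lemma hasFDerivAt_quadJet (p : V) (hX : (X : V →ₗ[ℝ] V).IsSymmetric) (y : V) :
    HasFDerivAt (quadJet p X) (innerSL ℝ (p + X y)) y := by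
  have h : HasFDerivAt (fun z => quadJet (p + X y) X (z - y)) (innerSL ℝ (p + X y)) y := by
    rw [hasFDerivAt_comp_sub, sub_self]
    exact hasFDerivAt_quadJet_zero _ _
  refine (h.const_add (quadJet p X y)).congr_of_eventuallyEq (Eventually.of_forall fun z => ?_)
  simp only [← quadJet_add_right hX, add_sub_cancel]

end Derivatives

variable {N : ℕ} {X : EN N →L[ℝ] EN N}

lemma gradient_quadJet_sub (p z : EN N) (X : EN N →L[ℝ] EN N) :
    gradient (fun x => quadJet p X (x - z)) z = p := by
  refine HasGradientAt.gradient ?_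
  rw [hasGradientAt_iff_hasFDerivAt, hasFDerivAt_comp_sub, sub_self]
  exact hasFDerivAt_quadJet_zero p X

lemma hess_quadJet_sub (p z : EN N) (hX : (X : EN N →ₗ[ℝ] EN N).IsSymmetric) :
    hess (fun x => quadJet p X (x - z)) z = matOf X := by
  have h1 : fderiv ℝ (quadJet p X) = fun y => innerSL ℝ (p + X y) :=
    funext fun y => (hasFDerivAt_quadJet p hX y).fderiv
  have h2 : HasFDerivAt (fun y => innerSL ℝ (p + X y))
      ((innerSL ℝ : EN N →L[ℝ] EN N →L[ℝ] ℝ) ∘L X) 0 :=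
    (innerSL ℝ : EN N →L[ℝ] EN N →L[ℝ] ℝ).hasFDerivAt.comp 0 (X.hasFDerivAt.const_add p)
  ext i j
  rw [hess, Matrix.of_apply, iteratedFDeriv_comp_sub, sub_self, iteratedFDeriv_two_apply, h1,
    h2.fderiv, ← (matOf_isSymm hX).apply i j, matOf_apply]
  change ⟪X (EuclideanSpace.single i 1), EuclideanSpace.single j 1⟫ = _
  rw [EuclideanSpace.inner_single_right]
  simp

/-- The operator `F(x, p, X) + ⟨b(x), p⟩ |p|^α` of the equation. -/
def pdeOp (F : EN N → EN N → Mat N → ℝ) (b : EN N → EN N) (α : ℝ) (x p : EN N) (X : Mat N) : ℝ :=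
  F x p X + ⟪b x, p⟫ * ‖p‖ ^ α

variable {Ω : Set (EN N)} {nv : EN N → EN N} {F : EN N → EN N → Mat N → ℝ} {b : EN N → EN N}
  {α : ℝ} {g u : EN N → ℝ} {z p : EN N}

-- At a boundary point the slope violates the Neumann inequality, so the equation must hold there.
lemma IsSubSol.le_of_touchedAboveOn (h : IsSubSol Ω F b α (fun _ _ => 0) g (BNeu nv) u)
    (hz : z ∈ closure Ω) (hp : p ≠ 0) (hX : (X : EN N →ₗ[ℝ] EN N).IsSymmetric)
    (ht : TouchedAboveOn u (closure Ω) z p X) (hn : z ∈ frontier Ω → 0 < ⟪p, nv z⟫) :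
    g z ≤ pdeOp F b α z p (matOf X) := by
  rw [pdeOp]
  have hφ : ContDiff ℝ 2 fun x => quadJet p X (x - z) :=
    (contDiff_quadJet p X).comp (contDiff_id.sub contDiff_const)
  have hmax : IsLocalMaxOn (fun x => u x - quadJet p X (x - z)) (closure Ω) z := by
    filter_upwards [ht] with z' h'
    rw [sub_self, quadJet_zero]
    linarith
  have hg := gradient_quadJet_sub p z X
  have hh := hess_quadJet_sub p z hX
  rw [closure_eq_self_union_frontier] at hz
  rcases hz with hz | hz
  · have hin := h.1 z hz _ hφ hmax (hg.trans_ne hp)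
    rwa [hg, hh, add_zero] at hin
  · have hbd := h.2.2.1 z hz _ hφ hmax (hg.trans_ne hp)
    rw [hg, hh, add_zero] at hbd
    rcases min_le_iff.mp hbd with h1 | h1
    · linarith
    · exact absurd h1 (not_le.mpr (hn hz))

lemma IsSuperSol.le_of_touchedAboveOn_neg
    (h : IsSuperSol Ω F b α (fun _ _ => 0) g (BNeu nv) u)
    (hz : z ∈ closure Ω) (hp : p ≠ 0) (hX : (X : EN N →ₗ[ℝ] EN N).IsSymmetric)
    (ht : TouchedAboveOn (-u) (closure Ω) z (-p) (-X)) (hn : z ∈ frontier Ω → ⟪p, nv z⟫ < 0) :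
    pdeOp F b α z p (matOf X) ≤ g z := by
  rw [pdeOp]
  have hφ : ContDiff ℝ 2 fun x => quadJet p X (x - z) :=
    (contDiff_quadJet p X).comp (contDiff_id.sub contDiff_const)
  have hmin : IsLocalMinOn (fun x => u x - quadJet p X (x - z)) (closure Ω) z := by
    filter_upwards [ht] with z' h'
    rw [sub_self, quadJet_zero]
    rw [quadJet_neg_neg, Pi.neg_apply, Pi.neg_apply] at h'
    linarith
  have hg := gradient_quadJet_sub p z X
  have hh := hess_quadJet_sub p z hX
  rw [closure_eq_self_union_frontier] at hz
  rcases hz with hz | hz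
  · have hin := h.1 z hz _ hφ hmin (hg.trans_ne hp)
    rwa [hg, hh, add_zero] at hin
  · have hbd := h.2.2.1 z hz _ hφ hmin (hg.trans_ne hp)
    rw [hg, hh, add_zero] at hbd
    rcases le_max_iff.mp hbd with h1 | h1
    · linarith
    · exact absurd h1 (not_le.mpr (hn hz))

end QuadraticTestFunctions

/-! ### Expansion of the modulus `√‖·‖` -/

section RadialOperator

variable {V : Type*} [NormedAddCommGroup V] [InnerProductSpace ℝ V]

/-- The operator `L (9/8 - 3/2 e ⊗ e)`, where `e = d / ‖d‖`. It bounds the Hessian at `d` of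
`2 L ‖d‖ ^ (3/2) √‖·‖`; the coefficients leave room for the error of the expansion and keep
the radial direction strictly concave. -/
def radialOp (L : ℝ) (d : V) : V →L[ℝ] V :=
  L • ((9 / 8 : ℝ) • ContinuousLinearMap.id ℝ V - (3 / 2 / ‖d‖ ^ 2) • (innerSL ℝ d).smulRight d)

lemma inner_radialOp (L : ℝ) (d x y : V) :
    ⟪radialOp L d x, y⟫ = L * (9 / 8 * ⟪x, y⟫ - 3 / 2 / ‖d‖ ^ 2 * (⟪d, x⟫ * ⟪d, y⟫)) := by
  simp [radialOp, inner_sub_left, real_inner_smul_left]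

lemma isSymmetric_radialOp (L : ℝ) (d : V) : (radialOp L d : V →ₗ[ℝ] V).IsSymmetric := fun x y => by
  simp only [ContinuousLinearMap.coe_coe]
  rw [← real_inner_comm x, inner_radialOp, inner_radialOp, real_inner_comm x y]
  ring

lemma inner_radialOp_self_le {L : ℝ} (hL : 0 ≤ L) (d x : V) :
    ⟪radialOp L d x, x⟫ ≤ 9 / 8 * L * ‖x‖ ^ 2 := by
  have h : 0 ≤ L * (3 / 2 / ‖d‖ ^ 2 * (⟪d, x⟫ * ⟪d, x⟫)) :=
    mul_nonneg hL (mul_nonneg (by positivity) (mul_self_nonneg _))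
  rw [inner_radialOp, real_inner_self_eq_norm_sq]
  linarith

lemma inner_radialOp_self {L : ℝ} {d : V} (hd : d ≠ 0) :
    ⟪radialOp L d d, d⟫ = -(3 / 8) * L * ‖d‖ ^ 2 := by
  have h : ‖d‖ ≠ 0 := norm_ne_zero_iff.mpr hd
  rw [inner_radialOp, real_inner_self_eq_norm_sq]
  field_simp
  ring

-- `1 + a / 2 + (b / 4 - 3 / 8 * a ^ 2)` is the second-order expansion of
-- `(1 + 2 * a + b) ^ (1 / 4)`; raising `b / 4` to `9 / 32 * b` absorbs the remainder.
lemma one_add_le_pow_four {a b : ℝ} (hab : a ^ 2 ≤ b) (hb : b ≤ 1 / 1024) :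
    0 ≤ 1 + a / 2 + (9 / 32 * b - 3 / 8 * a ^ 2) ∧
      1 + 2 * a + b ≤ (1 + a / 2 + (9 / 32 * b - 3 / 8 * a ^ 2)) ^ 4 := by
  have ha : |a| ≤ 1 / 32 := abs_le_of_sq_le_sq (by linarith) (by norm_num)
  have hb0 : 0 ≤ b := (sq_nonneg a).trans hab
  have ha1 : -(1 / 32) ≤ a := (abs_le.mp ha).1
  set β := 9 / 32 * b - 3 / 8 * a ^ 2 with hβ
  obtain ⟨hβ1, hβ2⟩ : -(3 / 8 * b) ≤ β ∧ β ≤ 3 / 8 * b := by constructor <;> linarith [sq_nonneg a]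
  obtain ⟨haβ1, haβ2⟩ : -(1 / 32 * (3 / 8 * b)) ≤ a * β ∧ a * β ≤ 1 / 32 * (3 / 8 * b) := by
    rw [← abs_le, abs_mul]
    exact mul_le_mul ha (abs_le.mpr ⟨hβ1, hβ2⟩) (abs_nonneg _) (by norm_num)
  set c := 9 / 16 * b - a ^ 2 / 2 + a * β with hc
  obtain ⟨hc1, hc2⟩ : -b ≤ c ∧ c ≤ b := by constructor <;> linarith [sq_nonneg a]
  have hac : -(1 / 32 * b) ≤ a * c := by
    refine (abs_le.mp ?_).1
    rw [abs_mul]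
    exact mul_le_mul ha (abs_le.mpr ⟨hc1, hc2⟩) (abs_nonneg _) (by norm_num)
  refine ⟨by linarith, ?_⟩
  have hsq : 1 + a + c ≤ (1 + a / 2 + β) ^ 2 :=
    calc 1 + a + c ≤ 1 + a + c + β ^ 2 := le_add_of_nonneg_right (sq_nonneg β)
      _ = (1 + a / 2 + β) ^ 2 := by rw [hc, hβ]; ring
  calc 1 + 2 * a + b ≤ 1 + 2 * a + a ^ 2 + 2 * c + 2 * (a * c) + c ^ 2 := by
        linarith [sq_nonneg c, sq_nonneg a]
    _ = (1 + a + c) ^ 2 := by ring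
    _ ≤ ((1 + a / 2 + β) ^ 2) ^ 2 := pow_le_pow_left₀ (by linarith) hsq 2
    _ = (1 + a / 2 + β) ^ 4 := by ring

lemma sqrt_norm_add_le {d k : V} (hd : d ≠ 0) (hk : ‖k‖ ≤ ‖d‖ / 32) :
    √‖d + k‖ ≤ √‖d‖ * (1 + ⟪d, k⟫ / ‖d‖ ^ 2 / 2
      + (9 / 32 * (‖k‖ ^ 2 / ‖d‖ ^ 2) - 3 / 8 * (⟪d, k⟫ / ‖d‖ ^ 2) ^ 2)) := by
  have hr : 0 < ‖d‖ := norm_pos_iff.mpr hd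
  have hab : (⟪d, k⟫ / ‖d‖ ^ 2) ^ 2 ≤ ‖k‖ ^ 2 / ‖d‖ ^ 2 :=
    calc (⟪d, k⟫ / ‖d‖ ^ 2) ^ 2 = ⟪d, k⟫ ^ 2 / (‖d‖ ^ 2) ^ 2 := div_pow _ _ _
      _ ≤ (‖d‖ * ‖k‖) ^ 2 / (‖d‖ ^ 2) ^ 2 := by
        gcongr ?_ / _
        exact sq_le_sq.mpr ((abs_real_inner_le_norm d k).trans (le_abs_self _))
      _ = ‖k‖ ^ 2 / ‖d‖ ^ 2 := by field_simp
  have hb : ‖k‖ ^ 2 / ‖d‖ ^ 2 ≤ 1 / 1024 := by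
    rw [div_le_iff₀ (by positivity)]
    calc ‖k‖ ^ 2 ≤ (‖d‖ / 32) ^ 2 := by gcongr
      _ = _ := by ring
  obtain ⟨hy0, hy⟩ := one_add_le_pow_four hab hb
  set y := 1 + ⟪d, k⟫ / ‖d‖ ^ 2 / 2
    + (9 / 32 * (‖k‖ ^ 2 / ‖d‖ ^ 2) - 3 / 8 * (⟪d, k⟫ / ‖d‖ ^ 2) ^ 2)
  refine (Real.sqrt_le_left (by positivity)).mpr (le_of_sq_le_sq ?_ (by positivity))
  calc ‖d + k‖ ^ 2 = ‖d‖ ^ 2 * (1 + 2 * (⟪d, k⟫ / ‖d‖ ^ 2) + ‖k‖ ^ 2 / ‖d‖ ^ 2) := by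
        rw [norm_add_sq_real]
        field_simp
    _ ≤ ‖d‖ ^ 2 * y ^ 4 := by gcongr
    _ = ((√‖d‖ ^ 2) * y ^ 2) ^ 2 := by rw [Real.sq_sqrt hr.le]; ring
    _ = ((√‖d‖ * y) ^ 2) ^ 2 := by ring

lemma eventually_mul_sqrt_norm_add_le {d : V} (hd : d ≠ 0) {L : ℝ} (hL : 0 ≤ L) :
    ∀ᶠ k in 𝓝 (0 : V), 2 * L * ‖d‖ * √‖d‖ * √‖d + k‖
      ≤ 2 * L * ‖d‖ * √‖d‖ * √‖d‖ + quadJet (L • d) (radialOp L d) k := by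
  have hr : 0 < ‖d‖ := norm_pos_iff.mpr hd
  filter_upwards [closedBall_mem_nhds (0 : V) (show 0 < ‖d‖ / 32 by positivity)] with k hk
  rw [mem_closedBall_zero_iff] at hk
  refine (mul_le_mul_of_nonneg_left (sqrt_norm_add_le hd hk) (by positivity)).trans_eq ?_
  rw [quadJet, inner_radialOp, real_inner_smul_left, real_inner_self_eq_norm_sq, ← mul_assoc,
    mul_assoc _ √‖d‖ √‖d‖, Real.mul_self_sqrt hr.le]
  field_simp
  ring

end RadialOperator

/-! ### The matrix inequality at a maximum of the doubled function -/

section DoublingInequality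

variable {V : Type*} [NormedAddCommGroup V] [InnerProductSpace ℝ V]

/-- The matrix inequality between the Hessians `X` and `Y` at a maximum of a doubled function
`u x - u y - ψ (x - y) - (η x + η y)`, where `T` bounds the Hessian of `ψ` and `c` that of `η`. -/
def DoublingIneq (X Y T : V →L[ℝ] V) (c : ℝ) : Prop :=
  ∀ h k, ⟪X h, h⟫ - ⟪Y k, k⟫ ≤ ⟪T (h - k), h - k⟫ + c * (‖h‖ ^ 2 + ‖k‖ ^ 2)

/-- The nonnegative operator `Y - X + 2 c` of a matrix inequality `DoublingIneq X Y T c`. -/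
def doublingGap (X Y : V →L[ℝ] V) (c : ℝ) : V →L[ℝ] V :=
  Y + (2 * c) • ContinuousLinearMap.id ℝ V - X

lemma inner_doublingGap (X Y : V →L[ℝ] V) (c : ℝ) (x : V) :
    ⟪doublingGap X Y c x, x⟫ = ⟪Y x, x⟫ + 2 * c * ‖x‖ ^ 2 - ⟪X x, x⟫ := by
  simp [doublingGap, inner_sub_left, inner_add_left, real_inner_smul_left]

variable {X Y T : V →L[ℝ] V} {c L : ℝ} {d : V}

lemma isSymmetric_doublingGap (hX : (X : V →ₗ[ℝ] V).IsSymmetric)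
    (hY : (Y : V →ₗ[ℝ] V).IsSymmetric) (c : ℝ) :
    (doublingGap X Y c : V →ₗ[ℝ] V).IsSymmetric :=
  (isSymmetric_add_smul_id hY (2 * c)).sub hX

namespace DoublingIneq

lemma inner_gap_nonneg (h : DoublingIneq X Y T c) (x : V) : 0 ≤ ⟪doublingGap X Y c x, x⟫ := by
  have hxx := h x x
  rw [sub_self, map_zero, inner_zero_left] at hxx
  rw [inner_doublingGap]
  linarith

lemma mono {c' : ℝ} (h : DoublingIneq X Y T c) (hc : c ≤ c') : DoublingIneq X Y T c' :=
  fun x y => (h x y).trans (by gcongr)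

-- Testing with `(d, -d)` sees the radial concavity, which in turn is seen by the trace of the gap.
lemma le_trace_gap [FiniteDimensional ℝ V] (h : DoublingIneq X Y (radialOp L d) c) (hd : d ≠ 0) :
    3 / 2 * L ≤ LinearMap.trace ℝ V (doublingGap X Y c : V →ₗ[ℝ] V) := by
  have htest := h d (-d)
  have hrad : ⟪radialOp L d (d - -d), d - -d⟫ = 4 * ⟪radialOp L d d, d⟫ := by
    rw [sub_neg_eq_add, ← two_smul ℝ d, map_smul, real_inner_smul_left, real_inner_smul_right]
    ring
  rw [hrad, inner_radialOp_self hd, map_neg, inner_neg_neg, norm_neg] at htest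
  have htrace := inner_apply_self_le_trace_mul h.inner_gap_nonneg d
  rw [inner_doublingGap] at htrace
  have hd2 : 0 < ‖d‖ ^ 2 := by positivity
  refine le_of_mul_le_mul_right ?_ hd2
  linarith

lemma opNorm_le [FiniteDimensional ℝ V] (h : DoublingIneq X Y (radialOp L d) c) (hd : d ≠ 0)
    (hY : (Y : V →ₗ[ℝ] V).IsSymmetric) (hL : 0 ≤ L) (hc : 0 ≤ c) :
    ‖Y‖ ≤ 2 * LinearMap.trace ℝ V (doublingGap X Y c : V →ₗ[ℝ] V) + c := by
  have htL := h.le_trace_gap hd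
  set t := LinearMap.trace ℝ V (doublingGap X Y c : V →ₗ[ℝ] V)
  refine opNorm_le_of_abs_inner_le hY (by linarith) fun x => ?_
  have hx0 := h x 0
  have h0x := h 0 x
  simp only [map_zero, inner_zero_left, sub_zero, zero_sub, norm_zero, map_neg, inner_neg_neg]
    at hx0 h0x
  have hrad := inner_radialOp_self_le hL d x
  have htrace := inner_apply_self_le_trace_mul h.inner_gap_nonneg x
  rw [inner_doublingGap] at htrace
  have htLx : 3 / 2 * L * ‖x‖ ^ 2 ≤ t * ‖x‖ ^ 2 := by gcongr
  have hLx : 0 ≤ L * ‖x‖ ^ 2 := by positivity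
  have hcx : 0 ≤ c * ‖x‖ ^ 2 := by positivity
  rw [abs_le]
  constructor <;> linarith [hx0, h0x, hrad, htrace, htLx, hLx, hcx]

end DoublingIneq

end DoublingInequality

/-! ### Ellipticity at a maximum of the doubled function -/

section Ellipticity

lemma abs_inner_mul_rpow_le {V : Type*} [NormedAddCommGroup V] [InnerProductSpace ℝ V] (v : V)
    {p : V} (hp : p ≠ 0) (α : ℝ) : |⟪v, p⟫ * ‖p‖ ^ α| ≤ ‖v‖ * ‖p‖ ^ (1 + α) := by
  rw [abs_mul, abs_of_nonneg (Real.rpow_nonneg (norm_nonneg p) α),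
    Real.rpow_add (norm_pos_iff.mpr hp), Real.rpow_one, ← mul_assoc]
  exact mul_le_mul_of_nonneg_right (abs_real_inner_le_norm v p) (by positivity)

lemma exists_holder_sum_le {C₁ C₂ θ ν ε : ℝ} (hθ : 0 < θ) (hν : 0 < ν) (hε : 0 < ε) :
    ∃ δ > 0, ∀ s t : ℝ, 0 ≤ s → s ≤ δ → 0 ≤ t → t ≤ δ → C₁ * s ^ θ + C₂ * t ^ ν ≤ ε := by
  have hcont : Continuous fun x : ℝ × ℝ => C₁ * x.1 ^ θ + C₂ * x.2 ^ ν :=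
    (continuous_const.mul (continuous_fst.rpow_const fun _ => Or.inr hθ.le)).add
      (continuous_const.mul (continuous_snd.rpow_const fun _ => Or.inr hν.le))
  have hlim : Tendsto (fun x : ℝ × ℝ => C₁ * x.1 ^ θ + C₂ * x.2 ^ ν) (𝓝 0) (𝓝 0) := by
    simpa [Real.zero_rpow hθ.ne', Real.zero_rpow hν.ne'] using hcont.tendsto 0
  obtain ⟨δ, hδ, hball⟩ :=
    nhds_basis_closedBall.eventually_iff.mp (hlim.eventually (Iic_mem_nhds hε))
  refine ⟨δ, hδ, fun s t hs hsδ ht htδ => @hball (s, t) ?_⟩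
  rw [mem_closedBall_zero_iff, Prod.norm_mk, Real.norm_of_nonneg hs, Real.norm_of_nonneg ht]
  exact max_le hsδ htδ

variable {N : ℕ} {Ω : Set (EN N)} {F : EN N → EN N → Mat N → ℝ} {b : EN N → EN N}
  {α a A C₁ θ C₂ ν c L Mb Mg : ℝ} {X Y T : EN N →L[ℝ] EN N} {z w p q d : EN N}

/-- Hölder continuity of `F` in space: the estimate of `(F3)`, for an arbitrary exponent. -/
def HolderInSpace (Ω : Set (EN N)) (α C₁ θ : ℝ) (F : EN N → EN N → Mat N → ℝ) : Prop :=
  ∀ x ∈ closure Ω, ∀ y ∈ closure Ω, ∀ p : EN N, p ≠ 0 →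
    ∀ X : Mat N, X.IsSymm → |F x p X - F y p X| ≤ C₁ * ‖x - y‖ ^ θ * ‖p‖ ^ α * matNorm X

/-- Hölder continuity of `F` in the gradient: the estimate of `(F4)`, for an arbitrary exponent. -/
def HolderInGradient (Ω : Set (EN N)) (α C₂ ν : ℝ) (F : EN N → EN N → Mat N → ℝ) : Prop :=
  ∀ x ∈ closure Ω, ∀ p : EN N, p ≠ 0 → ∀ q : EN N, ‖q‖ ≤ ‖p‖ / 2 → ∀ X : Mat N, X.IsSymm →
    |F x (p + q) X - F x p X| ≤ C₂ * ‖p‖ ^ (α - ν) * ‖q‖ ^ ν * matNorm X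

lemma HolderInSpace.abs_sub_le_holder (hF3 : HolderInSpace Ω α C₁ θ F)
    (hF4 : HolderInGradient Ω α C₂ ν F) (hz : z ∈ closure Ω) (hw : w ∈ closure Ω) (hp : p ≠ 0)
    (hqp : ‖q - p‖ ≤ ‖p‖ / 2) {Z : Mat N} (hZ : Z.IsSymm) :
    |F z p Z - F w q Z|
      ≤ ‖p‖ ^ α * ((C₁ * ‖z - w‖ ^ θ + C₂ * (‖q - p‖ / ‖p‖) ^ ν) * matNorm Z) := by
  have hpp : 0 < ‖p‖ := norm_pos_iff.mpr hp
  have hspace := hF3 z hz w hw p hp Z hZ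
  have hgrad := hF4 w hw p hp (q - p) hqp Z hZ
  rw [add_sub_cancel, abs_sub_comm, Real.rpow_sub hpp] at hgrad
  calc |F z p Z - F w q Z| ≤ |F z p Z - F w p Z| + |F w p Z - F w q Z| := abs_sub_le _ _ _
    _ ≤ C₁ * ‖z - w‖ ^ θ * ‖p‖ ^ α * matNorm Z
        + C₂ * (‖p‖ ^ α / ‖p‖ ^ ν) * ‖q - p‖ ^ ν * matNorm Z := add_le_add hspace hgrad
    _ = _ := by rw [Real.div_rpow (norm_nonneg _) hpp.le]; ring

lemma CondF2.sub_le_of_doublingIneq (hF2 : CondF2 Ω α a A F) (hz : z ∈ closure Ω) (hp : p ≠ 0)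
    (hX : (X : EN N →ₗ[ℝ] EN N).IsSymmetric) (hY : (Y : EN N →ₗ[ℝ] EN N).IsSymmetric)
    (hc : 0 ≤ c) (h : DoublingIneq X Y T c) :
    F z p (matOf X) - F z p (matOf Y) ≤ ‖p‖ ^ α * (A * (2 * c * N)
      - a * LinearMap.trace ℝ (EN N) (doublingGap X Y c : EN N →ₗ[ℝ] EN N)) := by
  set I := (2 * c) • ContinuousLinearMap.id ℝ (EN N) with hI
  have hsum : X + doublingGap X Y c = Y + I := by rw [doublingGap]; abel
  have hIpos : (matOf I).PosSemidef := by
    refine matOf_posSemidef (LinearMap.IsSymmetric.id.smul (by simp)) fun x => ?_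
    rw [hI, smul_apply, ContinuousLinearMap.id_apply, real_inner_smul_left,
      real_inner_self_eq_norm_sq]
    positivity
  have hgap := (hF2.2.2 z hz p hp _ _ (matOf_isSymm hX)
    (matOf_posSemidef (isSymmetric_doublingGap hX hY c) h.inner_gap_nonneg)).1
  have hid := (hF2.2.2 z hz p hp _ _ (matOf_isSymm hY) hIpos).2
  rw [← matOf_add, hsum, trace_matOf] at hgap
  rw [← matOf_add, trace_matOf_smul_id] at hid
  linarith

lemma sub_le_of_pdeOp_le (hα : -1 < α) (hb : ∀ x ∈ closure Ω, ‖b x‖ ≤ Mb) (hMb : 0 ≤ Mb)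
    {g : EN N → ℝ} (hg : ∀ x ∈ closure Ω, |g x| ≤ Mg) (hMg : 0 ≤ Mg) (hz : z ∈ closure Ω)
    (hw : w ∈ closure Ω) {Z W : Mat N} (hsub : g z ≤ pdeOp F b α z p Z)
    (hsup : pdeOp F b α w q W ≤ g w) (hp : 1 ≤ ‖p‖) (hq0 : q ≠ 0) (hq : ‖q‖ ≤ 2 * ‖p‖) :
    F w q W - F z p Z ≤ (2 * Mg + Mb * (1 + 2 ^ (1 + α))) * ‖p‖ ^ (1 + α) := by
  have hp0 : p ≠ 0 := norm_pos_iff.mp (one_pos.trans_le hp)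
  have hdriftp : ⟪b z, p⟫ * ‖p‖ ^ α ≤ Mb * ‖p‖ ^ (1 + α) :=
    (le_abs_self _).trans ((abs_inner_mul_rpow_le _ hp0 α).trans (by gcongr; exact hb z hz))
  have hdriftq : -(⟪b w, q⟫ * ‖q‖ ^ α) ≤ Mb * (2 ^ (1 + α) * ‖p‖ ^ (1 + α)) := by
    refine (neg_le_abs _).trans ((abs_inner_mul_rpow_le _ hq0 α).trans ?_)
    rw [← Real.mul_rpow zero_le_two (norm_nonneg p)]
    gcongr
    exacts [hb w hw, by linarith]
  have hdata : g w - g z ≤ 2 * Mg * ‖p‖ ^ (1 + α) := by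
    have hone : 1 ≤ ‖p‖ ^ (1 + α) := Real.one_le_rpow hp (by linarith)
    have hgz := (abs_le.mp (hg z hz)).1
    have hgw := (abs_le.mp (hg w hw)).2
    exact (show g w - g z ≤ 2 * Mg by linarith).trans
      (le_mul_of_one_le_right (by positivity) hone)
  rw [pdeOp] at hsub hsup
  linarith

lemma curvature_le (hα : -1 < α) (hF2 : CondF2 Ω α a A F) (hF3 : HolderInSpace Ω α C₁ θ F)
    (hF4 : HolderInGradient Ω α C₂ ν F) (hb : ∀ x ∈ closure Ω, ‖b x‖ ≤ Mb) (hMb : 0 ≤ Mb)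
    {g : EN N → ℝ} (hg : ∀ x ∈ closure Ω, |g x| ≤ Mg) (hMg : 0 ≤ Mg)
    (hz : z ∈ closure Ω) (hw : w ∈ closure Ω) (hX : (X : EN N →ₗ[ℝ] EN N).IsSymmetric)
    (hY : (Y : EN N →ₗ[ℝ] EN N).IsSymmetric) (hL : 0 ≤ L) (hc : 0 ≤ c) (hd : d ≠ 0)
    (h : DoublingIneq X Y (radialOp L d) c) (hsub : g z ≤ pdeOp F b α z p (matOf X))
    (hsup : pdeOp F b α w q (matOf Y) ≤ g w) (hp : 1 ≤ ‖p‖) (hq : q ≠ 0)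
    (hqp : ‖q - p‖ ≤ ‖p‖ / 2)
    (hsmall : C₁ * ‖z - w‖ ^ θ + C₂ * (‖q - p‖ / ‖p‖) ^ ν ≤ a / 4) :
    3 / 4 * a * L ≤ (2 * Mg + Mb * (1 + 2 ^ (1 + α))) * ‖p‖ + c * (2 * A * N + a) := by
  have ha : 0 < a := hF2.1
  have hp0 : p ≠ 0 := norm_pos_iff.mp (one_pos.trans_le hp)
  have htrace := h.le_trace_gap hd
  have hnorm := h.opNorm_le hd hY hL hc
  have hell := hF2.sub_le_of_doublingIneq hz hp0 hX hY hc h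
  set t := LinearMap.trace ℝ (EN N) (doublingGap X Y c : EN N →ₗ[ℝ] EN N)
  have hpα : 0 < ‖p‖ ^ α := by positivity
  have herr : F z p (matOf Y) - F w q (matOf Y) ≤ ‖p‖ ^ α * (a / 4 * (2 * t + c)) := by
    refine (le_abs_self _).trans
      ((hF3.abs_sub_le_holder hF4 hz hw hp0 hqp (matOf_isSymm hY)).trans ?_)
    rw [matNorm_matOf]
    gcongr
  have hdata := sub_le_of_pdeOp_le hα hb hMb hg hMg hz hw hsub hsup hp hq
    (by linarith [norm_sub_norm_le q p])
  rw [show ‖p‖ ^ (1 + α) = ‖p‖ ^ α * ‖p‖ by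
    rw [Real.rpow_add (by positivity), Real.rpow_one, mul_comm]] at hdata
  have hbalance : a * t ≤ (2 * Mg + Mb * (1 + 2 ^ (1 + α))) * ‖p‖ + A * (2 * c * N)
      + a / 4 * (2 * t + c) := by
    refine le_of_mul_le_mul_left ?_ hpα
    linarith
  have hta : a * (3 / 2 * L) ≤ a * t := by gcongr
  have hca : 0 ≤ c * a := by positivity
  linarith

lemma norm_bounds_of_norm_sub_le {V : Type*} [NormedAddCommGroup V] {p q v : V} {D δ : ℝ}
    (hδ : 0 < δ) (hp : ‖p - v‖ ≤ D) (hq : ‖q - v‖ ≤ D) (hv : 2 + 8 * D + 4 * D / δ ≤ ‖v‖) :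
    1 ≤ ‖p‖ ∧ ‖p‖ ≤ 2 * ‖v‖ ∧ q ≠ 0 ∧ ‖q - p‖ ≤ ‖p‖ / 2 ∧ ‖q - p‖ / ‖p‖ ≤ δ := by
  have hD : 0 ≤ D := (norm_nonneg _).trans hp
  have hDδ : 0 ≤ 4 * D / δ := by positivity
  have hpv : ‖v‖ - ‖p‖ ≤ D := (norm_sub_norm_le v p).trans (by rwa [norm_sub_rev])
  have hqv : ‖v‖ - ‖q‖ ≤ D := (norm_sub_norm_le v q).trans (by rwa [norm_sub_rev])
  have hqp : ‖q - p‖ ≤ 2 * D := by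
    rw [← sub_sub_sub_cancel_right q p v]
    linarith [norm_sub_le (q - v) (p - v)]
  have hp1 : 1 ≤ ‖p‖ := by linarith
  refine ⟨hp1, by linarith [norm_sub_norm_le p v], norm_pos_iff.mp (by linarith), by linarith, ?_⟩
  rw [div_le_iff₀ (one_pos.trans_le hp1), ← div_le_iff₀' hδ]
  calc ‖q - p‖ / δ ≤ 2 * D / δ := by gcongr
    _ = 4 * D / δ / 2 := by ring
    _ ≤ ‖p‖ := by linarith

-- The contradiction: `L ‖d‖` bounds the first-order terms, but the curvature `L` is `1 / ‖d‖` times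
-- larger.
lemma exists_forall_not_doublingIneq (hα : -1 < α) (hF2 : CondF2 Ω α a A F)
    (hF3 : HolderInSpace Ω α C₁ θ F) (hθ : 0 < θ) (hF4 : HolderInGradient Ω α C₂ ν F) (hν : 0 < ν)
    (hb : ∀ x ∈ closure Ω, ‖b x‖ ≤ Mb) (hMb : 0 ≤ Mb) (hMg : 0 ≤ Mg) (hc : 0 ≤ c) (D : ℝ) :
    ∃ P₀ r₁ : ℝ, 0 < r₁ ∧ ∀ {g : EN N → ℝ} {z w p q d : EN N} {X Y : EN N →L[ℝ] EN N} {L : ℝ},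
      (∀ x ∈ closure Ω, |g x| ≤ Mg) → z ∈ closure Ω → w ∈ closure Ω →
      (X : EN N →ₗ[ℝ] EN N).IsSymmetric → (Y : EN N →ₗ[ℝ] EN N).IsSymmetric →
      0 < L → d ≠ 0 → ‖d‖ ≤ r₁ → P₀ ≤ L * ‖d‖ → ‖z - w‖ ≤ 2 * r₁ →
      ‖p - L • d‖ ≤ D → ‖q - L • d‖ ≤ D →
      (p ≠ 0 → g z ≤ pdeOp F b α z p (matOf X)) → (q ≠ 0 → pdeOp F b α w q (matOf Y) ≤ g w) →
      ¬ DoublingIneq X Y (radialOp L d) c := by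
  have ha : 0 < a := hF2.1
  have hA : 0 ≤ A := ha.le.trans hF2.2.1
  obtain ⟨δ, hδ, hsmall⟩ :=
    exists_holder_sum_le (C₁ := C₁) (C₂ := C₂) hθ hν (show 0 < a / 4 by positivity)
  set G := 2 * Mg + Mb * (1 + 2 ^ (1 + α))
  set K := c * (2 * A * N + a)
  have hG : 0 ≤ G := by positivity
  have hK : 0 ≤ K := by positivity
  set B := 2 * (G + K)
  have hB : 0 ≤ B := by positivity
  set r₁ := min (δ / 2) (a / (2 * (B + 1)))
  have hr₁ : 2 * r₁ ≤ δ := by linarith [min_le_left (δ / 2) (a / (2 * (B + 1)))]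
  refine ⟨2 + 8 * D + 4 * D / δ, r₁, by positivity, ?_⟩
  intro g z w p q d X Y L hg hz hw hX hY hL hd hdr hP hzw hp hq hsub hsup h
  have hLd : ‖L • d‖ = L * ‖d‖ := by rw [norm_smul, Real.norm_of_nonneg hL.le]
  rw [← hLd] at hP
  obtain ⟨hp1, hpP, hq0, hqp, hratio⟩ := norm_bounds_of_norm_sub_le hδ hp hq hP
  have hcurv := curvature_le hα hF2 hF3 hF4 hb hMb hg hMg hz hw hX hY hL.le hc hd h
    (hsub (norm_pos_iff.mp (one_pos.trans_le hp1))) (hsup hq0) hp1 hq0 hqp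
    (hsmall _ _ (norm_nonneg _) (hzw.trans hr₁) (by positivity) hratio)
  rw [hLd] at hpP
  have hslope : 2 * (B + 1) * (L * ‖d‖) ≤ a * L := by
    have hdB : ‖d‖ * (2 * (B + 1)) ≤ a :=
      (le_div_iff₀ (by positivity)).mp (hdr.trans (min_le_right _ _))
    linarith [mul_le_mul_of_nonneg_left hdB hL.le]
  have hGp : G * ‖p‖ ≤ G * (2 * (L * ‖d‖)) := mul_le_mul_of_nonneg_left hpP hG
  have hKP : K ≤ K * (2 * (L * ‖d‖)) := le_mul_of_one_le_right hK (by linarith)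
  have hBP : 0 ≤ B * (L * ‖d‖) := mul_nonneg hB (by positivity)
  linarith

end Ellipticity

/-! ### First-order Taylor estimates -/

section Gradients

variable {V : Type*} [NormedAddCommGroup V] [InnerProductSpace ℝ V]

lemma eventually_mem_imp_inner_pos {S : Set V} (hS : IsClosed S) {f : V → V} (hf : Continuous f)
    {x p : V} (h : x ∈ S → 0 < ⟪p, f x⟫) :
    ∀ᶠ y : V × V in 𝓝 (x, p), y.1 ∈ S → 0 < ⟪y.2, f y.1⟫ := by
  by_cases hx : x ∈ S
  · have hc : Continuous fun y : V × V => ⟪y.2, f y.1⟫ := by fun_prop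
    exact (continuousAt_const.eventually_lt hc.continuousAt (h hx)).mono fun y hy _ => hy
  · exact (continuousAt_fst.eventually (hS.isOpen_compl.mem_nhds (mem_compl hx))).mono
      fun y hy hyS => absurd hyS hy

lemma continuous_gradient_of_contDiff [CompleteSpace V] {f : V → ℝ} (hf : ContDiff ℝ 1 f) :
    Continuous (gradient f) :=
  (InnerProductSpace.toDual ℝ V).symm.continuous.comp (hf.continuous_fderiv one_ne_zero)

variable [FiniteDimensional ℝ V] {f : V → ℝ} {K : Set V}

lemma exists_abs_sub_inner_gradient_le (hf : ContDiff ℝ 2 f) (hK : Bornology.IsBounded K) :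
    ∃ C, 0 ≤ C ∧ ∀ x ∈ K, ∀ y ∈ K, |f y - f x - ⟪gradient f x, y - x⟫| ≤ C * ‖y - x‖ ^ 2 := by
  have hf' : ContDiff ℝ 1 (fderiv ℝ f) := hf.fderiv_right one_add_one_eq_two.le
  obtain ⟨R, hR⟩ := hK.subset_closedBall 0
  obtain ⟨C, hC⟩ := (isCompact_closedBall 0 R).exists_bound_of_continuousOn
    (hf'.continuous_fderiv one_ne_zero).continuousOn
  have hconv := convex_closedBall (0 : V) R
  refine ⟨|C|, abs_nonneg C, fun x hx y hy => ?_⟩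
  have hseg : segment ℝ x y ⊆ closedBall 0 R := hconv.segment_subset (hR hx) (hR hy)
  have hlip : ∀ w ∈ segment ℝ x y, ‖fderiv ℝ f w - fderiv ℝ f x‖ ≤ |C| * ‖y - x‖ := fun w hw =>
    calc ‖fderiv ℝ f w - fderiv ℝ f x‖ ≤ |C| * ‖w - x‖ :=
          hconv.norm_image_sub_le_of_norm_fderiv_le (fun z _ => hf'.differentiable one_ne_zero z)
            (fun z hz => (hC z hz).trans (le_abs_self C)) (hR hx) (hseg hw)
      _ ≤ |C| * ‖y - x‖ := by
          gcongr
          exact norm_sub_le_of_mem_segment hw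
  have hmean := (convex_segment x y).norm_image_sub_le_of_norm_fderiv_le'
    (fun z _ => hf.differentiable two_ne_zero z) hlip (left_mem_segment ℝ x y)
    (right_mem_segment ℝ x y)
  rwa [Real.norm_eq_abs, ← inner_gradient_left, mul_assoc, ← sq] at hmean

lemma exists_touchedAboveOn_smul_id (hf : ContDiff ℝ 2 f) (hK : Bornology.IsBounded K) :
    ∃ c : ℝ, 0 ≤ c ∧ ∀ x ∈ K,
      TouchedAboveOn f K x (gradient f x) (c • ContinuousLinearMap.id ℝ V) := by
  obtain ⟨C, hC, h⟩ := exists_abs_sub_inner_gradient_le hf hK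
  refine ⟨2 * C, by positivity, fun x hx => ?_⟩
  filter_upwards [self_mem_nhdsWithin] with y hy
  have hsplit := quadJet_add_left 0 (gradient f x) ((2 * C) • ContinuousLinearMap.id ℝ V) (y - x)
  rw [zero_add, quadJet_zero_smul_id] at hsplit
  linarith [le_of_abs_le (h x hx y hy)]

end Gradients

/-! ### Barriers at the boundary -/

namespace IsC2DefiningFun

variable {N : ℕ} {Ω : Set (EN N)} {nv : EN N → EN N} {ρ : EN N → ℝ} {x : EN N}

lemma contDiff (hρ : IsC2DefiningFun Ω nv ρ) : ContDiff ℝ 2 ρ := hρ.1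

lemma eq_zero_of_mem_frontier (hρ : IsC2DefiningFun Ω nv ρ) (hx : x ∈ frontier Ω) : ρ x = 0 :=
  hρ.2.2.1.subset hx

lemma nonpos_of_mem_closure (hρ : IsC2DefiningFun Ω nv ρ) (hx : x ∈ closure Ω) : ρ x ≤ 0 := by
  rw [closure_eq_self_union_frontier] at hx
  rcases hx with hx | hx
  · exact (hρ.2.1.subset hx).le
  · exact (hρ.eq_zero_of_mem_frontier hx).le

lemma continuous_gradient (hρ : IsC2DefiningFun Ω nv ρ) : Continuous (gradient ρ) :=
  continuous_gradient_of_contDiff (hρ.contDiff.of_le one_le_two)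

lemma inner_nv_pos_iff (hρ : IsC2DefiningFun Ω nv ρ) (hx : x ∈ frontier Ω) (p : EN N) :
    0 < ⟪p, nv x⟫ ↔ 0 < ⟪p, gradient ρ x⟫ := by
  obtain ⟨hne, hnv⟩ := hρ.2.2.2 x hx
  rw [hnv, real_inner_smul_right]
  exact mul_pos_iff_of_pos_left (inv_pos.mpr (norm_pos_iff.mpr hne))

-- For `x ∈ ∂Ω` and `y ∈ Ω̄`, Taylor's formula and `ρ y ≤ 0 = ρ x` give
-- `⟪x - y, ∇ρ x⟫ ≥ -C ‖x - y‖²`.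
lemma exists_barrier (hρ : IsC2DefiningFun Ω nv ρ) (hbd : Bornology.IsBounded Ω) {m : ℝ} :
    ∃ κ : ℝ, ∀ x ∈ frontier Ω, ∀ y ∈ closure Ω, ∀ s, 0 ≤ s → s * ‖x - y‖ ^ 2 ≤ m →
      0 < ⟪s • (x - y) + κ • gradient ρ x, gradient ρ x⟫ := by
  have hK : IsCompact (closure Ω) := hbd.isCompact_closure
  obtain ⟨C, hC, htaylor⟩ := exists_abs_sub_inner_gradient_le hρ.contDiff hbd.closure
  obtain ⟨c, hc, hgrad⟩ :=
    (hK.of_isClosed_subset isClosed_frontier frontier_subset_closure).exists_forall_le'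
      (f := fun x => ‖gradient ρ x‖ ^ 2) (hρ.continuous_gradient.norm.pow 2).continuousOn (a := 0)
      fun x hx => pow_pos (norm_pos_iff.mpr (hρ.2.2.2 x hx).1) 2
  refine ⟨(C * |m| + 1) / c, fun x hx y hy s hs hsm => ?_⟩
  have hinner : -(C * ‖x - y‖ ^ 2) ≤ ⟪x - y, gradient ρ x⟫ := by
    have h := neg_le_of_abs_le (htaylor x (frontier_subset_closure hx) y hy)
    rw [hρ.eq_zero_of_mem_frontier hx, ← neg_sub x y, norm_neg, inner_neg_right,
      real_inner_comm] at h
    linarith [hρ.nonpos_of_mem_closure hy]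
  have hκ : C * |m| + 1 ≤ (C * |m| + 1) / c * ‖gradient ρ x‖ ^ 2 := by
    rw [div_mul_eq_mul_div, le_div_iff₀ hc]
    exact mul_le_mul_of_nonneg_left (hgrad x hx) (by positivity)
  rw [inner_add_left, real_inner_smul_left, real_inner_smul_left, real_inner_self_eq_norm_sq]
  calc (0 : ℝ) < -(C * |m|) + (C * |m| + 1) := by linarith
    _ ≤ -(C * (s * ‖x - y‖ ^ 2)) + (C * |m| + 1) / c * ‖gradient ρ x‖ ^ 2 := by
        gcongr
        exact hsm.trans (le_abs_self m)
    _ = s * -(C * ‖x - y‖ ^ 2) + (C * |m| + 1) / c * ‖gradient ρ x‖ ^ 2 := by ring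
    _ ≤ _ := by gcongr

end IsC2DefiningFun

lemma exists_contDiff_abs_le_gradient_eq {V : Type*} [NormedAddCommGroup V] [InnerProductSpace ℝ V]
    [CompleteSpace V] {f : V → ℝ} (hf : ContDiff ℝ 2 f) (κ : ℝ) {ε : ℝ} (hε : 0 < ε) :
    ∃ η : V → ℝ, ContDiff ℝ 2 η ∧ (∀ x, |η x| ≤ ε) ∧
      ∀ x, f x = 0 → gradient η x = κ • gradient f x := by
  refine ⟨fun x => ε * Real.sin (f x * (κ / ε)),
    contDiff_const.mul (Real.contDiff_sin.comp (hf.mul contDiff_const)), fun x => ?_,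
    fun x hx => HasGradientAt.gradient ?_⟩
  · rw [abs_mul, abs_of_pos hε]
    exact mul_le_of_le_one_right hε.le (Real.abs_sin_le_one _)
  · rw [hasGradientAt_iff_hasFDerivAt]
    refine ((((hf.differentiable two_ne_zero x).hasFDerivAt.mul_const
      (κ / ε)).sin).const_mul ε).congr_fderiv ?_
    rw [hx, zero_mul, Real.cos_zero, one_smul, smul_smul, mul_div_cancel₀ _ hε.ne', map_smul,
      toDual_gradient]

/-! ### Maxima of the doubled function -/

section Doubling

variable {V : Type*} [NormedAddCommGroup V]

/-- The doubled function `u x - u y - M √‖x - y‖ - (η x + η y)`, whose upper bounds are bounds on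
the modulus of continuity of `u`; the corrector `η` enforces strict boundary inequalities. -/
def doubled (u η : V → ℝ) (M : ℝ) (z : V × V) : ℝ :=
  u z.1 - u z.2 - M * √‖z.1 - z.2‖ - (η z.1 + η z.2)

lemma continuousOn_doubled {u η : V → ℝ} {K : Set V} (hu : ContinuousOn u K) (hη : Continuous η)
    (M : ℝ) : ContinuousOn (doubled u η M) (K ×ˢ K) := by
  have h1 : ContinuousOn (fun z : V × V => u z.1) (K ×ˢ K) :=
    hu.comp continuousOn_fst fun z hz => hz.1
  have h2 : ContinuousOn (fun z : V × V => u z.2) (K ×ˢ K) :=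
    hu.comp continuousOn_snd fun z hz => hz.2
  exact ((h1.sub h2).sub (Continuous.continuousOn (by fun_prop))).sub
    (Continuous.continuousOn (by fun_prop))

variable [InnerProductSpace ℝ V]

/-- The operator on `V × V` with quadratic form `⟪T (h - k), h - k⟫ + c (‖h‖ ^ 2 + ‖k‖ ^ 2)`. -/
def doublingOp (T : V →L[ℝ] V) (c : ℝ) : WithLp 2 (V × V) →L[ℝ] WithLp 2 (V × V) :=
  (toLpInl V V - toLpInr V V) ∘L T ∘L (WithLp.fstL 2 ℝ V V - WithLp.sndL 2 ℝ V V)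
    + c • ContinuousLinearMap.id ℝ (WithLp 2 (V × V))

lemma inner_doublingOp (T : V →L[ℝ] V) (c : ℝ) (x y : WithLp 2 (V × V)) :
    ⟪doublingOp T c x, y⟫
      = ⟪T (x.fst - x.snd), y.fst - y.snd⟫ + c * (⟪x.fst, y.fst⟫ + ⟪x.snd, y.snd⟫) := by
  simp only [doublingOp, toLpInl, toLpInr, ContinuousLinearMap.comp_sub,
    ContinuousLinearMap.sub_comp, add_apply, sub_apply, ContinuousLinearMap.comp_apply,
    WithLp.fstL_apply, ContinuousLinearMap.inl_apply, ContinuousLinearEquiv.coe_coe,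
    WithLp.prodContinuousLinearEquiv_symm_apply, ContinuousLinearMap.inr_apply, WithLp.sndL_apply,
    smul_apply, ContinuousLinearMap.id_apply, inner_add_left, inner_sub_left,
    WithLp.prod_inner_apply, WithLp.ofLp_fst, WithLp.ofLp_snd, inner_zero_left, add_zero,
    zero_add, WithLp.ofLp_smul, Prod.smul_fst, real_inner_smul_left, Prod.smul_snd, map_sub,
    inner_sub_right]
  ring

lemma isSymmetric_doublingOp {T : V →L[ℝ] V} (hT : (T : V →ₗ[ℝ] V).IsSymmetric) (c : ℝ) :
    (doublingOp T c : WithLp 2 (V × V) →ₗ[ℝ] WithLp 2 (V × V)).IsSymmetric := fun x y => by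
  have hxy : ⟪T (x.fst - x.snd), y.fst - y.snd⟫ = ⟪T (y.fst - y.snd), x.fst - x.snd⟫ :=
    (hT _ _).trans (real_inner_comm _ _)
  simp only [ContinuousLinearMap.coe_coe]
  rw [← real_inner_comm x, inner_doublingOp, inner_doublingOp, hxy, real_inner_comm x.fst,
    real_inner_comm x.snd]

lemma quadJet_doublingOp (v p q : V) (T : V →L[ℝ] V) (c : ℝ) (x : WithLp 2 (V × V)) :
    quadJet (WithLp.toLp 2 (v + p, -(v - q))) (doublingOp T c) x
      = quadJet v T (x.fst - x.snd) + quadJet p (c • ContinuousLinearMap.id ℝ V) x.fst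
        + quadJet q (c • ContinuousLinearMap.id ℝ V) x.snd := by
  rw [quadJet, inner_doublingOp, WithLp.prod_inner_apply]
  simp only [quadJet, inner_add_left, inner_neg_left, inner_sub_left, inner_sub_right, smul_apply,
    ContinuousLinearMap.id_apply, real_inner_smul_left, WithLp.ofLp_fst, WithLp.ofLp_snd]
  ring

lemma touchedAboveOn_separatedSum_of_isMaxOn_doubled {u η : V → ℝ} {K : Set V} {x₀ y₀ p q : V}
    {L c : ℝ} (hne : x₀ ≠ y₀) (hL : 0 ≤ L)
    (hmax : IsMaxOn (doubled u η (2 * L * ‖x₀ - y₀‖ * √‖x₀ - y₀‖)) (K ×ˢ K) (x₀, y₀))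
    (hx : TouchedAboveOn η K x₀ p (c • ContinuousLinearMap.id ℝ V))
    (hy : TouchedAboveOn η K y₀ q (c • ContinuousLinearMap.id ℝ V)) :
    TouchedAboveOn (separatedSum u (-u)) (WithLp.ofLp ⁻¹' K ×ˢ K) (WithLp.toLp 2 (x₀, y₀))
      (WithLp.toLp 2 (L • (x₀ - y₀) + p, -(L • (x₀ - y₀) - q)))
      (doublingOp (radialOp L (x₀ - y₀)) c) := by
  set d := x₀ - y₀ with hd
  have hfst : Tendsto (fun z : WithLp 2 (V × V) => z.fst)
      (𝓝[WithLp.ofLp ⁻¹' K ×ˢ K] WithLp.toLp 2 (x₀, y₀)) (𝓝[K] x₀) :=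
    (WithLp.continuous_fst 2 V V).continuousWithinAt.tendsto_nhdsWithin fun z hz => hz.1
  have hsnd : Tendsto (fun z : WithLp 2 (V × V) => z.snd)
      (𝓝[WithLp.ofLp ⁻¹' K ×ˢ K] WithLp.toLp 2 (x₀, y₀)) (𝓝[K] y₀) :=
    (WithLp.continuous_snd 2 V V).continuousWithinAt.tendsto_nhdsWithin fun z hz => hz.2
  have hdiff : Tendsto (fun z : WithLp 2 (V × V) => z.fst - z.snd - d)
      (𝓝[WithLp.ofLp ⁻¹' K ×ˢ K] WithLp.toLp 2 (x₀, y₀)) (𝓝 0) := by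
    have h := (tendsto_nhds_of_tendsto_nhdsWithin hfst).sub
      (tendsto_nhds_of_tendsto_nhdsWithin hsnd)
    simpa only [← hd, sub_self] using h.sub_const d
  filter_upwards [hfst.eventually hx, hsnd.eventually hy,
    hdiff.eventually (eventually_mul_sqrt_norm_add_le (sub_ne_zero.mpr hne) hL),
    self_mem_nhdsWithin] with z hzx hzy hzd hz
  have hle := isMaxOn_iff.mp hmax (WithLp.ofLp z) hz
  rw [← hd, add_sub_cancel] at hzd
  rw [doubled, doubled, ← hd] at hle
  simp only [WithLp.ofLp_fst, WithLp.ofLp_snd] at hle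
  rw [quadJet_doublingOp, WithLp.sub_fst, WithLp.sub_snd, sub_sub_sub_comm]
  change u z.fst + -u z.snd ≤ u x₀ + -u y₀ + (quadJet (L • d) (radialOp L d) (z.fst - z.snd - d)
    + quadJet p _ (z.fst - x₀) + quadJet q _ (z.snd - y₀))
  linarith

lemma exists_doublingIneq_of_touchedAboveOn_separatedSum [FiniteDimensional ℝ V] {u : V → ℝ}
    {K : Set V} (hK : IsCompact K) (hu : ContinuousOn u K) {x₀ y₀ P Q : V} (hx₀ : x₀ ∈ K)
    (hy₀ : y₀ ∈ K) {T : V →L[ℝ] V} (hT : (T : V →ₗ[ℝ] V).IsSymmetric) {c τ : ℝ}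
    (htouch : TouchedAboveOn (separatedSum u (-u)) (WithLp.ofLp ⁻¹' K ×ˢ K)
      (WithLp.toLp 2 (x₀, y₀)) (WithLp.toLp 2 (P, -Q)) (doublingOp T c)) (hτ : 0 < τ) :
    ∃ z ∈ K, ∃ w ∈ K, ‖z - x₀‖ < τ ∧ ‖w - y₀‖ < τ ∧
      ∃ p q, ‖p - P‖ < τ ∧ ‖q - Q‖ < τ ∧ ∃ X Y : V →L[ℝ] V,
        (X : V →ₗ[ℝ] V).IsSymmetric ∧ (Y : V →ₗ[ℝ] V).IsSymmetric ∧
        TouchedAboveOn u K z p X ∧ TouchedAboveOn (-u) K w (-q) (-Y) ∧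
        DoublingIneq X Y T (c + τ) := by
  obtain ⟨z, hz, p, X, Y, hzx, hpP, hX, hY, htz, htw, hXY⟩ :=
    exists_touchedAboveOn_of_separatedSum hK hK hu hu.neg (isSymmetric_doublingOp hT c)
      ⟨hx₀, hy₀⟩ htouch hτ
  refine ⟨z.fst, hz.1, z.snd, hz.2, (WithLp.norm_fst_le V _).trans_lt hzx,
    (WithLp.norm_snd_le V _).trans_lt hzx, p.fst, -p.snd, (WithLp.norm_fst_le V _).trans_lt hpP,
    ?_, X, -Y, hX, fun v w => by simpa using hY v w, htz, by simpa only [neg_neg] using htw,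
    fun h k => ?_⟩
  · rw [← neg_sub_neg, neg_neg, norm_sub_rev]
    exact (WithLp.norm_snd_le V _).trans_lt hpP
  · have hhk := hXY h k
    rw [inner_doublingOp] at hhk
    change _ ≤ ⟪T (h - k), h - k⟫ + c * (⟪h, h⟫ + ⟪k, k⟫) + _ at hhk
    simp only [neg_apply, inner_neg_left, real_inner_self_eq_norm_sq] at hhk ⊢
    linarith

end Doubling

section Contact

variable {N : ℕ} {Ω : Set (EN N)} {nv : EN N → EN N} {ρ : EN N → ℝ}
  {F : EN N → EN N → Mat N → ℝ} {b : EN N → EN N} {α c τ : ℝ} {g u : EN N → ℝ}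

lemma IsC2DefiningFun.exists_forall_inner_nv_pos (hρ : IsC2DefiningFun Ω nv ρ) {x p : EN N}
    (h : x ∈ frontier Ω → 0 < ⟪p, gradient ρ x⟫) :
    ∃ δ > 0, ∀ y q, ‖y - x‖ < δ → ‖q - p‖ < δ → y ∈ frontier Ω → 0 < ⟪q, nv y⟫ := by
  obtain ⟨δ, hδ, H⟩ := Metric.eventually_nhds_iff.mp
    (eventually_mem_imp_inner_pos isClosed_frontier hρ.continuous_gradient h)
  refine ⟨δ, hδ, fun y q hy hq hyΩ => (hρ.inner_nv_pos_iff hyΩ q).mpr (H (y := (y, q)) ?_ hyΩ)⟩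
  rw [Prod.dist_eq, dist_eq_norm, dist_eq_norm]
  exact max_lt hy hq

-- The theorem on sums produces genuine second-order contacts near `(x₀, y₀)`, where the strict
-- Neumann inequalities persist, so that the equation holds there even on the boundary.
lemma exists_pdeOp_bounds_of_touchedAboveOn_separatedSum (hρ : IsC2DefiningFun Ω nv ρ)
    (hΩ : Bornology.IsBounded Ω) (hu : ContinuousOn u (closure Ω))
    (hsub : IsSubSol Ω F b α (fun _ _ => 0) g (BNeu nv) u)
    (hsup : IsSuperSol Ω F b α (fun _ _ => 0) g (BNeu nv) u) {x₀ y₀ P Q : EN N}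
    (hx₀ : x₀ ∈ closure Ω) (hy₀ : y₀ ∈ closure Ω) {T : EN N →L[ℝ] EN N}
    (hT : (T : EN N →ₗ[ℝ] EN N).IsSymmetric)
    (htouch : TouchedAboveOn (separatedSum u (-u)) (WithLp.ofLp ⁻¹' closure Ω ×ˢ closure Ω)
      (WithLp.toLp 2 (x₀, y₀)) (WithLp.toLp 2 (P, -Q)) (doublingOp T c))
    (hP : x₀ ∈ frontier Ω → 0 < ⟪P, gradient ρ x₀⟫)
    (hQ : y₀ ∈ frontier Ω → 0 < ⟪-Q, gradient ρ y₀⟫) (hτ : 0 < τ) :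
    ∃ z ∈ closure Ω, ∃ w ∈ closure Ω, ‖z - x₀‖ < τ ∧ ‖w - y₀‖ < τ ∧
      ∃ p q, ‖p - P‖ < τ ∧ ‖q - Q‖ < τ ∧ ∃ X Y : EN N →L[ℝ] EN N,
        (X : EN N →ₗ[ℝ] EN N).IsSymmetric ∧ (Y : EN N →ₗ[ℝ] EN N).IsSymmetric ∧
        (p ≠ 0 → g z ≤ pdeOp F b α z p (matOf X)) ∧ (q ≠ 0 → pdeOp F b α w q (matOf Y) ≤ g w) ∧
        DoublingIneq X Y T (c + τ) := by
  obtain ⟨δ, hδ, hPδ⟩ := hρ.exists_forall_inner_nv_pos hP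
  obtain ⟨δ', hδ', hQδ⟩ := hρ.exists_forall_inner_nv_pos hQ
  obtain ⟨z, hz, w, hw, hzx, hwy, p, q, hpP, hqQ, X, Y, hX, hY, htz, htw, hXY⟩ :=
    exists_doublingIneq_of_touchedAboveOn_separatedSum hΩ.isCompact_closure hu hx₀ hy₀ hT htouch
      (lt_min hτ (lt_min hδ hδ'))
  simp only [lt_min_iff] at hzx hwy hpP hqQ
  refine ⟨z, hz, w, hw, hzx.1, hwy.1, p, q, hpP.1, hqQ.1, X, Y, hX, hY, fun hp => ?_,
    fun hq => ?_, hXY.mono (by gcongr; exact min_le_left _ _)⟩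
  · exact hsub.le_of_touchedAboveOn hz hp hX htz (hPδ z p hzx.2.1 hpP.2.1)
  · refine hsup.le_of_touchedAboveOn_neg hw hq hY htw fun hwΩ => ?_
    rw [← neg_pos, ← inner_neg_left]
    refine hQδ w (-q) hwy.2.2 ?_ hwΩ
    rw [neg_sub_neg, norm_sub_rev]
    exact hqQ.2.2

end Contact

/-! ### The modulus of continuity -/

lemma IsC2DefiningFun.exists_corrector {N : ℕ} {Ω : Set (EN N)} {nv : EN N → EN N} {ρ : EN N → ℝ}
    (hρ : IsC2DefiningFun Ω nv ρ) (hΩ : Bornology.IsBounded Ω) (m : ℝ) {ε : ℝ} (hε : 0 < ε) :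
    ∃ η : EN N → ℝ, ContDiff ℝ 2 η ∧ (∀ x, |η x| ≤ ε) ∧
      ∀ x ∈ frontier Ω, ∀ y ∈ closure Ω, ∀ s, 0 ≤ s → s * ‖x - y‖ ^ 2 ≤ m →
        0 < ⟪s • (x - y) + gradient η x, gradient ρ x⟫ := by
  obtain ⟨κ, hκ⟩ := hρ.exists_barrier hΩ (m := m)
  obtain ⟨η, hη, hηε, hgrad⟩ := exists_contDiff_abs_le_gradient_eq hρ.contDiff κ hε
  refine ⟨η, hη, hηε, fun x hx y hy s hs hsm => ?_⟩
  rw [hgrad x (hρ.eq_zero_of_mem_frontier hx)]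
  exact hκ x hx y hy s hs hsm

section Modulus

variable {N : ℕ} {Ω : Set (EN N)} {nv : EN N → EN N} {ρ η : EN N → ℝ}
  {F : EN N → EN N → Mat N → ℝ} {b : EN N → EN N} {α a A C₁ C₂ θ ν m Mb Mg : ℝ}

lemma exists_forall_not_isMaxOn_doubled (hΩ : Bornology.IsBounded Ω)
    (hρ : IsC2DefiningFun Ω nv ρ) (hα : -1 < α) (hF2 : CondF2 Ω α a A F)
    (hF3 : HolderInSpace Ω α C₁ θ F) (hθ : 0 < θ) (hF4 : HolderInGradient Ω α C₂ ν F) (hν : 0 < ν)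
    (hb : ∀ x ∈ closure Ω, ‖b x‖ ≤ Mb) (hMb : 0 ≤ Mb) (hMg : 0 ≤ Mg) (hη : ContDiff ℝ 2 η)
    (hbar : ∀ x ∈ frontier Ω, ∀ y ∈ closure Ω, ∀ s, 0 ≤ s → s * ‖x - y‖ ^ 2 ≤ m →
      0 < ⟪s • (x - y) + gradient η x, gradient ρ x⟫) :
    ∃ P₀ r₁ : ℝ, 0 < r₁ ∧ ∀ {g u : EN N → ℝ} {x₀ y₀ : EN N} {L : ℝ},
      (∀ x ∈ closure Ω, |g x| ≤ Mg) → ContinuousOn u (closure Ω) →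
      IsSubSol Ω F b α (fun _ _ => 0) g (BNeu nv) u →
      IsSuperSol Ω F b α (fun _ _ => 0) g (BNeu nv) u →
      x₀ ∈ closure Ω → y₀ ∈ closure Ω → x₀ ≠ y₀ → 0 < L → ‖x₀ - y₀‖ ≤ r₁ →
      P₀ ≤ L * ‖x₀ - y₀‖ → L * ‖x₀ - y₀‖ ^ 2 ≤ m →
      ¬ IsMaxOn (doubled u η (2 * L * ‖x₀ - y₀‖ * √‖x₀ - y₀‖)) (closure Ω ×ˢ closure Ω)
        (x₀, y₀) := by
  obtain ⟨c, hc, htouch⟩ := exists_touchedAboveOn_smul_id hη hΩ.closure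
  obtain ⟨D, hD⟩ := hΩ.isCompact_closure.exists_bound_of_continuousOn
    (continuous_gradient_of_contDiff (hη.of_le one_le_two)).continuousOn
  obtain ⟨P₀, r₁, hr₁, hnot⟩ := exists_forall_not_doublingIneq hα hF2 hF3 hθ hF4 hν hb hMb hMg
    (add_nonneg hc zero_le_one) (D + 1)
  refine ⟨P₀, r₁, hr₁, fun {g u x₀ y₀ L} hg hu hsub hsup hx₀ hy₀ hne hL hr hP hLm hmax => ?_⟩
  have hbar' : y₀ ∈ frontier Ω → 0 < ⟪-(L • (x₀ - y₀) - gradient η y₀), gradient ρ y₀⟫ := by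
    intro hy
    rw [neg_sub, sub_eq_neg_add, ← smul_neg, neg_sub]
    exact hbar y₀ hy x₀ hx₀ L hL.le (by rwa [norm_sub_rev])
  obtain ⟨z, hz, w, hw, hzx, hwy, p, q, hpP, hqQ, X, Y, hX, hY, hpg, hqg, hXY⟩ :=
    exists_pdeOp_bounds_of_touchedAboveOn_separatedSum hρ hΩ hu hsub hsup hx₀ hy₀
      (isSymmetric_radialOp L (x₀ - y₀))
      (touchedAboveOn_separatedSum_of_isMaxOn_doubled hne hL.le hmax (htouch x₀ hx₀)
        (htouch y₀ hy₀))
      (fun hx => hbar x₀ hx y₀ hy₀ L hL.le hLm) hbar' (show 0 < min 1 (r₁ / 2) by positivity)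
  simp only [lt_min_iff] at hzx hwy hpP hqQ
  refine hnot hg hz hw hX hY hL (sub_ne_zero.mpr hne) hr hP ?_ ?_ ?_ hpg hqg
    (hXY.mono (by gcongr; exact min_le_left _ _))
  · calc ‖z - w‖ = ‖(z - x₀) - (w - y₀) + (x₀ - y₀)‖ := by congr 1; abel
      _ ≤ ‖z - x₀‖ + ‖w - y₀‖ + ‖x₀ - y₀‖ := norm_add_le_of_le (norm_sub_le _ _) le_rfl
      _ ≤ 2 * r₁ := by linarith [hzx.2, hwy.2]
  · calc ‖p - L • (x₀ - y₀)‖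
          = ‖gradient η x₀ + (p - (L • (x₀ - y₀) + gradient η x₀))‖ := by congr 1; abel
      _ ≤ D + 1 := norm_add_le_of_le (hD x₀ hx₀) hpP.1.le
  · calc ‖q - L • (x₀ - y₀)‖
          = ‖q - (L • (x₀ - y₀) - gradient η y₀) - gradient η y₀‖ := by congr 1; abel
      _ ≤ 1 + D := norm_sub_le_of_le hqQ.1.le (hD y₀ hy₀)
      _ = D + 1 := add_comm 1 D

-- With `M = 2 L r √r` and `M √r ≤ 2 m`, both `L r ≥ M² / (4 m)` and `r ≤ 4 m² / M²`.
lemma exists_forall_exists_curvature {r₁ : ℝ} (hm : 0 < m) (hr₁ : 0 < r₁) (P₀ : ℝ) :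
    ∃ M : ℝ, ∀ r > 0, M * √r ≤ 2 * m →
      ∃ L > 0, 2 * L * r * √r = M ∧ L * r ^ 2 ≤ m ∧ P₀ ≤ L * r ∧ r ≤ r₁ := by
  set S := 4 * m * |P₀| + 4 * m ^ 2 / r₁
  have hS : 0 < S := by positivity
  refine ⟨√S, fun r hr hM => ?_⟩
  have hS_pos : 0 < √S := Real.sqrt_pos.mpr hS
  have hS_sq : √S ^ 2 = S := Real.sq_sqrt hS.le
  obtain ⟨s, hs, rfl⟩ : ∃ s > 0, r = s ^ 2 :=
    ⟨√r, Real.sqrt_pos.mpr hr, (Real.sq_sqrt hr.le).symm⟩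
  rw [Real.sqrt_sq hs.le] at hM ⊢
  refine ⟨√S / (2 * s ^ 3), by positivity, by field_simp, ?_, ?_, ?_⟩
  · calc √S / (2 * s ^ 3) * (s ^ 2) ^ 2 = √S * s / 2 := by field_simp
      _ ≤ m := by linarith
  · calc P₀ ≤ |P₀| := le_abs_self P₀
      _ ≤ √S / (2 * s) := ?_
      _ = √S / (2 * s ^ 3) * s ^ 2 := by field_simp
    rw [le_div_iff₀ (by positivity)]
    refine le_of_mul_le_mul_right ?_ hS_pos
    calc |P₀| * (2 * s) * √S = 2 * |P₀| * (√S * s) := by ring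
      _ ≤ 2 * |P₀| * (2 * m) := by gcongr
      _ ≤ S := by
        have : 0 ≤ 4 * m ^ 2 / r₁ := by positivity
        linarith
      _ = √S * √S := by rw [← sq, hS_sq]
  · have hle : 4 * m ^ 2 / r₁ * s ^ 2 ≤ 4 * m ^ 2 := by
      calc 4 * m ^ 2 / r₁ * s ^ 2 ≤ S * s ^ 2 := by
            gcongr
            exact le_add_of_nonneg_left (by positivity)
        _ = (√S * s) ^ 2 := by rw [mul_pow, hS_sq]
        _ ≤ (2 * m) ^ 2 := by gcongr
        _ = 4 * m ^ 2 := by ring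
    rw [div_mul_eq_mul_div, div_le_iff₀ hr₁] at hle
    exact le_of_mul_le_mul_left hle (by positivity)

lemma exists_isMaxOn_doubled_of_lt {V : Type*} [NormedAddCommGroup V] {K : Set V}
    (hK : IsCompact K) {u η : V → ℝ} (hu : ContinuousOn u K) (hη : Continuous η) {ε M : ℝ}
    (hηε : ∀ x, |η x| ≤ ε) {x y : V} (hx : x ∈ K) (hy : y ∈ K)
    (h : 4 * ε + M * √‖x - y‖ < u x - u y) :
    ∃ x₀ ∈ K, ∃ y₀ ∈ K, x₀ ≠ y₀ ∧ IsMaxOn (doubled u η M) (K ×ˢ K) (x₀, y₀) ∧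
      M * √‖x₀ - y₀‖ ≤ u x₀ - u y₀ := by
  obtain ⟨⟨x₀, y₀⟩, ⟨hx₀, hy₀⟩, hmax⟩ :=
    (hK.prod hK).exists_isMaxOn ⟨(x, y), hx, hy⟩ (continuousOn_doubled hu hη M)
  have hlarge : 2 * ε < doubled u η M (x₀, y₀) := by
    refine lt_of_lt_of_le ?_ (isMaxOn_iff.mp hmax (x, y) ⟨hx, hy⟩)
    rw [doubled]
    linarith [le_of_abs_le (hηε x), le_of_abs_le (hηε y)]
  rw [doubled] at hlarge
  refine ⟨x₀, hx₀, y₀, hy₀, ?_, hmax, ?_⟩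
  · rintro rfl
    simp only [sub_self, norm_zero, Real.sqrt_zero, mul_zero] at hlarge
    linarith [neg_le_of_abs_le (hηε x₀)]
  · linarith [neg_le_of_abs_le (hηε x₀), neg_le_of_abs_le (hηε y₀)]

lemma exists_forall_sub_le_add_mul_sqrt (hΩ : Bornology.IsBounded Ω)
    (hρ : IsC2DefiningFun Ω nv ρ) (hα : -1 < α) (hF2 : CondF2 Ω α a A F)
    (hF3 : HolderInSpace Ω α C₁ θ F) (hθ : 0 < θ) (hF4 : HolderInGradient Ω α C₂ ν F) (hν : 0 < ν)
    (hb : ∀ x ∈ closure Ω, ‖b x‖ ≤ Mb) (hMb : 0 ≤ Mb) (hMg : 0 ≤ Mg) (hm : 0 < m) {ε : ℝ}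
    (hε : 0 < ε) :
    ∃ M : ℝ, ∀ {g u : EN N → ℝ}, (∀ x ∈ closure Ω, |g x| ≤ Mg) → (∀ x ∈ closure Ω, |u x| ≤ m) →
      ContinuousOn u (closure Ω) → IsSubSol Ω F b α (fun _ _ => 0) g (BNeu nv) u →
      IsSuperSol Ω F b α (fun _ _ => 0) g (BNeu nv) u →
      ∀ x ∈ closure Ω, ∀ y ∈ closure Ω, u x - u y ≤ ε + M * √‖x - y‖ := by
  obtain ⟨η, hη, hηε, hbar⟩ := hρ.exists_corrector hΩ m (show 0 < ε / 4 by positivity)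
  obtain ⟨P₀, r₁, hr₁, hnot⟩ := exists_forall_not_isMaxOn_doubled hΩ hρ hα hF2 hF3 hθ hF4 hν hb hMb
    hMg hη hbar
  obtain ⟨M, hM⟩ := exists_forall_exists_curvature hm hr₁ P₀
  refine ⟨M, fun {g u} hg hum huc hsub hsup x hx y hy => ?_⟩
  by_contra! hlt
  obtain ⟨x₀, hx₀, y₀, hy₀, hne, hmax, hMle⟩ := exists_isMaxOn_doubled_of_lt
    hΩ.isCompact_closure huc hη.continuous hηε hx hy (by rwa [mul_div_cancel₀ ε four_ne_zero])
  have hM2 : M * √‖x₀ - y₀‖ ≤ 2 * m := by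
    linarith [le_of_abs_le (hum x₀ hx₀), neg_le_of_abs_le (hum y₀ hy₀)]
  obtain ⟨L, hL, hLM, hLm, hP, hr⟩ := hM _ (norm_pos_iff.mpr (sub_ne_zero.mpr hne)) hM2
  rw [← hLM] at hmax
  exact hnot hg huc hsub hsup hx₀ hy₀ hne hL hr hP hLm hmax

end Modulus

/-! ### Compactness -/

lemma equicontinuousOn_of_sub_le_add_mul_sqrt {ι V : Type*} [SeminormedAddCommGroup V]
    {u : ι → V → ℝ} {K : Set V}
    (h : ∀ ε > 0, ∃ M : ℝ, ∀ i, ∀ x ∈ K, ∀ y ∈ K, u i x - u i y ≤ ε + M * √‖x - y‖) :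
    EquicontinuousOn u K := by
  intro x hx
  refine (Metric.uniformity_basis_dist.equicontinuousWithinAt_iff_right).mpr fun ε hε => ?_
  obtain ⟨M, hM⟩ := h (ε / 2) (half_pos hε)
  have hlim : Tendsto (fun y => ε / 2 + M * √‖x - y‖) (𝓝[K] x) (𝓝 (ε / 2)) := by
    have hcont : Continuous fun y => ε / 2 + M * √‖x - y‖ := by fun_prop
    simpa using (hcont.tendsto x).mono_left nhdsWithin_le_nhds
  filter_upwards [self_mem_nhdsWithin, hlim.eventually (gt_mem_nhds (half_lt_self hε))]
    with y hy hlt i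
  have hyx := hM i y hy x hx
  rw [norm_sub_rev] at hyx
  exact abs_sub_lt_iff.mpr ⟨(hM i x hx y hy).trans_lt hlt, hyx.trans_lt hlt⟩

lemma exists_subseq_tendstoUniformlyOn_of_equicontinuousOn {X β : Type*} [TopologicalSpace X]
    [MetricSpace β] {K : Set X} (hK : IsCompact K) {u : ℕ → X → β} {s : Set β} (hs : IsCompact s)
    (hus : ∀ n, ∀ x ∈ K, u n x ∈ s) (hu : EquicontinuousOn u K) :
    ∃ ψ : ℕ → ℕ, StrictMono ψ ∧ ∃ w : X → β, ContinuousOn w K ∧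
      TendstoUniformlyOn (fun k => u (ψ k)) w atTop K := by
  have : CompactSpace K := isCompact_iff_compactSpace.mp hK
  let f : ℕ → BoundedContinuousFunction K β := fun n =>
    BoundedContinuousFunction.mkOfCompact ⟨K.domRestrict (u n), (hu.continuousOn n).domRestrict⟩
  have hcomp : IsCompact (closure (range f)) := by
    refine BoundedContinuousFunction.arzela_ascoli s hs (range f) ?_ ?_
    · rintro _ x ⟨n, rfl⟩
      exact hus n x x.2
    · have hf := ((equicontinuous_restrict_iff u).mpr hu).comp (rangeSplitting f)
      convert hf using 1
      funext h
      exact congrArg DFunLike.coe (apply_rangeSplitting f h).symm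
  obtain ⟨w, -, ψ, hψ, hw⟩ := hcomp.tendsto_subseq fun n => subset_closure (mem_range_self n)
  have hext : K.domRestrict (Function.extend Subtype.val w (u 0)) = w :=
    funext fun x => Subtype.val_injective.extend_apply _ _ x
  refine ⟨ψ, hψ, Function.extend Subtype.val w (u 0), ?_, ?_⟩
  · rw [continuousOn_iff_continuous_domRestrict, hext]
    exact w.continuous
  · rw [tendstoUniformlyOn_iff_restrict, hext]
    exact BoundedContinuousFunction.tendsto_iff_tendstoUniformly.mp hw

theorem stmt2_general {N : ℕ} {Ω : Set (EN N)} {nv : EN N → EN N} {ρ : EN N → ℝ}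
    (hΩ : Bornology.IsBounded Ω) (hρ : IsC2DefiningFun Ω nv ρ) {α a A C₁ θ C₂ ν : ℝ}
    (hα : -1 < α) {F : EN N → EN N → Mat N → ℝ} (hF2 : CondF2 Ω α a A F)
    (hF3 : HolderInSpace Ω α C₁ θ F) (hθ : 0 < θ) (hF4 : HolderInGradient Ω α C₂ ν F) (hν : 0 < ν)
    {b : EN N → EN N} (hb : ∃ M, ∀ x ∈ closure Ω, ‖b x‖ ≤ M) {g u : ℕ → EN N → ℝ}
    (hgb : ∃ M, ∀ n, ∀ x ∈ closure Ω, |g n x| ≤ M) (hub : ∃ M, ∀ n, ∀ x ∈ closure Ω, |u n x| ≤ M)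
    (huc : ∀ n, ContinuousOn (u n) (closure Ω))
    (hsol : ∀ n, IsSubSol Ω F b α (fun _ _ => 0) (g n) (BNeu nv) (u n) ∧
      IsSuperSol Ω F b α (fun _ _ => 0) (g n) (BNeu nv) (u n)) :
    ∃ ψ : ℕ → ℕ, StrictMono ψ ∧ ∃ w : EN N → ℝ, ContinuousOn w (closure Ω) ∧
      TendstoUniformlyOn (fun k => u (ψ k)) w atTop (closure Ω) := by
  obtain ⟨Mb, hMb⟩ := hb
  obtain ⟨Mg, hMg⟩ := hgb
  obtain ⟨Mu, hMu⟩ := hub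
  refine exists_subseq_tendstoUniformlyOn_of_equicontinuousOn hΩ.isCompact_closure
    (isCompact_Icc (a := -Mu) (b := Mu)) (fun n x hx => abs_le.mp (hMu n x hx))
    (equicontinuousOn_of_sub_le_add_mul_sqrt fun ε hε => ?_)
  obtain ⟨M, hM⟩ := exists_forall_sub_le_add_mul_sqrt hΩ hρ hα hF2 hF3 hθ hF4 hν
    (fun x hx => (hMb x hx).trans (le_max_right 0 Mb)) (le_max_left 0 Mb) (le_max_left 0 Mg)
    (one_pos.trans_le (le_max_left 1 Mu)) hε
  exact ⟨M, fun n => hM (fun x hx => (hMg n x hx).trans (le_max_right 0 Mg))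
    (fun x hx => (hMu n x hx).trans (le_max_right 1 Mu)) (huc n) (hsol n).1 (hsol n).2⟩

/-- Corollary `corcomp`: compactness of uniformly bounded sequences of
solutions of Neumann problems with uniformly bounded right-hand sides. -/
theorem stmt2 {N : ℕ} (Ω : Set (EN N)) (nv : EN N → EN N) (hΩ : IsC2Domain Ω nv)
    (α a A C₁ θ C₂ ν : ℝ) (hα : -1 < α)
    (F : EN N → EN N → Mat N → ℝ)
    (hF2 : CondF2 Ω α a A F) (hF3 : CondF3 Ω α C₁ θ F) (hF4 : CondF4 Ω α C₂ ν F)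
    (b : EN N → EN N) (hbc : ContinuousOn b Ω) (hb : ∃ M, ∀ x ∈ closure Ω, ‖b x‖ ≤ M)
    (g : ℕ → EN N → ℝ) (u : ℕ → EN N → ℝ)
    (hgc : ∀ n, ContinuousOn (g n) (closure Ω))
    (hgb : ∃ M, ∀ n, ∀ x ∈ closure Ω, |g n x| ≤ M)
    (hub : ∃ M, ∀ n, ∀ x ∈ closure Ω, |u n x| ≤ M)
    (huc : ∀ n, ContinuousOn (u n) (closure Ω))
    (hsol : ∀ n, IsSubSol Ω F b α (fun _ _ => 0) (g n) (BNeu nv) (u n) ∧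
      IsSuperSol Ω F b α (fun _ _ => 0) (g n) (BNeu nv) (u n)) :
    ∃ ψ : ℕ → ℕ, StrictMono ψ ∧ ∃ w : EN N → ℝ, ContinuousOn w (closure Ω) ∧
      TendstoUniformlyOn (fun k => u (ψ k)) w atTop (closure Ω) := by
  obtain ⟨-, -, hbd, ρ, hρ⟩ := hΩ
  exact stmt2_general hbd hρ hα hF2 hF3.2.2 (one_half_pos.trans hF3.2.1.1) hF4.2.2
    (one_half_pos.trans hF4.2.1.1) hb hgb hub huc hsol
end
end

section
/- Let Ω be a C¹ bounded domain satisfying the interior sphere condition, let F satisfy (F1), (F2), (F3), let b and c be bounded and continuous on Ω, and let f : ∂Ω × ℝ → ℝ satisfy f(x,0) ≤ 0 for all x ∈ ∂Ω. If v ∈ LSC(Ω̄) is a non-negative viscosity supersolution of F(x,Dv,D²v) + b(x)·Dv|Dv|^α + c(x)|v|^α v = 0 in Ω with boundary condition f(x,v) + ⟨Dv, n(x)⟩ = 0 on ∂Ω, then either v ≡ 0 in Ω̄ or v > 0 in Ω̄. -/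
/-!
Hopf's barrier argument, with barrier the Gaussian `m * exp (-k * ‖x - y‖ ^ 2)`. At distance `r`
from `y` its gradient `p` satisfies `F(x, p, D²) ≥ ‖p‖ ^ (α + 1) * (2 a k r - A N / r)`, whereas the
lower order terms are `O(‖p‖ ^ (α + 1))`; hence for large `k` it is a strict subsolution away
from `y`. Suppose `v` vanishes at a point `x₀` on the sphere of a ball in which it is positive, and
let `y` be the centre of the ball of half the radius, internally tangent at `x₀`. A minimum point of
`v` minus the barrier can then only be `x₀`: it is at most as far from `y` as `x₀` because `v ≥ 0`,
not close to `y` because `v ≥ m` there for small `m`, and not elsewhere because `v` is a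
supersolution.

If `x₀ ∈ Ω`, this contradicts the equation, so balls of positivity never touch an interior zero and
connectedness gives the alternative in `Ω`. If `x₀ ∈ ∂Ω`, it contradicts the boundary condition,
the gradient of the barrier pointing into the tangent ball.
-/

open Filter Set Metric
open scoped RealInnerProductSpace Topology NNReal

noncomputable section

/-! ### Balls, segments and semicontinuity -/

lemma closedBall_midpoint_subset_insert_ball {E : Type*} [NormedAddCommGroup E] [NormedSpace ℝ E]
    [StrictConvexSpace ℝ E] (x y : E) :
    closedBall (midpoint ℝ x y) (dist x (midpoint ℝ x y)) ⊆ insert x (ball y (dist x y)) := by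
  intro z hz
  by_contra hzx
  obtain ⟨hne, hfar⟩ : z ≠ x ∧ dist x y ≤ dist z y := by simpa using hzx
  have hx : dist x (midpoint ℝ x y) = dist x y / 2 := by
    rw [dist_left_midpoint, Real.norm_two]; ring
  have hy : dist (midpoint ℝ x y) y = dist x y / 2 := by
    rw [dist_midpoint_right, Real.norm_two]; ring
  rw [mem_closedBall, hx] at hz
  have htri := dist_triangle z (midpoint ℝ x y) y
  have heq : midpoint ℝ x y = midpoint ℝ z y :=
    eq_midpoint_of_dist_eq_half (by linarith) (by linarith)
  exact hne (sub_eq_zero.1 (by simpa [midpoint_eq_midpoint_iff_vsub_eq_vsub] using heq)).symm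

lemma inner_sub_center_pos_of_le_on_ball {E : Type*} [NormedAddCommGroup E] [InnerProductSpace ℝ E]
    [CompleteSpace E] {ρ : E → ℝ} {g x y : E} (hρ : HasGradientAt ρ g x) (hg : g ≠ 0) (hxy : x ≠ y)
    (hle : ∀ z ∈ ball y (dist x y), ρ z ≤ ρ x) : 0 < ⟪x - y, g⟫ := by
  have hr : 0 < dist x y := dist_pos.2 hxy
  have hg' : 0 < ‖g‖ := norm_pos_iff.2 hg
  -- the point of the ball half way from the centre to the sphere in the direction of the gradient
  set w := y + (dist x y / 2 / ‖g‖) • g with hw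
  have hwball : w ∈ ball y (dist x y) := by
    rw [mem_ball, hw, dist_self_add_left, norm_smul, Real.norm_of_nonneg (by positivity),
      div_mul_cancel₀ _ hg'.ne']
    exact half_lt_self hr
  have hxcl : x ∈ closure (ball y (dist x y)) := by
    rw [closure_ball y hr.ne']
    exact mem_closedBall.2 le_rfl
  have hcone : w - x ∈ posTangentConeAt (ball y (dist x y)) x := by
    apply sub_mem_posTangentConeAt_of_openSegment_subset
    rw [← (isOpen_ball (x := y) (ε := dist x y)).interior_eq] at hwball ⊢
    exact (convex_ball y _).openSegment_closure_interior_subset_interior hxcl hwball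
  have hmax : IsLocalMaxOn ρ (ball y (dist x y)) x :=
    eventually_nhdsWithin_of_forall hle
  have hnonpos : ⟪g, w - x⟫ ≤ 0 := by
    simpa using hmax.hasFDerivWithinAt_nonpos hρ.hasFDerivAt.hasFDerivWithinAt hcone
  have hexpand : ⟪g, w - x⟫ = dist x y / 2 * ‖g‖ - ⟪x - y, g⟫ := by
    have hwx : w - x = (dist x y / 2 / ‖g‖) • g - (x - y) := by rw [hw]; abel
    rw [hwx, inner_sub_right, inner_smul_right, real_inner_self_eq_norm_sq, real_inner_comm g]
    field_simp
  have : 0 < dist x y / 2 * ‖g‖ := by positivity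
  linarith

lemma subset_or_disjoint_of_forall_ball_subset {X : Type*} [MetricSpace X] [ProperSpace X]
    {Ω P : Set X} (hΩ : IsOpen Ω) (hconn : IsPreconnected Ω) (hP : IsOpen P)
    (hball : ∀ x ∈ Ω, ∀ y, x ≠ y → ball y (dist x y) ⊆ Ω ∩ P → x ∈ P) :
    Ω ⊆ P ∨ Disjoint Ω P := by
  rw [or_iff_not_imp_right, Set.not_disjoint_iff_nonempty_inter]
  refine fun hne => hconn.subset_of_closure_inter_subset hP hne ?_
  rintro z ⟨hzcl, hzΩ⟩
  by_contra hzP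
  obtain ⟨ε, hε, hεΩ⟩ := Metric.isOpen_iff.1 hΩ z hzΩ
  obtain ⟨y, hyP, hzy⟩ := Metric.mem_closure_iff.1 hzcl (ε / 2) (half_pos hε)
  have hsub : closedBall y (dist z y) ⊆ Ω := fun p hp => hεΩ <| by
    have := dist_triangle_right p z y
    rw [mem_closedBall] at hp
    rw [mem_ball]
    linarith
  -- the point outside `P` nearest to `y` lies on the sphere of a ball contained in `P`
  obtain ⟨x, ⟨hxball, hxP⟩, hnearest⟩ :=
    ((isCompact_closedBall y (dist z y)).inter_right hP.isClosed_compl).exists_isMinOn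
      ⟨z, mem_closedBall.2 le_rfl, hzP⟩ (continuous_id.dist continuous_const).continuousOn
  have hinner : ball y (dist x y) ⊆ closedBall y (dist z y) :=
    (ball_subset_ball hxball).trans ball_subset_closedBall
  refine hxP (hball x (hsub hxball) y (fun h => hxP (h ▸ hyP)) fun p hp => ⟨hsub (hinner hp), ?_⟩)
  by_contra hpP
  exact (mem_ball.1 hp).not_ge (hnearest ⟨hinner hp, hpP⟩)

lemma forall_closure_le_of_lowerSemicontinuousOn {X β : Type*} [TopologicalSpace X]
    [LinearOrder β] {v : X → β} {s : Set X} {l : β} (hv : LowerSemicontinuousOn v (closure s))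
    (hle : ∀ x ∈ s, v x ≤ l) : ∀ x ∈ closure s, v x ≤ l := by
  intro x hx
  by_contra! hlt
  have hev := (hv x hx l hlt).filter_mono (nhdsWithin_mono x subset_closure)
  have : (𝓝[s] x).NeBot := mem_closure_iff_nhdsWithin_neBot.1 hx
  obtain ⟨z, hz, hzs⟩ := (hev.and self_mem_nhdsWithin).exists
  exact (hle z hzs).not_gt hz

lemma exists_pos_forall_le_of_isCompact {X : Type*} [TopologicalSpace X] {v : X → ℝ} {K : Set X}
    (hK : IsCompact K) (hv : LowerSemicontinuousOn v K) (hpos : ∀ x ∈ K, 0 < v x) :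
    ∃ m > 0, ∀ x ∈ K, m ≤ v x := by
  rcases K.eq_empty_or_nonempty with rfl | hne
  · exact ⟨1, one_pos, by simp⟩
  · obtain ⟨z, hz, hmin⟩ := hv.exists_isMinOn hne hK
    exact ⟨v z, hpos z hz, hmin⟩

/-! ### The Gaussian barrier -/

section HopfBarrier

variable {E : Type*} [NormedAddCommGroup E]

/-- Hopf's barrier for balls centred at `y`. The customary additive constant, which makes it vanish
on a given sphere, is left out: it does not matter for touching from below. -/
def hopfBarrier (y : E) (k m : ℝ) (x : E) : ℝ :=
  m * Real.exp (-k * ‖x - y‖ ^ 2)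

variable {y : E} {k m : ℝ}

lemma hopfBarrier_pos (hm : 0 < m) (x : E) : 0 < hopfBarrier y k m x :=
  mul_pos hm (Real.exp_pos _)

lemma hopfBarrier_le (hk : 0 ≤ k) (hm : 0 ≤ m) (x : E) : hopfBarrier y k m x ≤ m :=
  mul_le_of_le_one_right hm <| Real.exp_le_one_iff.2 <| by
    rw [neg_mul]; exact neg_nonpos.2 (by positivity)

lemma hopfBarrier_le_hopfBarrier_iff (hk : 0 < k) (hm : 0 < m) {x z : E} :
    hopfBarrier y k m x ≤ hopfBarrier y k m z ↔ ‖z - y‖ ≤ ‖x - y‖ := by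
  rw [hopfBarrier, hopfBarrier, mul_le_mul_iff_right₀ hm, Real.exp_le_exp, neg_mul, neg_mul,
    neg_le_neg_iff, mul_le_mul_iff_right₀ hk, sq_le_sq₀ (norm_nonneg _) (norm_nonneg _)]

lemma continuous_hopfBarrier (y : E) (k m : ℝ) : Continuous (hopfBarrier y k m) := by
  unfold hopfBarrier
  fun_prop

lemma exists_isLocalMinOn_sub_hopfBarrier [ProperSpace E] {S : Set E} {v : E → ℝ} {x₀ : E} {δ : ℝ}
    (hS : IsClosed S) (hv : LowerSemicontinuousOn v S) (hv0 : ∀ x ∈ S, 0 ≤ v x)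
    (hx₀ : x₀ ∈ S) (hvx₀ : v x₀ = 0) (hk : 0 < k) (hm : 0 < m)
    (hmv : ∀ x ∈ S, ‖x - y‖ ≤ δ → m ≤ v x) :
    ∃ z ∈ S, δ < ‖z - y‖ ∧ ‖z - y‖ ≤ ‖x₀ - y‖ ∧ v z ≤ hopfBarrier y k m z ∧
      IsLocalMinOn (fun x => v x - hopfBarrier y k m x) S z := by
  have hcompact : IsCompact (S ∩ closedBall y (‖x₀ - y‖ + 1)) :=
    (isCompact_closedBall _ _).inter_left hS
  have hlsc : LowerSemicontinuousOn (fun x => v x - hopfBarrier y k m x) S := by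
    simpa [sub_eq_add_neg] using
      hv.add ((continuous_hopfBarrier y k m).neg.lowerSemicontinuous.lowerSemicontinuousOn S)
  have hx₀mem : x₀ ∈ S ∩ closedBall y (‖x₀ - y‖ + 1) :=
    ⟨hx₀, by simp [dist_eq_norm]⟩
  obtain ⟨z, ⟨hzS, -⟩, hmin⟩ :=
    (hlsc.mono inter_subset_left).exists_isMinOn ⟨x₀, hx₀mem⟩ hcompact
  have hle : v z - hopfBarrier y k m z ≤ 0 - hopfBarrier y k m x₀ := hvx₀ ▸ hmin hx₀mem
  have hx₀pos : 0 < hopfBarrier y k m x₀ := hopfBarrier_pos hm x₀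
  have hnear : ‖z - y‖ ≤ ‖x₀ - y‖ :=
    (hopfBarrier_le_hopfBarrier_iff hk hm).1 (by linarith [hv0 z hzS])
  refine ⟨z, hzS, ?_, hnear, by linarith, ?_⟩
  · by_contra! hδ
    linarith [hmv z hzS hδ, hopfBarrier_le (y := y) hk.le hm.le z]
  · have hnhds : closedBall y (‖x₀ - y‖ + 1) ∈ 𝓝 z :=
      closedBall_mem_nhds_of_mem (by rw [mem_ball, dist_eq_norm]; linarith)
    exact Filter.mem_of_superset (inter_mem_nhdsWithin S hnhds) hmin

variable [InnerProductSpace ℝ E]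

lemma contDiff_hopfBarrier (y : E) (k m : ℝ) {n : WithTop ℕ∞} : ContDiff ℝ n (hopfBarrier y k m) :=
  contDiff_const.mul (contDiff_const.mul ((contDiff_id.sub contDiff_const).norm_sq ℝ)).exp

variable [CompleteSpace E]

lemma hasGradientAt_hopfBarrier (y : E) (k m : ℝ) (x : E) :
    HasGradientAt (hopfBarrier y k m) (-(2 * k * hopfBarrier y k m x) • (x - y)) x := by
  rw [hasGradientAt_iff_hasFDerivAt]
  refine ((((hasFDerivAt_id x).sub_const y).norm_sq.const_mul (-k)).exp.const_mul m).congr_fderiv ?_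
  ext h
  simp [hopfBarrier]
  ring

lemma gradient_hopfBarrier (y : E) (k m : ℝ) :
    gradient (hopfBarrier y k m) = fun x => -(2 * k * hopfBarrier y k m x) • (x - y) :=
  gradient_eq (hasGradientAt_hopfBarrier y k m)

lemma norm_gradient_hopfBarrier (hk : 0 ≤ k) (hm : 0 ≤ m) (x : E) :
    ‖gradient (hopfBarrier y k m) x‖ = 2 * k * ‖x - y‖ * hopfBarrier y k m x := by
  have : 0 ≤ hopfBarrier y k m x := mul_nonneg hm (Real.exp_nonneg _)
  rw [gradient_hopfBarrier, norm_smul, norm_neg, Real.norm_of_nonneg (by positivity)]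
  ring

lemma gradient_hopfBarrier_ne_zero (hk : k ≠ 0) (hm : m ≠ 0) {x : E} (hxy : x ≠ y) :
    gradient (hopfBarrier y k m) x ≠ 0 := by
  have : hopfBarrier y k m x ≠ 0 := mul_ne_zero hm (Real.exp_ne_zero _)
  rw [gradient_hopfBarrier]
  exact smul_ne_zero (neg_ne_zero.2 (by positivity)) (sub_ne_zero.2 hxy)

lemma hasFDerivAt_gradient_hopfBarrier (y : E) (k m : ℝ) (x : E) :
    HasFDerivAt (gradient (hopfBarrier y k m))
      (-(2 * k * hopfBarrier y k m x) • ContinuousLinearMap.id ℝ E +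
        (4 * k ^ 2 * hopfBarrier y k m x) • (innerSL ℝ (x - y)).smulRight (x - y)) x := by
  rw [gradient_hopfBarrier]
  have hfactor := ((hasGradientAt_hopfBarrier y k m x).hasFDerivAt.const_mul (2 * k)).neg
  refine (hfactor.smul ((hasFDerivAt_id x).sub_const y)).congr_fderiv ?_
  ext1 h
  simp only [add_apply, smul_apply, neg_apply, Pi.neg_apply, ContinuousLinearMap.smulRight_apply,
    InnerProductSpace.toDual_apply_apply, inner_smul_left, innerSL_apply_apply, smul_eq_mul,
    conj_trivial, ContinuousLinearMap.id_apply, id_eq]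
  module

end HopfBarrier

lemma hess_apply_of_hasFDerivAt_gradient {N : ℕ} {φ : EN N → ℝ} {x : EN N} {L : EN N →L[ℝ] EN N}
    (h : HasFDerivAt (gradient φ) L x) (i j : Fin N) :
    hess φ x i j = L (EuclideanSpace.single i 1) j := by
  have hfderiv : fderiv ℝ φ = fun z => innerSL ℝ (gradient φ z) :=
    funext fun _ => toDual_gradient.symm
  have hfderiv₂ : HasFDerivAt (fderiv ℝ φ) ((innerSL ℝ).comp L) x :=
    hfderiv ▸ (innerSL ℝ).hasFDerivAt.comp x h
  simp [hess, iteratedFDeriv_two_apply, hfderiv₂.fderiv, EuclideanSpace.inner_single_right]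

lemma hess_hopfBarrier {N : ℕ} (y : EN N) (k m : ℝ) (x : EN N) :
    hess (hopfBarrier y k m) x =
      (4 * k ^ 2 * hopfBarrier y k m x) • Matrix.vecMulVec (x - y) (x - y) -
        (2 * k * hopfBarrier y k m x) • (1 : Mat N) := by
  ext i j
  rw [hess_apply_of_hasFDerivAt_gradient (hasFDerivAt_gradient_hopfBarrier y k m x)]
  simp [Matrix.vecMulVec_apply, Matrix.one_apply, EuclideanSpace.inner_single_right, eq_comm]
  ring

/-! ### The barrier as a strict subsolution -/

section StrictSubsolution

variable {N : ℕ} {Ω : Set (EN N)} {α a A : ℝ} {F : EN N → EN N → Mat N → ℝ}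

/-- One-sided uniform ellipticity: `F(x, p, ·)` dominates `‖p‖ ^ α` times Pucci's minimal operator
with constants `a ≤ A`. The latter is encoded by its values `a tr P - A tr Q` on all differences
`P - Q` of positive semidefinite matrices, which avoids the positive and negative parts. -/
def DominatesPucci (Ω : Set (EN N)) (α a A : ℝ) (F : EN N → EN N → Mat N → ℝ) : Prop :=
  0 < a ∧ a ≤ A ∧ ∀ x ∈ closure Ω, ∀ p : EN N, p ≠ 0 → ∀ P Q : Mat N, P.PosSemidef →
    Q.PosSemidef → ‖p‖ ^ α * (a * P.trace - A * Q.trace) ≤ F x p (P - Q)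

lemma CondF2.dominatesPucci (hF2 : CondF2 Ω α a A F) (hF1 : CondF1 Ω α F) :
    DominatesPucci Ω α a A F := by
  obtain ⟨ha, haA, hell⟩ := hF2
  refine ⟨ha, haA, fun x hx p hp P Q hP hQ => ?_⟩
  have hzero : F x p 0 = 0 := by
    simpa using hF1 x hx 1 one_ne_zero 0 le_rfl p hp 0 Matrix.isSymm_zero
  have hsymm : (-Q).IsSymm :=
    Matrix.IsSymm.neg (Matrix.isHermitian_iff_isSymm.1 hQ.isHermitian)
  have hlower := (hell x hx p hp (-Q) P hsymm hP).1
  have hupper := (hell x hx p hp (-Q) Q hsymm hQ).2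
  rw [neg_add_cancel, hzero] at hupper
  rw [neg_add_eq_sub] at hlower
  linarith

lemma DominatesPucci.le_apply_hess_hopfBarrier (hF : DominatesPucci Ω α a A F) {x y : EN N}
    (hx : x ∈ closure Ω) (hxy : x ≠ y) {k m : ℝ} (hk : 0 < k) (hm : 0 < m) :
    ‖gradient (hopfBarrier y k m) x‖ ^ (α + 1) * (2 * a * k * ‖x - y‖ - A * N / ‖x - y‖) ≤
      F x (gradient (hopfBarrier y k m) x) (hess (hopfBarrier y k m) x) := by
  have hr : 0 < ‖x - y‖ := norm_pos_iff.2 (sub_ne_zero.2 hxy)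
  have hE : 0 < hopfBarrier y k m x := hopfBarrier_pos hm x
  have hnorm := norm_gradient_hopfBarrier (y := y) hk.le hm.le x
  have hp : gradient (hopfBarrier y k m) x ≠ 0 := gradient_hopfBarrier_ne_zero hk.ne' hm.ne' hxy
  have hP : ((4 * k ^ 2 * hopfBarrier y k m x) •
      Matrix.vecMulVec (x - y).ofLp (x - y).ofLp).PosSemidef :=
    (Matrix.posSemidef_vecMulVec_self_star (x - y).ofLp).smul (by positivity)
  have hQ : ((2 * k * hopfBarrier y k m x) • (1 : Mat N)).PosSemidef :=
    Matrix.PosSemidef.one.smul (by positivity)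
  have hdot : (x - y).ofLp ⬝ᵥ (x - y).ofLp = ‖x - y‖ ^ 2 := by
    rw [EuclideanSpace.real_norm_sq_eq, dotProduct]
    simp only [sq]
  rw [hess_hopfBarrier]
  refine le_of_eq_of_le ?_ (hF.2.2 x hx _ hp _ _ hP hQ)
  rw [Real.rpow_add_one (norm_ne_zero_iff.2 hp), mul_assoc, Matrix.trace_smul,
    Matrix.trace_vecMulVec, hdot, Matrix.trace_smul, Matrix.trace_one, Fintype.card_fin,
    smul_eq_mul, smul_eq_mul]
  congr 1
  rw [hnorm]
  field_simp
  ring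

lemma neg_mul_norm_rpow_le_inner_mul {E : Type*} [NormedAddCommGroup E] [InnerProductSpace ℝ E]
    {b p : E} {M α : ℝ} (hb : ‖b‖ ≤ M) (hp : p ≠ 0) :
    -M * ‖p‖ ^ (α + 1) ≤ ⟪b, p⟫ * ‖p‖ ^ α := by
  have hinner : -M * ‖p‖ ≤ ⟪b, p⟫ := by
    have := neg_le_of_abs_le (abs_real_inner_le_norm b p)
    have := mul_le_mul_of_nonneg_right hb (norm_nonneg p)
    linarith
  rw [Real.rpow_add_one (norm_ne_zero_iff.2 hp), mul_comm (_ ^ _), ← mul_assoc]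
  gcongr

lemma neg_mul_rpow_le_mul_abs_rpow_mul {c C s u α : ℝ} (hα : -1 < α) (hC : 0 ≤ C) (hc : -C ≤ c)
    (hu : 0 ≤ u) (hus : u ≤ s) : -C * s ^ (α + 1) ≤ c * |u| ^ α * u := by
  have hpow : |u| ^ α * u = u ^ (α + 1) := by
    rw [abs_of_nonneg hu, Real.rpow_add_one' hu (by linarith)]
  calc -C * s ^ (α + 1) ≤ -C * u ^ (α + 1) :=
        mul_le_mul_of_nonpos_left (Real.rpow_le_rpow hu hus (by linarith)) (neg_nonpos.2 hC)
    _ ≤ c * u ^ (α + 1) := by gcongr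
    _ = c * |u| ^ α * u := by rw [mul_assoc, hpow]

lemma DominatesPucci.eventually_hopfBarrier_strict (hF : DominatesPucci Ω α a A F) {δ : ℝ}
    (hδ : 0 < δ) (M C : ℝ) :
    ∀ᶠ k in atTop, ∀ m > 0, ∀ y, ∀ x ∈ closure Ω, δ ≤ ‖x - y‖ → ∀ b : EN N, ‖b‖ ≤ M →
      hopfBarrier y k m x ≤ ‖gradient (hopfBarrier y k m) x‖ ∧
      C * ‖gradient (hopfBarrier y k m) x‖ ^ (α + 1) <
        F x (gradient (hopfBarrier y k m) x) (hess (hopfBarrier y k m) x) +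
          ⟪b, gradient (hopfBarrier y k m) x⟫ * ‖gradient (hopfBarrier y k m) x‖ ^ α := by
  have ha := hF.1
  have hA : 0 ≤ A := ha.le.trans hF.2.1
  have hsteep := (tendsto_id.atTop_mul_const (show 0 < 2 * δ by positivity)).eventually_ge_atTop 1
  have hconvex := (tendsto_id.atTop_mul_const
    (show 0 < 2 * a * δ by positivity)).eventually_gt_atTop (A * N / δ + M + C)
  filter_upwards [eventually_gt_atTop 0, hsteep, hconvex] with k hk hkδ hkaδ m hm y x hx hr b hb
  have hr0 : 0 < ‖x - y‖ := hδ.trans_le hr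
  have hE : 0 < hopfBarrier y k m x := hopfBarrier_pos hm x
  have hnorm := norm_gradient_hopfBarrier (y := y) hk.le hm.le x
  have hp : 0 < ‖gradient (hopfBarrier y k m) x‖ := by rw [hnorm]; positivity
  have hkr : k * (2 * δ) ≤ 2 * k * ‖x - y‖ := by
    linarith [mul_le_mul_of_nonneg_left hr hk.le]
  have hsecond := hF.le_apply_hess_hopfBarrier hx (sub_ne_zero.1 (norm_pos_iff.1 hr0)) hk hm
  have hfirst := neg_mul_norm_rpow_le_inner_mul (α := α) hb (norm_pos_iff.1 hp)
  have hdom : M + C < 2 * a * k * ‖x - y‖ - A * N / ‖x - y‖ := by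
    have : A * N / ‖x - y‖ ≤ A * N / δ := by gcongr
    have := mul_le_mul_of_nonneg_left hkr ha.le
    simp only [id_eq] at hkaδ
    linarith
  refine ⟨?_, ?_⟩
  · rw [hnorm]
    exact le_mul_of_one_le_left hE.le (hkδ.trans hkr)
  · linarith [mul_lt_mul_of_pos_left hdom (Real.rpow_pos_of_pos hp (α + 1))]

end StrictSubsolution

/-! ### Touching a zero from below -/

/-- `φ` is a test function touching `v` from below at `x₀` relative to `S`, up to an additive
constant, with the nonzero gradient required of test functions for singular or degenerate
operators. -/
structure IsTestFunBelow {N : ℕ} (S : Set (EN N)) (v φ : EN N → ℝ) (x₀ : EN N) : Prop where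
  contDiff : ContDiff ℝ 2 φ
  isLocalMinOn : IsLocalMinOn (fun x => v x - φ x) S x₀
  gradient_ne_zero : gradient φ x₀ ≠ 0

/-- The interior sphere condition, with the outward radius of the interior ball at `x` making an
acute angle with the direction `ν x`. For an exterior normal it is (Ω1); in general `⟪Dv, ν⟫` is
an oblique derivative. -/
def ObliqueInteriorSphereCond {N : ℕ} (Ω : Set (EN N)) (ν : EN N → EN N) : Prop :=
  ∀ x ∈ frontier Ω, ∃ y, 0 < ⟪x - y, ν x⟫ ∧ ball y (dist x y) ⊆ Ω

lemma IsC1Domain.obliqueInteriorSphereCond {N : ℕ} {Ω : Set (EN N)} {nv : EN N → EN N}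
    (hΩ : IsC1Domain Ω nv) (hsp : InteriorSphereCond Ω) : ObliqueInteriorSphereCond Ω nv := by
  obtain ⟨-, -, -, ρ, hρ, hneg, hzero, hnormal⟩ := hΩ
  intro x hx
  obtain ⟨R, hR, y, -, hxy, hball⟩ := hsp x hx
  obtain ⟨hgrad, hnv⟩ := hnormal x hx
  rw [← hxy, ← dist_eq_norm] at hball hR
  have hρx : ρ x = 0 := hzero.subset hx
  have hinner : 0 < ⟪x - y, gradient ρ x⟫ :=
    inner_sub_center_pos_of_le_on_ball (hρ.differentiable one_ne_zero x).hasGradientAt hgrad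
      (dist_pos.1 hR) fun z hz => hρx ▸ (hneg.subset (hball hz)).le
  refine ⟨y, ?_, hball⟩
  rw [hnv, inner_smul_right]
  exact mul_pos (inv_pos.2 (norm_pos_iff.2 hgrad)) hinner

section StrongMinimumPrinciple

variable {N : ℕ} {Ω : Set (EN N)} {α a A : ℝ} {F : EN N → EN N → Mat N → ℝ} {b : EN N → EN N}
  {c : EN N → ℝ} {B : EN N → ℝ → EN N → ℝ} {v : EN N → ℝ} {x₀ y : EN N}

lemma exists_strict_isTestFunBelow_of_closedBall_subset (hα : -1 < α)
    (hF : DominatesPucci Ω α a A F)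
    (hb : ∃ M, ∀ x ∈ Ω, ‖b x‖ ≤ M) (hc : ∃ M, ∀ x ∈ Ω, M ≤ c x)
    (hv : LowerSemicontinuousOn v (closure Ω)) (hv0 : ∀ x ∈ closure Ω, 0 ≤ v x)
    (hsup : IsSuperSol Ω F b α (fun x r => c x * |r| ^ α * r) (fun _ => 0) B v)
    (hx₀ : x₀ ∈ closure Ω) (hvx₀ : v x₀ = 0) (hne : x₀ ≠ y)
    (hball : closedBall y (dist x₀ y) ⊆ insert x₀ (Ω ∩ {x | 0 < v x})) :
    ∃ φ, IsTestFunBelow (closure Ω) v φ x₀ ∧ (∃ t > (0 : ℝ), gradient φ x₀ = -t • (x₀ - y)) ∧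
      0 < F x₀ (gradient φ x₀) (hess φ x₀) + ⟪b x₀, gradient φ x₀⟫ * ‖gradient φ x₀‖ ^ α := by
  obtain ⟨Mb, hMb⟩ := hb
  obtain ⟨Mc, hMc⟩ := hc
  have hr : 0 < ‖x₀ - y‖ := norm_pos_iff.2 (sub_ne_zero.2 hne)
  have hinside : ∀ z, ‖z - y‖ ≤ ‖x₀ - y‖ → z ≠ x₀ → z ∈ Ω ∩ {x | 0 < v x} := fun z hz hzx =>
    (hball (by rwa [mem_closedBall, dist_eq_norm, dist_eq_norm])).resolve_left hzx
  have hcore : closedBall y (‖x₀ - y‖ / 2) ⊆ Ω ∩ {x | 0 < v x} := fun z hz => by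
    rw [mem_closedBall, dist_eq_norm] at hz
    exact hinside z (by linarith) (by rintro rfl; linarith)
  obtain ⟨m, hm, hmv⟩ := exists_pos_forall_le_of_isCompact (isCompact_closedBall y _)
    (hv.mono fun x hx => subset_closure (hcore hx).1) fun x hx => (hcore hx).2
  -- `‖b x₀‖` enters the bound because `x₀` may lie on the boundary of `Ω`
  obtain ⟨k, hstrict, hk⟩ := ((hF.eventually_hopfBarrier_strict (half_pos hr)
    (max Mb ‖b x₀‖) |Mc|).and (eventually_gt_atTop 0)).exists
  obtain ⟨z, hz, hfar, hnear, hle, hmin⟩ := exists_isLocalMinOn_sub_hopfBarrier isClosed_closure hv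
    hv0 hx₀ hvx₀ hk hm fun x _ hx => hmv x (by rwa [mem_closedBall, dist_eq_norm])
  have htest : IsTestFunBelow (closure Ω) v (hopfBarrier y k m) z :=
    ⟨contDiff_hopfBarrier y k m, hmin,
      gradient_hopfBarrier_ne_zero hk.ne' hm.ne'
        (norm_sub_pos_iff.1 ((half_pos hr).trans hfar))⟩
  obtain rfl : z = x₀ := by
    by_contra hzx
    have hzΩ := (hinside z hnear hzx).1
    obtain ⟨hsteep, hpos⟩ := hstrict m hm y z hz hfar.le (b z) ((hMb z hzΩ).trans (le_max_left _ _))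
    have hzero := neg_mul_rpow_le_mul_abs_rpow_mul hα (abs_nonneg Mc)
      ((neg_abs_le Mc).trans (hMc z hzΩ)) (hv0 z hz) (hle.trans hsteep)
    linarith [hsup.1 z hzΩ _ htest.contDiff htest.isLocalMinOn htest.gradient_ne_zero]
  refine ⟨_, htest, ⟨2 * k * hopfBarrier y k m z, ?_, congrFun (gradient_hopfBarrier y k m) z⟩, ?_⟩
  · exact mul_pos (by positivity) (hopfBarrier_pos hm z)
  · refine lt_of_le_of_lt ?_ (hstrict m hm y z hz hfar.le (b z) (le_max_right _ _)).2
    positivity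

lemma exists_strict_isTestFunBelow_of_ball_subset (hα : -1 < α) (hF : DominatesPucci Ω α a A F)
    (hb : ∃ M, ∀ x ∈ Ω, ‖b x‖ ≤ M) (hc : ∃ M, ∀ x ∈ Ω, M ≤ c x)
    (hv : LowerSemicontinuousOn v (closure Ω)) (hv0 : ∀ x ∈ closure Ω, 0 ≤ v x)
    (hsup : IsSuperSol Ω F b α (fun x r => c x * |r| ^ α * r) (fun _ => 0) B v)
    (hx₀ : x₀ ∈ closure Ω) (hvx₀ : v x₀ = 0) (hne : x₀ ≠ y)
    (hball : ball y (dist x₀ y) ⊆ Ω ∩ {x | 0 < v x}) :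
    ∃ φ, IsTestFunBelow (closure Ω) v φ x₀ ∧ (∃ t > (0 : ℝ), gradient φ x₀ = -t • (x₀ - y)) ∧
      0 < F x₀ (gradient φ x₀) (hess φ x₀) + ⟪b x₀, gradient φ x₀⟫ * ‖gradient φ x₀‖ ^ α := by
  obtain ⟨φ, hφ, ⟨t, ht, hgrad⟩, hstrict⟩ := exists_strict_isTestFunBelow_of_closedBall_subset hα hF
    hb hc hv hv0 hsup hx₀ hvx₀ (y := midpoint ℝ x₀ y) (by simpa using hne)
    ((closedBall_midpoint_subset_insert_ball x₀ y).trans (insert_subset_insert hball))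
  refine ⟨φ, hφ, ⟨t / 2, half_pos ht, ?_⟩, hstrict⟩
  rw [hgrad, midpoint_eq_smul_add, invOf_eq_inv]
  module

lemma eqOn_zero_or_pos_of_isSuperSol (hΩ : IsOpen Ω) (hconn : IsPreconnected Ω) (hα : -1 < α)
    (hF : DominatesPucci Ω α a A F)
    (hb : ∃ M, ∀ x ∈ Ω, ‖b x‖ ≤ M) (hc : ∃ M, ∀ x ∈ Ω, M ≤ c x)
    (hv : LowerSemicontinuousOn v (closure Ω)) (hv0 : ∀ x ∈ closure Ω, 0 ≤ v x)
    (hsup : IsSuperSol Ω F b α (fun x r => c x * |r| ^ α * r) (fun _ => 0) B v) :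
    (∀ x ∈ Ω, v x = 0) ∨ (∀ x ∈ Ω, 0 < v x) := by
  obtain ⟨U, hU, hpos⟩ := lowerSemicontinuousOn_iff_preimage_Ioi.1 (hv.mono subset_closure) 0
  have hposU : ∀ x ∈ Ω, 0 < v x ↔ x ∈ U := fun x hx => by
    simpa [hx] using Set.ext_iff.1 hpos x
  have htangent : ∀ x ∈ Ω, ∀ y, x ≠ y → ball y (dist x y) ⊆ Ω ∩ U → x ∈ U := by
    intro x hx y hxy hball
    rw [← hposU x hx]
    by_contra! hvx
    have hvx0 : v x = 0 := hvx.antisymm (hv0 x (subset_closure hx))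
    obtain ⟨φ, hφ, -, hstrict⟩ := exists_strict_isTestFunBelow_of_ball_subset hα hF hb hc hv hv0
      hsup (subset_closure hx) hvx0 hxy
      fun z hz => ⟨(hball hz).1, (hposU z (hball hz).1).2 (hball hz).2⟩
    have := hsup.1 x hx φ hφ.contDiff hφ.isLocalMinOn hφ.gradient_ne_zero
    simp only [hvx0, mul_zero, add_zero] at this
    exact hstrict.not_ge this
  rcases subset_or_disjoint_of_forall_ball_subset hΩ hconn hU htangent with hsub | hdisj
  · exact .inr fun x hx => (hposU x hx).2 (hsub hx)
  · refine .inl fun x hx => le_antisymm (not_lt.1 fun h => ?_) (hv0 x (subset_closure hx))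
    exact disjoint_left.1 hdisj hx ((hposU x hx).1 h)

lemma pos_on_frontier_of_isSuperSol {ν : EN N → EN N} {f : EN N → ℝ → ℝ}
    (hsphere : ObliqueInteriorSphereCond Ω ν) (hα : -1 < α) (hF : DominatesPucci Ω α a A F)
    (hb : ∃ M, ∀ x ∈ Ω, ‖b x‖ ≤ M) (hc : ∃ M, ∀ x ∈ Ω, M ≤ c x)
    (hf : ∀ x ∈ frontier Ω, f x 0 ≤ 0)
    (hv : LowerSemicontinuousOn v (closure Ω)) (hv0 : ∀ x ∈ closure Ω, 0 ≤ v x)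
    (hsup : IsSuperSol Ω F b α (fun x r => c x * |r| ^ α * r) (fun _ => 0)
      (fun x r p => f x r + ⟪p, ν x⟫) v) (hpos : ∀ x ∈ Ω, 0 < v x) :
    ∀ x ∈ frontier Ω, 0 < v x := by
  intro x hx
  have hxcl := frontier_subset_closure hx
  by_contra! hvx
  have hvx0 : v x = 0 := hvx.antisymm (hv0 x hxcl)
  obtain ⟨y, hangle, hball⟩ := hsphere x hx
  have hxy : x ≠ y := by
    rintro rfl
    simp at hangle
  obtain ⟨φ, hφ, ⟨t, ht, hgrad⟩, hstrict⟩ := exists_strict_isTestFunBelow_of_ball_subset hα hF hb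
    hc hv hv0 hsup hxcl hvx0 hxy fun z hz => ⟨hball hz, hpos z (hball hz)⟩
  have hnormal : ⟪gradient φ x, ν x⟫ < 0 := by
    rw [hgrad, real_inner_smul_left]
    exact mul_neg_of_neg_of_pos (neg_lt_zero.2 ht) hangle
  refine (hsup.2.2.1 x hx φ hφ.contDiff hφ.isLocalMinOn hφ.gradient_ne_zero).not_gt (max_lt ?_ ?_)
  · simpa only [hvx0, mul_zero, add_zero, zero_sub, neg_lt_zero] using hstrict
  · rw [hvx0]
    linarith [hf x hx]

end StrongMinimumPrinciple

theorem stmt4_general {N : ℕ} {Ω : Set (EN N)} {ν : EN N → EN N}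
    (hΩ : IsOpen Ω) (hconn : IsPreconnected Ω) (hsphere : ObliqueInteriorSphereCond Ω ν)
    {α a A : ℝ} (hα : -1 < α) {F : EN N → EN N → Mat N → ℝ} (hF : DominatesPucci Ω α a A F)
    {b : EN N → EN N} {c : EN N → ℝ}
    (hb : ∃ M, ∀ x ∈ Ω, ‖b x‖ ≤ M) (hc : ∃ M, ∀ x ∈ Ω, M ≤ c x)
    {f : EN N → ℝ → ℝ} (hf : ∀ x ∈ frontier Ω, f x 0 ≤ 0)
    {v : EN N → ℝ} (hv : LowerSemicontinuousOn v (closure Ω)) (hv0 : ∀ x ∈ closure Ω, 0 ≤ v x)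
    (hsup : IsSuperSol Ω F b α (fun x r => c x * |r| ^ α * r) (fun _ => 0)
      (fun x r p => f x r + ⟪p, ν x⟫) v) :
    (∀ x ∈ closure Ω, v x = 0) ∨ (∀ x ∈ closure Ω, 0 < v x) := by
  rcases eqOn_zero_or_pos_of_isSuperSol hΩ hconn hα hF hb hc hv hv0 hsup with hzero | hpos
  · have hle := forall_closure_le_of_lowerSemicontinuousOn hv fun x hx => (hzero x hx).le
    exact .inl fun x hx => (hle x hx).antisymm (hv0 x hx)
  · have hfrontier := pos_on_frontier_of_isSuperSol hsphere hα hF hb hc hf hv hv0 hsup hpos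
    refine .inr fun x hx => ?_
    rw [closure_eq_self_union_frontier] at hx
    exact hx.elim (hpos x) (hfrontier x)

/-- Proposition `p1`: strong minimum principle. A non-negative supersolution
of the boundary value problem with `f(x,0) ≤ 0` is either identically zero or positive on `Ω̄`. -/
theorem stmt4 {N : ℕ} (Ω : Set (EN N)) (nv : EN N → EN N)
    (hΩ : IsC1Domain Ω nv) (hsp : InteriorSphereCond Ω)
    (α a A C₁ θ : ℝ) (hα : -1 < α)
    (F : EN N → EN N → Mat N → ℝ)
    (hF1 : CondF1 Ω α F) (hF2 : CondF2 Ω α a A F) (hF3 : CondF3 Ω α C₁ θ F)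
    (b : EN N → EN N) (c : EN N → ℝ)
    (hbc : ContinuousOn b Ω) (hb : ∃ M, ∀ x ∈ Ω, ‖b x‖ ≤ M)
    (hcc : ContinuousOn c Ω) (hcb : ∃ M, ∀ x ∈ Ω, |c x| ≤ M)
    (f : EN N → ℝ → ℝ) (hf : ∀ x ∈ frontier Ω, f x 0 ≤ 0)
    (v : EN N → ℝ) (hlsc : LowerSemicontinuousOn v (closure Ω))
    (hv0 : ∀ x ∈ closure Ω, 0 ≤ v x)
    (hsup : IsSuperSol Ω F b α (fun x r => c x * |r| ^ α * r) (fun _ => 0)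
      (fun x r p => f x r + ⟪p, nv x⟫) v) :
    (∀ x ∈ closure Ω, v x = 0) ∨ (∀ x ∈ closure Ω, 0 < v x) := by
  exact stmt4_general hΩ.1 hΩ.2.1.isPreconnected (hΩ.obliqueInteriorSphereCond hsp) hα
    (hF2.dominatesPucci hF1) hb (hcb.imp' Neg.neg fun _ h x hx => (abs_le.1 (h x hx)).1) hf hlsc hv0
    hsup
end
end
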